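/- arXiv:1203.6498 — 2 statements merged into one kernel-verified Lean document; each statement's English description precedes it below -/
import Mathlib

section
/- Let (K, v_K) be a field with a multiplicative valuation v_K : K → ℝ≥0 whose valuation ring {x ∈ K : v_K(x) ≤ 1} is henselian, and let L be an algebraically closed field extension of K equipped with a valuation v : L → ℝ≥0 extending v_K and such that v(L^×) = ℝ>0. Let R = K[Y₁,…,Y_m]/I with I a prime ideal, and let f₁,…,fₙ be units of R. Then the set {(v(φ(f₁)),…,v(φ(fₙ))) : φ ∈ Hom_{K-alg}(R, L)} is a connected subset of (ℝ>0)ⁿ (with the topology induced from ℝⁿ). -/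
/-!
By Noether normalization, `R` is finite over a polynomial ring `A = K[t₁, …, t_d]`.  Let `N` be the
normal closure of `Frac R` over `E = Frac A`, let `S` be the integral closure of `A` in `N` and
`G = Aut(N/E)`.  Every point of `R` with values in `L` extends to `S` (`exists_extend`), so it
suffices to treat `S`, a normal covering of affine space with group `G` (`Galois`,
`exists_galois`).  Suppose that the tropicalizations of the points of `S` fall into two disjoint
open sets `U` and `V`.

*Analysis on lines.*  Restrict the covering to a line parallel to a coordinate axis
(`Galois.line`).  When a point of the line moves in such a way that its distances to a suitable
finite set `Z` remain almost constant, the values of a function on the fibre vary continuously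
(`Cover.newton`: continuity of the slopes of Newton polygons).  A monomial in the `fᵢ` separates the
finitely many tropical points of a fibre (`exists_exponents`), so the indicator function of the set
of points tropicalizing into `U` is locally a combination of cutoffs `1 / (1 + φ ^ M)`, up to an
arbitrarily small error (`Cover.app_cut`, `Cover.exists_app_indicator`).  Therefore the partial
trace of `h : S`, the sum of the values of `h` over those points of a fibre that tropicalize into
`U`, is locally a uniform limit of rational functions.  Such limits glue to arbitrarily large discs
(`RA.disc`, an elementary Mittag-Leffler decomposition), and by Liouville's theorem (`liouville`)
the partial traces, being of polynomial growth, are polynomials on the line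
(`Cover.exists_polynomial`).

*Descent.*  A function that is a polynomial along each line parallel to an axis is a polynomial
(`multi_poly`).  As `K` is henselian, conjugation over `K` preserves the valuation
(`conj_valuation`), hence `U` and `V`; so up to powers of the characteristic exponent the
coefficients lie in `K`, and partial traces come from invariant elements of `S`
(`Galois.exists_of_lines`, `Galois.exists_trace`).  In the same way the indicator function of the
fibres lying entirely over `U` is an element of `S` (`Galois.exists_indicator`).

*Algebra.*  For each point, consider the set `T ⊆ G` of those `g` whose translate tropicalizes into
`U`.  It is constant on a Zariski dense set of points, as `S` is a domain.  The sum of the `g ∈ T` is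
then an operator on `S` with invariant values, and Dedekind's linear independence of automorphisms
shows that `T` is stable under translation: it is empty or all of `G`.  So the fibres lying over
`U`, or those lying over `V`, are dense, and the corresponding indicator function, being an element
of `S`, is `1` (`Galois.all_or_none`).
-/

open Polynomial Filter Topology
open scoped NNReal

namespace TropConn

/-! ### Gluing rational approximations over a disc -/

section OneVar
variable {L : Type*} [Field L] (v : Valuation L ℝ≥0)

/-- The residue field of `L` is infinite, so some residue class avoids those of the elements of `W`. -/
lemma exists_generic_unit [IsAlgClosed L] (W : Finset L) (hW : ∀ w ∈ W, v w ≤ 1) :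
    ∃ y, ∀ w ∈ W, v (y - w) = 1 := by
  classical
  set W' := insert 0 W with hW'
  have hW1 : ∀ w ∈ W', v w ≤ 1 := by
    intro w hw
    rcases Finset.mem_insert.1 hw with rfl | h
    · simp
    · exact hW w h
  set p : L[X] := ∏ w ∈ W', (X - C w) with hp
  have hpm : p.Monic := monic_prod_of_monic _ _ fun w _ => monic_X_sub_C w
  have hdeg : p.natDegree = W'.card := by
    rw [hp, natDegree_prod_of_monic _ _ fun w _ => monic_X_sub_C w]; simp
  have hdeg1 : 0 < p.natDegree := by
    rw [hdeg]; exact Finset.card_pos.2 ⟨0, by simp [hW']⟩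
  have hd : (p + 1).degree = p.degree := by
    apply degree_add_eq_left_of_degree_lt
    rw [degree_one]
    exact natDegree_pos_iff_degree_pos.1 hdeg1
  obtain ⟨y, hy⟩ := IsAlgClosed.exists_root (p + 1) (by
    rw [hd]; exact (natDegree_pos_iff_degree_pos.1 hdeg1).ne')
  have hy' : ∏ w ∈ W', (y - w) = -1 := by
    have : eval y (p + 1) = 0 := hy
    rw [eval_add, hp, eval_prod] at this
    simp only [eval_sub, eval_X, eval_C, eval_one] at this
    linear_combination this
  have hv : ∏ w ∈ W', v (y - w) = 1 := by
    rw [← map_prod, hy', Valuation.map_neg, map_one]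
  have hy1 : v y ≤ 1 := by
    by_contra! hlt
    have : (1 : ℝ≥0) < ∏ w ∈ W', v (y - w) := by
      have h1 : ∀ w ∈ W', v (y - w) = v y := fun w hw =>
        Valuation.map_sub_eq_of_lt_left _ ((hW1 w hw).trans_lt hlt)
      rw [Finset.prod_congr rfl h1, Finset.prod_const]
      exact one_lt_pow₀ hlt (Finset.card_pos.2 ⟨0, by simp [hW']⟩).ne'
    exact absurd hv this.ne'
  have hle : ∀ w ∈ W', v (y - w) ≤ 1 := fun w hw => Valuation.map_sub_le _ hy1 (hW1 w hw)
  refine ⟨y, fun w hw => ?_⟩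
  exact (Finset.prod_eq_one_iff_of_le_one' hle).1 hv w (Finset.mem_insert_of_mem hw)

/-- A generic point of the circle of radius `r` around `a`: none of the points of `Z` is closer than
`r`. -/
lemma exists_generic [IsAlgClosed L] (hsurj : ∀ r : ℝ≥0, r ≠ 0 → ∃ y : L, v y = r)
    (Z : Finset L) (a : L) (r : ℝ≥0) :
    ∃ t, v (t - a) = r ∧ ∀ z ∈ Z, r ≤ v (t - z) := by
  classical
  by_cases hr : r = 0
  · exact ⟨a, by simp [hr], by simp [hr]⟩
  obtain ⟨c, hc⟩ := hsurj r hr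
  have hc0 : c ≠ 0 := by rintro rfl; exact hr (by rw [← hc, map_zero])
  obtain ⟨y, hy⟩ := exists_generic_unit v
    (insert 0 ((Z.filter fun z => v (z - a) ≤ r).image fun z => (z - a) / c)) (by
      intro w hw
      rcases Finset.mem_insert.1 hw with rfl | h
      · simp
      · obtain ⟨z, hz, rfl⟩ := Finset.mem_image.1 h
        rw [map_div₀, hc]
        exact div_le_one_of_le₀ (Finset.mem_filter.1 hz).2 zero_le)
  have h0 : v y = 1 := by simpa using hy 0 (by simp)
  have hta : v (a + c * y - a) = r := by
    rw [add_sub_cancel_left, map_mul, h0, hc, mul_one]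
  refine ⟨a + c * y, hta, fun z hz => ?_⟩
  by_cases hza : v (z - a) ≤ r
  · have := hy ((z - a) / c) (by
      apply Finset.mem_insert_of_mem
      exact Finset.mem_image.2 ⟨z, Finset.mem_filter.2 ⟨hz, hza⟩, rfl⟩)
    have e : a + c * y - z = c * (y - (z - a) / c) := by field_simp; ring
    rw [e, map_mul, this, hc, mul_one]
  · push Not at hza
    have e : a + c * y - z = (a + c * y - a) - (z - a) := by ring
    rw [e, Valuation.map_sub_eq_of_lt_right _ (by rwa [hta])]
    exact hza.le

/-- All coefficients of `P` have value at most `c`: the Gauss norm of `P` is at most `c`. -/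
def Bd (P : L[X]) (c : ℝ≥0) : Prop := ∀ i, v (P.coeff i) ≤ c

variable {v}

lemma Bd.mono {P : L[X]} {c d : ℝ≥0} (h : Bd v P c) (hcd : c ≤ d) : Bd v P d :=
  fun i => (h i).trans hcd

lemma Bd.mul {P Q : L[X]} {c d : ℝ≥0} (h : Bd v P c) (h' : Bd v Q d) : Bd v (P * Q) (c * d) := by
  intro i
  rw [coeff_mul]
  refine Valuation.map_sum_le _ fun x _ => ?_
  rw [map_mul]
  exact mul_le_mul' (h _) (h' _)

lemma Bd.add {P Q : L[X]} {c : ℝ≥0} (h : Bd v P c) (h' : Bd v Q c) : Bd v (P + Q) c := by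
  intro i
  rw [coeff_add]
  exact Valuation.map_add_le _ (h i) (h' i)

lemma Bd.sub {P Q : L[X]} {c : ℝ≥0} (h : Bd v P c) (h' : Bd v Q c) : Bd v (P - Q) c := by
  intro i
  rw [coeff_sub]
  exact Valuation.map_sub_le _ (h i) (h' i)

lemma bd_C (a : L) : Bd v (C a) (v a) := by
  intro i
  rw [coeff_C]
  split_ifs <;> simp

lemma bd_X_pow (n : ℕ) : Bd v (X ^ n : L[X]) 1 := by
  intro i
  rw [coeff_X_pow]
  split_ifs <;> simp

lemma bd_X : Bd v (X : L[X]) 1 := by simpa using bd_X_pow (v := v) 1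

lemma Bd.eval_le {P : L[X]} {c : ℝ≥0} (h : Bd v P c) {t : L} (ht : v t ≤ 1) :
    v (P.eval t) ≤ c := by
  rw [eval_eq_sum_range]
  refine Valuation.map_sum_le _ fun i _ => ?_
  rw [map_mul, map_pow]
  exact (mul_le_mul' (h i) (pow_le_one' ht i)).trans (by simp)

lemma bd_X_sub_C {a : L} {c : ℝ≥0} (h1 : 1 ≤ c) (h : v a ≤ c) : Bd v (X - C a) c :=
  (bd_X.mono h1).sub ((bd_C a).mono h)

/-- A product of linear factors attains its Gauss norm at each `t` with `v t = 1` whose residue class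
is different from those of the roots in the closed unit disc. -/
lemma bd_prod_X_sub_C (s : Multiset L) {t : L} (ht : v t = 1)
    (hs : ∀ ζ ∈ s, v ζ ≤ 1 → v (t - ζ) = 1) :
    Bd v (s.map fun ζ => X - C ζ).prod (v ((s.map fun ζ => X - C ζ).prod.eval t)) := by
  induction s using Multiset.induction_on with
  | empty => simpa using bd_C (v := v) (1 : L)
  | cons a s ih =>
    rw [Multiset.map_cons, Multiset.prod_cons, eval_mul, map_mul]
    refine Bd.mul ?_ (ih fun ζ hζ => hs ζ (Multiset.mem_cons_of_mem hζ))
    simp only [eval_sub, eval_X, eval_C]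
    rcases le_or_gt (v a) 1 with h | h
    · rw [hs a (Multiset.mem_cons_self _ _) h]
      exact bd_X_sub_C le_rfl h
    · rw [Valuation.map_sub_eq_of_lt_right _ (by rwa [ht])]
      exact bd_X_sub_C h.le le_rfl

/-- The Gauss norm of a polynomial is bounded by its supremum on the circle `v t = 1`. -/
lemma bd_of_circle [IsAlgClosed L] (N : L[X]) {c : ℝ≥0}
    (h : ∀ t, v t = 1 → v (N.eval t) ≤ c) : Bd v N c := by
  classical
  obtain ⟨t, ht⟩ := exists_generic_unit v (insert 0 (N.roots.toFinset.filter fun ζ => v ζ ≤ 1)) (by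
    intro w hw
    rcases Finset.mem_insert.1 hw with rfl | h
    · simp
    · exact (Finset.mem_filter.1 h).2)
  have ht1 : v t = 1 := by simpa using ht 0 (by simp)
  have hb : Bd v N (v (N.eval t)) := by
    have e := (IsAlgClosed.splits N).eq_prod_roots
    have h1 := (bd_C (v := v) N.leadingCoeff).mul (bd_prod_X_sub_C N.roots ht1 (by
      intro ζ hζ h1
      apply ht
      exact Finset.mem_insert_of_mem (Finset.mem_filter.2 ⟨Multiset.mem_toFinset.2 hζ, h1⟩)))
    rw [← map_mul, ← e] at h1
    refine h1.mono (le_of_eq ?_)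
    conv_rhs => rw [e]
    rw [eval_mul, eval_C]
  exact hb.mono (h t ht1)

lemma bd_prod_of_le (s : Multiset L) (hs : ∀ ζ ∈ s, v ζ ≤ 1) :
    Bd v (s.map fun ζ => X - C ζ).prod 1 := by
  induction s using Multiset.induction_on with
  | empty => simpa using bd_C (v := v) (1 : L)
  | cons a s ih =>
    rw [Multiset.map_cons, Multiset.prod_cons]
    have := (bd_X_sub_C (v := v) le_rfl (hs a (Multiset.mem_cons_self _ _))).mul
      (ih fun ζ hζ => hs ζ (Multiset.mem_cons_of_mem hζ))
    simpa using this

/-- Reduction modulo a monic polynomial with integral coefficients does not increase the Gauss norm. -/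
lemma Bd.modByMonic {Q : L[X]} (hQ : Q.Monic) (hQ1 : Bd v Q 1) {c : ℝ≥0} :
    ∀ (n : ℕ) (P : L[X]), P.natDegree < n → Bd v P c → Bd v (P %ₘ Q) c := by
  intro n
  induction n with
  | zero => intro P hP; omega
  | succ n ih =>
    intro P hPn hP
    by_cases hd : Q.degree ≤ P.degree ∧ P ≠ 0
    · have hlt := div_wf_lemma hd hQ
      set T := C P.leadingCoeff * X ^ (P.natDegree - Q.natDegree) with hT
      have hmod : P %ₘ Q = (P - Q * T) %ₘ Q := by
        rw [sub_modByMonic, mul_comm Q T, mul_self_modByMonic hQ, sub_zero]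
      have hb : Bd v (P - Q * T) c := by
        refine hP.sub ?_
        have := hQ1.mul ((bd_C P.leadingCoeff).mul (bd_X_pow (v := v)
          (P.natDegree - Q.natDegree)))
        refine this.mono ?_
        rw [one_mul, mul_one]
        exact hP _
      rw [hmod]
      by_cases h0 : P - Q * T = 0
      · rw [h0, zero_modByMonic]; intro i; simp
      · apply ih _ _ hb
        have := natDegree_lt_natDegree h0 hlt
        omega
    · rw [not_and_or, not_le, not_not] at hd
      rcases hd with hd | rfl
      · rwa [(modByMonic_eq_self_iff hQ).2 hd]
      · rw [zero_modByMonic]; exact hP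

/-- A product of linear factors with roots outside the closed unit disc is a constant times a
polynomial whose reduction is `1`. -/
lemma exists_one_add (s : Multiset L) (hs : ∀ ζ ∈ s, 1 < v ζ) :
    ∃ θ : ℝ≥0, θ < 1 ∧ ∃ (q : L) (w : L[X]), Bd v w θ ∧
      (s.map fun ζ => X - C ζ).prod = C q * (1 + w) := by
  induction s using Multiset.induction_on with
  | empty => exact ⟨0, one_pos, 1, 0, fun i => by simp, by simp⟩
  | cons a s ih =>
    obtain ⟨θ, hθ, q, w, hw, e⟩ := ih fun ζ hζ => hs ζ (Multiset.mem_cons_of_mem hζ)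
    have ha := hs a (Multiset.mem_cons_self _ _)
    have ha0 : a ≠ 0 := by rintro rfl; simp at ha
    have hinv : v (a⁻¹) < 1 := by
      rw [map_inv₀]; exact inv_lt_one_of_one_lt₀ ha
    have hB : Bd v (- (C a⁻¹ * X)) (v a⁻¹) := by
      intro i
      rw [coeff_neg, Valuation.map_neg]
      simpa using ((bd_C (v := v) a⁻¹).mul bd_X) i
    refine ⟨max θ (v a⁻¹), max_lt hθ hinv, -a * q, w + (- (C a⁻¹ * X)) + (- (C a⁻¹ * X)) * w,
      ?_, ?_⟩
    · refine ((hw.mono (le_max_left _ _)).add (hB.mono (le_max_right _ _))).add ?_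
      refine (hB.mul hw).mono ((mul_le_of_le_one_right' hθ.le).trans (le_max_right _ _))
    · rw [Multiset.map_cons, Multiset.prod_cons, e]
      have : (C a * C a⁻¹ : L[X]) = 1 := by rw [← C_mul, mul_inv_cancel₀ ha0, C_1]
      simp only [C_mul, C_neg]
      linear_combination (-C q * X * (1 + w)) * this

lemma eval_prod_of_lt (s : Multiset L) (hs : ∀ ζ ∈ s, v ζ < 1) {t : L} (ht : 1 ≤ v t) :
    v ((s.map fun ζ => X - C ζ).prod.eval t) = v t ^ Multiset.card s := by
  induction s using Multiset.induction_on with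
  | empty => simp
  | cons a s ih =>
    have ha := hs a (Multiset.mem_cons_self _ _)
    rw [Multiset.map_cons, Multiset.prod_cons, eval_mul, map_mul,
      ih fun ζ hζ => hs ζ (Multiset.mem_cons_of_mem hζ), Multiset.card_cons, pow_succ']
    simp only [eval_sub, eval_X, eval_C]
    rw [Valuation.map_sub_eq_of_lt_left _ (ha.trans_le ht)]

/-- `u` can be approximated uniformly on `W` by rational functions without poles on `W`. -/
def RA (v : Valuation L ℝ≥0) (u : L → L) (W : Set L) : Prop :=
  ∀ δ : ℝ≥0, 0 < δ → ∃ P Q : L[X], ∀ t ∈ W, Q.eval t ≠ 0 ∧ v (u t - P.eval t / Q.eval t) ≤ δ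

lemma RA.mono {u : L → L} {W W' : Set L} (h : RA v u W) (hs : W' ⊆ W) : RA v u W' := by
  intro δ hδ
  obtain ⟨P, Q, hPQ⟩ := h δ hδ
  exact ⟨P, Q, fun t ht => hPQ t (hs ht)⟩

/-- Gluing of rational approximations: a function that is rationally approximable on the closed unit
disc, and on a set `W` outside of the open unit disc which contains the circle `v t = 1`, is
rationally approximable on the union.  In the partial fraction decomposition of an approximation
on `W`, the part `P2 / Q2` with poles in the open unit disc is small outside of this disc, because
the other approximation has no such part.  Dropping it yields an approximation `P1 / Q1` on the
union. -/
lemma RA.fill_unit [IsAlgClosed L] {u : L → L} {W : Set L} (hW1 : ∀ t ∈ W, 1 ≤ v t)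
    (hWc : ∀ t, v t = 1 → t ∈ W) (hu : RA v u W) (hd : RA v u {t | v t ≤ 1}) :
    RA v u (W ∪ {t | v t ≤ 1}) := by
  classical
  intro δ hδ
  obtain ⟨P, Q, hPQ⟩ := hu δ hδ
  obtain ⟨P4, Q4, hPQ4⟩ := hd δ hδ
  have hQroot : ∀ ζ ∈ Q.roots, v ζ ≠ 1 := fun ζ hζ h =>
    (hPQ ζ (hWc ζ h)).1 (isRoot_of_mem_roots hζ)
  have hQ4root : ∀ ζ ∈ Q4.roots, 1 < v ζ := fun ζ hζ => by
    by_contra! h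
    exact (hPQ4 ζ h).1 (isRoot_of_mem_roots hζ)
  set s2 := Q.roots.filter fun ζ => v ζ < 1 with hs2
  set s1 := Q.roots.filter fun ζ => ¬ v ζ < 1 with hs1
  set Q2 : L[X] := (s2.map fun ζ => X - C ζ).prod with hQ2
  set Q1' : L[X] := (s1.map fun ζ => X - C ζ).prod with hQ1'
  have hs1lt : ∀ ζ ∈ s1, 1 < v ζ := fun ζ hζ => by
    obtain ⟨h1, h2⟩ := Multiset.mem_filter.1 hζ
    exact lt_of_le_of_ne (not_lt.1 h2) (hQroot ζ h1).symm
  have hs2lt : ∀ ζ ∈ s2, v ζ < 1 := fun ζ hζ => (Multiset.mem_filter.1 hζ).2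
  set Q1 := C Q.leadingCoeff * Q1' with hQ1
  have hQ12 : Q = Q1 * Q2 := by
    conv_lhs => rw [(IsAlgClosed.splits Q).eq_prod_roots,
      ← Multiset.filter_add_not (fun ζ => v ζ < 1) Q.roots]
    rw [Multiset.map_add, Multiset.prod_add, hQ1, hQ1', hQ2]
    ring
  obtain ⟨t1, ht1⟩ : ∃ t : L, v t = 1 := ⟨1, map_one _⟩
  have hQ0 : Q ≠ 0 := by
    rintro rfl
    exact (hPQ t1 (hWc t1 ht1)).1 eval_zero
  have hQ40 : Q4 ≠ 0 := by
    rintro rfl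
    exact (hPQ4 t1 ht1.le).1 eval_zero
  have hQ2m : Q2.Monic := monic_multiset_prod_of_monic _ _ fun ζ _ => monic_X_sub_C ζ
  have hQ2deg : Q2.natDegree = Multiset.card s2 := by
    rw [hQ2, natDegree_multiset_prod_X_sub_C_eq_card]
  have hev : ∀ (s : Multiset L) (a : L), (s.map fun ζ => X - C ζ).prod.eval a = 0 ↔ a ∈ s := by
    intro s a
    rw [eval_multiset_prod, Multiset.prod_eq_zero_iff]
    simp [sub_eq_zero]
  have hcop : IsCoprime Q1 Q2 := by
    rw [isCoprime_iff_aeval_ne_zero_of_isAlgClosed L L]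
    intro a
    simp only [coe_aeval_eq_eval]
    by_contra! h
    have h2 := (hev s2 a).1 h.2
    have h1 : a ∈ s1 := by
      rw [← hev s1 a]
      have := h.1
      rw [hQ1, eval_mul, eval_C, mul_eq_zero] at this
      exact this.resolve_left (leadingCoeff_ne_zero.2 hQ0)
    exact absurd (hs2lt a h2) (hs1lt a h1).not_gt
  obtain ⟨α, β, hαβ⟩ := hcop
  set P2 := (P * α) %ₘ Q2 with hP2
  set P1 := P * β + Q1 * ((P * α) /ₘ Q2) with hP1
  have hP12 : P = P1 * Q2 + P2 * Q1 := by
    have := modByMonic_add_div (P * α) Q2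
    rw [hP1, hP2]
    linear_combination (-Q1) * this - P * hαβ
  -- `Q1 * Q4` is a constant `q0` times a polynomial reducing to `1`
  obtain ⟨θ, hθ, q, w, hw, hqw⟩ := exists_one_add (v := v) (s1 + Q4.roots) (by
    intro ζ hζ
    rcases Multiset.mem_add.1 hζ with h | h
    · exact hs1lt ζ h
    · exact hQ4root ζ h)
  set q0 := Q.leadingCoeff * Q4.leadingCoeff * q with hq0
  have hQ14 : Q1 * Q4 = C q0 * (1 + w) := by
    rw [hq0, C_mul, mul_assoc (C _) (C q), ← hqw, Multiset.map_add, Multiset.prod_add]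
    conv_lhs => rw [(IsAlgClosed.splits Q4).eq_prod_roots]
    rw [hQ1, C_mul]; ring
  have hQ14ne : Q1 * Q4 ≠ 0 := by
    refine mul_ne_zero ?_ hQ40
    rintro h
    rw [hQ12, h, zero_mul] at hQ0
    exact hQ0 rfl
  have hq00 : q0 ≠ 0 := by
    rintro h
    rw [hQ14, h, C_0, zero_mul] at hQ14ne
    exact hQ14ne rfl
  have hvq0 : 0 < v q0 := pos_iff_ne_zero.2 ((Valuation.ne_zero_iff _).2 hq00)
  have hdisc : ∀ t, v t ≤ 1 → v ((Q1 * Q4).eval t) = v q0 := by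
    intro t ht
    rw [hQ14, eval_mul, eval_C, map_mul, eval_add, eval_one, Valuation.map_one_add_of_lt, mul_one]
    exact (hw.eval_le ht).trans_lt hθ
  have hcirc : ∀ t, 1 ≤ v t → v (Q2.eval t) = v t ^ Multiset.card s2 := fun t ht =>
    eval_prod_of_lt s2 hs2lt ht
  set P3 := P1 * Q4 - P4 * Q1 with hP3
  have hN : P * Q4 - P4 * Q = P3 * Q2 + P2 * (Q1 * Q4) := by
    rw [hP3]; nth_rewrite 1 [hP12]; nth_rewrite 1 [hQ12]; ring
  have hNbd : Bd v (P * Q4 - P4 * Q) (δ * v q0) := by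
    refine bd_of_circle _ fun t ht => ?_
    obtain ⟨h1, h2⟩ := hPQ t (hWc t ht)
    obtain ⟨h3, h4⟩ := hPQ4 t ht.le
    have e : (P * Q4 - P4 * Q).eval t =
        ((u t - P4.eval t / Q4.eval t) - (u t - P.eval t / Q.eval t)) *
          ((Q1 * Q4).eval t * Q2.eval t) := by
      have : (Q1 * Q4).eval t * Q2.eval t = Q.eval t * Q4.eval t := by
        rw [hQ12]; simp only [eval_mul]; ring
      rw [this]
      simp only [eval_sub, eval_mul]
      field_simp
      ring
    rw [e, map_mul, map_mul, hdisc t ht.le, hcirc t ht.ge, ht, one_pow, mul_one]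
    exact mul_le_mul' (Valuation.map_sub_le _ h4 h2) le_rfl
  -- The polar part `P2` in the disc is small: modulo `Q2` it is `P * Q4 - P4 * Q` divided by
  -- `q0 * (1 + w)`, and `w` has Gauss norm less than `1`.
  obtain ⟨i0, hi0⟩ : ∃ i0, ∀ i, v (P2.coeff i) ≤ v (P2.coeff i0) := by
    by_cases hP20 : P2 = 0
    · exact ⟨0, fun i => by simp [hP20]⟩
    · obtain ⟨i0, -, h⟩ := Finset.exists_max_image P2.support (fun i => v (P2.coeff i))
        (nonempty_support_iff.2 hP20)
      refine ⟨i0, fun i => ?_⟩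
      by_cases hi : i ∈ P2.support
      · exact h i hi
      · rw [notMem_support_iff.1 hi]; simp
  have hP2M : Bd v P2 (v (P2.coeff i0)) := hi0
  have hQ2b : Bd v Q2 1 := bd_prod_of_le _ fun ζ hζ => (hs2lt ζ hζ).le
  have hP2deg : P2 %ₘ Q2 = P2 := by
    rw [modByMonic_eq_self_iff hQ2m]
    exact degree_modByMonic_lt _ hQ2m
  have hP2eq : P2 = C q0⁻¹ * ((P * Q4 - P4 * Q) %ₘ Q2) - (P2 * w) %ₘ Q2 := by
    have e1 : (P * Q4 - P4 * Q) %ₘ Q2 = C q0 * (P2 + (P2 * w) %ₘ Q2) := by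
      rw [hN, add_modByMonic, mul_self_modByMonic hQ2m, zero_add, hQ14]
      have : P2 * (C q0 * (1 + w)) = q0 • (P2 + P2 * w) := by rw [smul_eq_C_mul]; ring
      rw [this, smul_modByMonic, add_modByMonic, hP2deg, smul_eq_C_mul]
    have : (C q0⁻¹ * C q0 : L[X]) = 1 := by rw [← C_mul, inv_mul_cancel₀ hq00, C_1]
    rw [e1]
    linear_combination (-(P2 + (P2 * w) %ₘ Q2)) * this
  have hP2bd : Bd v P2 δ := by
    have h1 : Bd v (C q0⁻¹ * ((P * Q4 - P4 * Q) %ₘ Q2)) δ := by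
      refine ((bd_C _).mul (Bd.modByMonic hQ2m hQ2b _ _ (Nat.lt_succ_self _) hNbd)).mono ?_
      rw [map_inv₀, mul_comm δ, inv_mul_cancel_left₀ hvq0.ne']
    have h2 : Bd v ((P2 * w) %ₘ Q2) (v (P2.coeff i0) * θ) :=
      Bd.modByMonic hQ2m hQ2b _ _ (Nat.lt_succ_self _) (hP2M.mul hw)
    have h3 : v (P2.coeff i0) ≤ max δ (v (P2.coeff i0) * θ) := by
      have := ((h1.mono (le_max_left δ (v (P2.coeff i0) * θ))).sub (h2.mono (le_max_right _ _)))
      rw [← hP2eq] at this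
      exact this i0
    refine hP2M.mono ?_
    rcases le_max_iff.1 h3 with h | h
    · exact h
    · by_contra! hlt
      have hpos : 0 < v (P2.coeff i0) := hδ.trans hlt
      have : v (P2.coeff i0) * θ < v (P2.coeff i0) * 1 := mul_lt_mul_of_pos_left hθ hpos
      rw [mul_one] at this
      exact absurd h this.not_ge
  have hpolar : ∀ t, 1 ≤ v t → v (P2.eval t / Q2.eval t) ≤ δ := by
    intro t ht
    have hpos : 0 < v t ^ Multiset.card s2 := pow_pos (one_pos.trans_le ht) _
    rw [map_div₀, hcirc t ht, div_le_iff₀ hpos, eval_eq_sum_range' (n := Multiset.card s2 + 1)]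
    · refine Valuation.map_sum_le _ fun i hi => ?_
      rw [map_mul, map_pow]
      exact mul_le_mul' (hP2bd i) (pow_le_pow_right₀ ht (Nat.lt_succ_iff.1 (Finset.mem_range.1 hi)))
    · rw [← hQ2deg]
      exact Nat.lt_succ_of_le (natDegree_modByMonic_le (P * α) hQ2m)
  have hQ1ne : ∀ t ∈ W, Q1.eval t ≠ 0 ∧ Q2.eval t ≠ 0 := by
    intro t ht
    have := (hPQ t ht).1
    rw [hQ12, eval_mul] at this
    exact mul_ne_zero_iff.1 this
  have hsplit : ∀ t ∈ W, P.eval t / Q.eval t = P1.eval t / Q1.eval t + P2.eval t / Q2.eval t := by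
    intro t ht
    obtain ⟨h1, h2⟩ := hQ1ne t ht
    rw [hQ12]; nth_rewrite 1 [hP12]
    simp only [eval_mul, eval_add]
    field_simp
  have hWgood : ∀ t ∈ W, v (u t - P1.eval t / Q1.eval t) ≤ δ := by
    intro t ht
    have : u t - P1.eval t / Q1.eval t =
        (u t - P.eval t / Q.eval t) + P2.eval t / Q2.eval t := by rw [hsplit t ht]; ring
    rw [this]
    exact Valuation.map_add_le _ (hPQ t ht).2 (hpolar t (hW1 t ht))
  have hQ1disc : ∀ t, v t ≤ 1 → Q1.eval t ≠ 0 := by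
    intro t ht h
    have := hdisc t ht
    rw [eval_mul, h, zero_mul, map_zero] at this
    exact hvq0.ne this
  have hP3bd : Bd v P3 (δ * v q0) := by
    refine bd_of_circle _ fun t ht => ?_
    obtain ⟨h3, h4⟩ := hPQ4 t ht.le
    have h1 := hQ1disc t ht.le
    have e : P3.eval t = ((u t - P4.eval t / Q4.eval t) - (u t - P1.eval t / Q1.eval t)) *
        (Q1 * Q4).eval t := by
      rw [hP3]
      simp only [eval_sub, eval_mul]
      field_simp
      ring
    rw [e, map_mul, hdisc t ht.le]
    exact mul_le_mul' (Valuation.map_sub_le _ h4 (hWgood t (hWc t ht))) le_rfl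
  refine ⟨P1, Q1, ?_⟩
  rintro t (ht | ht)
  · exact ⟨(hQ1ne t ht).1, hWgood t ht⟩
  · have ht : v t ≤ 1 := ht
    have h1 := hQ1disc t ht
    obtain ⟨h3, h4⟩ := hPQ4 t ht
    refine ⟨h1, ?_⟩
    have e : u t - P1.eval t / Q1.eval t =
        (u t - P4.eval t / Q4.eval t) - P3.eval t / (Q1 * Q4).eval t := by
      rw [hP3]
      simp only [eval_sub, eval_mul]
      field_simp
      ring
    rw [e]
    refine Valuation.map_sub_le _ h4 ?_
    rw [map_div₀, hdisc t ht, div_le_iff₀ hvq0]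
    exact hP3bd.eval_le ht

end OneVar

/-! ### Discs, growth and Liouville's theorem -/

section OneVar2
variable {L : Type*} [Field L] {v : Valuation L ℝ≥0}

lemma RA.affine {u : L → L} {W : Set L} (h : RA v u W) (a c : L) :
    RA v (fun t => u (a + c * t)) {t | a + c * t ∈ W} := by
  intro δ hδ
  obtain ⟨P, Q, hPQ⟩ := h δ hδ
  refine ⟨P.comp (C a + C c * X), Q.comp (C a + C c * X), fun t ht => ?_⟩
  simpa [eval_comp] using hPQ _ ht

/-- `RA.fill_unit` for a disc of arbitrary center and radius. -/
lemma RA.fill [IsAlgClosed L] (hsurj : ∀ r : ℝ≥0, r ≠ 0 → ∃ y : L, v y = r)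
    {u : L → L} {W : Set L} (b : L) {s : ℝ≥0} (hs : s ≠ 0) (hW1 : ∀ t ∈ W, s ≤ v (t - b))
    (hWc : ∀ t, v (t - b) = s → t ∈ W) (hu : RA v u W) (hd : RA v u {t | v (t - b) ≤ s}) :
    RA v u (W ∪ {t | v (t - b) ≤ s}) := by
  obtain ⟨c, hc⟩ := hsurj s hs
  have hc0 : c ≠ 0 := by rintro rfl; exact hs (by rw [← hc, map_zero])
  have hspos : 0 < s := pos_iff_ne_zero.2 hs
  have h1 : RA v (fun t => u (b + c * t)) ({t | b + c * t ∈ W} ∪ {t | v t ≤ 1}) := by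
    refine RA.fill_unit ?_ ?_ (hu.affine b c) ((hd.affine b c).mono ?_)
    · intro t ht
      have := hW1 _ ht
      rw [add_sub_cancel_left, map_mul, hc] at this
      exact (le_mul_iff_one_le_right hspos).1 this
    · intro t ht
      apply hWc
      rw [add_sub_cancel_left, map_mul, hc, ht, mul_one]
    · intro t ht
      change v (b + c * t - b) ≤ s
      rw [add_sub_cancel_left, map_mul, hc]
      exact mul_le_of_le_one_right' ht
  have h2 := h1.affine (-b / c) c⁻¹
  have e : ∀ t, b + c * (-b / c + c⁻¹ * t) = t := by intro t; field_simp; ring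
  simp only [e] at h2
  refine h2.mono ?_
  rintro t (ht | ht)
  · left
    change b + c * _ ∈ W
    rwa [e]
  · right
    change v (-b / c + c⁻¹ * t) ≤ 1
    have : -b / c + c⁻¹ * t = (t - b) / c := by field_simp; ring
    rw [this, map_div₀, hc]
    exact div_le_one_of_le₀ ht zero_le

/-- Extension of rational approximability from all discs of radius less than `r` to a slightly
larger disc of radius `R > r` around any point.  The disc minus small discs around the points of
`Z` near `z` consists of points whose distances to `Z` are those of a generic point `t0`; the small
discs are filled in one after the other. -/
lemma RA.step [IsAlgClosed L] (hsurj : ∀ r : ℝ≥0, r ≠ 0 → ∃ y : L, v y = r)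
    {u : L → L} (Z : Finset L)
    (hloc : ∀ t0, ∃ ε : ℝ≥0, 0 < ε ∧
      RA v u {t | ∀ z ∈ Z, v (t - z) < v (t0 - z) + ε ∧ v (t0 - z) < v (t - z) + ε})
    {r : ℝ≥0} (hr : ∀ s < r, ∀ a, RA v u {t | v (t - a) ≤ s}) (z : L) :
    ∃ R, r < R ∧ RA v u {t | v (t - z) < R} := by
  classical
  obtain ⟨t0, ht0z, ht0⟩ := exists_generic v hsurj Z z r
  obtain ⟨ε, hε, hRA⟩ := hloc t0
  set Near := Z.filter fun z' => v (z' - z) ≤ r with hNear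
  have hnear : ∀ z' ∈ Near, v (t0 - z') = r := by
    intro z' hz'
    obtain ⟨h1, h2⟩ := Finset.mem_filter.1 hz'
    refine le_antisymm ?_ (ht0 z' h1)
    have : t0 - z' = (t0 - z) - (z' - z) := by ring
    rw [this]
    exact Valuation.map_sub_le _ ht0z.le h2
  have hfar : ∀ z' ∈ Z, z' ∉ Near → ∀ t, v (t - z) < v (z' - z) → v (t - z') = v (z' - z) := by
    intro z' hz' hn t ht
    have : t - z' = (t - z) - (z' - z) := by ring
    rw [this, Valuation.map_sub_eq_of_lt_right _ ht]
  have hfar' : ∀ z' ∈ Z, z' ∉ Near → r < v (z' - z) := by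
    intro z' hz' hn
    by_contra! h
    exact hn (Finset.mem_filter.2 ⟨hz', h⟩)
  obtain ⟨R, hrR, hRε, hRfar⟩ : ∃ R, r < R ∧ R ≤ r + ε ∧
      ∀ z' ∈ Z, z' ∉ Near → R ≤ v (z' - z) := by
    have : ∀ S : Finset L, (∀ z' ∈ S, r < v (z' - z)) →
        ∃ R, r < R ∧ R ≤ r + ε ∧ ∀ z' ∈ S, R ≤ v (z' - z) := by
      intro S
      induction S using Finset.induction_on with
      | empty => exact fun _ => ⟨r + ε, lt_add_of_pos_right _ hε, le_rfl, by simp⟩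
      | insert a S ha ih =>
        intro h
        obtain ⟨R, h1, h2, h3⟩ := ih fun z' hz' => h z' (Finset.mem_insert_of_mem hz')
        refine ⟨min R (v (a - z)), lt_min h1 (h a (Finset.mem_insert_self _ _)),
          (min_le_left _ _).trans h2, fun z' hz' => ?_⟩
        rcases Finset.mem_insert.1 hz' with rfl | h
        · exact min_le_right _ _
        · exact (min_le_left _ _).trans (h3 z' h)
    obtain ⟨R, h1, h2, h3⟩ := this (Z.filter fun z' => z' ∉ Near) (by
      intro z' hz'
      obtain ⟨h1, h2⟩ := Finset.mem_filter.1 hz'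
      exact hfar' z' h1 h2)
    exact ⟨R, h1, h2, fun z' hz' hn => h3 z' (Finset.mem_filter.2 ⟨hz', hn⟩)⟩
  refine ⟨R, hrR, ?_⟩
  -- upper bounds hold on the whole disc, lower bounds only away from the near special points
  have hin : ∀ t, v (t - z) < R → (∀ z' ∈ Near, r < v (t - z') + ε) →
      ∀ z' ∈ Z, v (t - z') < v (t0 - z') + ε ∧ v (t0 - z') < v (t - z') + ε := by
    intro t ht hl z' hz'
    by_cases hn : z' ∈ Near
    · rw [hnear z' hn]
      refine ⟨?_, hl z' hn⟩
      have : t - z' = (t - z) - (z' - z) := by ring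
      rw [this]
      exact (Valuation.map_sub_lt _ ht ((Finset.mem_filter.1 hn).2.trans_lt hrR)).trans_le hRε
    · rw [hfar z' hz' hn t (ht.trans_le (hRfar z' hz' hn)),
        hfar z' hz' hn t0 (by rw [ht0z]; exact hfar' z' hz' hn)]
      exact ⟨lt_add_of_pos_right _ hε, lt_add_of_pos_right _ hε⟩
  rcases eq_or_ne r 0 with hr0 | hr0
  · refine hRA.mono fun t ht => hin t ht fun z' _ => ?_
    rw [hr0]; positivity
  have hrpos : 0 < r := pos_iff_ne_zero.2 hr0
  -- The radius `s` of the removed discs exceeds all distances less than `r` between points of `Z`, so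
  -- that every circle of radius `s` around a near point lies in `W`.
  obtain ⟨s, hsr, hs0, hsε, hsZ⟩ : ∃ s, s < r ∧ 0 < s ∧ r < s + ε ∧
      ∀ z' ∈ Z, ∀ z'' ∈ Z, v (z' - z'') < r → v (z' - z'') < s := by
    set B : Finset ℝ≥0 := insert (r - ε)
      (((Z ×ˢ Z).image fun p => v (p.1 - p.2)).filter fun b => b < r) with hB
    have hsup : B.sup id < r := by
      rw [Finset.sup_lt_iff (by simpa using hrpos)]
      intro b hb
      rcases Finset.mem_insert.1 hb with rfl | h
      · exact tsub_lt_self hrpos hε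
      · exact (Finset.mem_filter.1 h).2
    obtain ⟨s, h1, h2⟩ := exists_between hsup
    have hlt : ∀ b ∈ B, b < s := fun b hb => (Finset.le_sup (f := id) hb).trans_lt h1
    refine ⟨s, h2, bot_le.trans_lt h1, ?_, ?_⟩
    · have := hlt (r - ε) (Finset.mem_insert_self _ _)
      exact lt_of_le_of_lt le_tsub_add (by gcongr)
    · intro z' hz' z'' hz'' h
      apply hlt
      refine Finset.mem_insert_of_mem (Finset.mem_filter.2 ⟨?_, h⟩)
      exact Finset.mem_image.2 ⟨(z', z''), Finset.mem_product.2 ⟨hz', hz''⟩, rfl⟩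
  set W : Set L := {t | v (t - z) < R ∧ ∀ z' ∈ Near, s ≤ v (t - z')} with hW
  have hWRA : RA v u W := hRA.mono fun t ht => hin t ht.1 fun z' hz' =>
    hsε.trans_le (by gcongr; exact ht.2 z' hz')
  have hcirc : ∀ z' ∈ Near, ∀ t, v (t - z') = s → t ∈ W := by
    intro z' hz' t ht
    refine ⟨?_, fun z'' hz'' => ?_⟩
    · have : t - z = (t - z') + (z' - z) := by ring
      rw [this]
      exact Valuation.map_add_lt _ (by rw [ht]; exact hsr.trans hrR)
        ((Finset.mem_filter.1 hz').2.trans_lt hrR)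
    · have e : t - z'' = (t - z') + (z' - z'') := by ring
      rcases lt_or_ge (v (z' - z'')) r with h | h
      · have := hsZ z' (Finset.mem_filter.1 hz').1 z'' (Finset.mem_filter.1 hz'').1 h
        rw [e, Valuation.map_add_eq_of_lt_left _ (by rwa [ht]), ht]
      · rw [e, Valuation.map_add_eq_of_lt_right _ (by rw [ht]; exact hsr.trans_le h)]
        exact hsr.le.trans h
  have hfill : ∀ H : Finset L, H ⊆ Near → RA v u (W ∪ {t | ∃ z' ∈ H, v (t - z') ≤ s}) := by
    intro H
    induction H using Finset.induction_on with
    | empty => intro _; refine hWRA.mono ?_; rintro t (ht | ⟨z', h, -⟩); exacts [ht, by simp at h]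
    | insert b H hb ih =>
      intro hH
      have ih' := ih fun x hx => hH (Finset.mem_insert_of_mem hx)
      have hbN : b ∈ Near := hH (Finset.mem_insert_self _ _)
      by_cases hcov : ∃ z' ∈ H, v (b - z') ≤ s
      · refine ih'.mono ?_
        rintro t (ht | ⟨z', h, h'⟩)
        · exact Or.inl ht
        · right
          rcases Finset.mem_insert.1 h with rfl | h
          · obtain ⟨z'', h1, h2⟩ := hcov
            refine ⟨z'', h1, ?_⟩
            have : t - z'' = (t - z') + (z' - z'') := by ring
            rw [this]
            exact Valuation.map_add_le _ h' h2
          · exact ⟨z', h, h'⟩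
      · push Not at hcov
        refine (RA.fill hsurj b hs0.ne' ?_ ?_ ih' (hr s hsr b)).mono ?_
        · rintro t (ht | ⟨z', h, h'⟩)
          · exact ht.2 b hbN
          · have e : t - b = (t - z') - (b - z') := by ring
            rw [e, Valuation.map_sub_eq_of_lt_right _ (h'.trans_lt (hcov z' h))]
            exact (hcov z' h).le
        · intro t ht
          exact Or.inl (hcirc b hbN t ht)
        · rintro t (ht | ⟨z', h, h'⟩)
          · exact Or.inl (Or.inl ht)
          · rcases Finset.mem_insert.1 h with rfl | h
            · exact Or.inr h'
            · exact Or.inl (Or.inr ⟨z', h, h'⟩)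
  refine (hfill Near subset_rfl).mono fun t ht => ?_
  by_cases h : ∃ z' ∈ Near, v (t - z') ≤ s
  · exact Or.inr h
  · push Not at h
    exact Or.inl ⟨ht, fun z' hz' => (h z' hz').le⟩

/-- A locally (in terms of the distances to finitely many points) rationally approximable function
is rationally approximable on every disc: `RA.step` contradicts the minimality of the infimum `r0` of
the radii for which this fails. -/
theorem RA.disc [IsAlgClosed L] (hsurj : ∀ r : ℝ≥0, r ≠ 0 → ∃ y : L, v y = r)
    {u : L → L} (Z : Finset L)
    (hloc : ∀ t0, ∃ ε : ℝ≥0, 0 < ε ∧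
      RA v u {t | ∀ z ∈ Z, v (t - z) < v (t0 - z) + ε ∧ v (t0 - z) < v (t - z) + ε})
    (r : ℝ≥0) (a : L) : RA v u {t | v (t - a) ≤ r} := by
  classical
  by_contra hbad
  set bad : Set ℝ≥0 := {r | ∃ a, ¬ RA v u {t | v (t - a) ≤ r}} with hbad_def
  have hne : bad.Nonempty := ⟨r, a, hbad⟩
  set r0 := sInf bad with hr0
  have hlt : ∀ s < r0, ∀ a, RA v u {t | v (t - a) ≤ s} := by
    intro s hs a
    by_contra h
    exact absurd (csInf_le' (show s ∈ bad from ⟨a, h⟩)) hs.not_ge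
  obtain ⟨R, hrR, hR⟩ : ∃ R, r0 < R ∧ ∀ z ∈ Z, RA v u {t | v (t - z) < R} := by
    have : ∀ S ⊆ Z, ∃ R, r0 < R ∧ ∀ z ∈ S, RA v u {t | v (t - z) < R} := by
      intro S
      induction S using Finset.induction_on with
      | empty => exact fun _ => ⟨r0 + 1, by simp, by simp⟩
      | insert b S hb ih =>
        intro hS
        obtain ⟨R, h1, h2⟩ := ih fun x hx => hS (Finset.mem_insert_of_mem hx)
        obtain ⟨R', h1', h2'⟩ := RA.step hsurj Z hloc hlt b
        refine ⟨min R R', lt_min h1 h1', fun z hz => ?_⟩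
        rcases Finset.mem_insert.1 hz with rfl | h
        · exact h2'.mono fun t (ht : v _ < _) => show v _ < _ from ht.trans_le (min_le_right _ _)
        · exact (h2 z h).mono fun t (ht : v _ < _) => show v _ < _ from ht.trans_le (min_le_left _ _)
    exact this Z subset_rfl
  have hge : R ≤ r0 := by
    refine le_csInf hne ?_
    rintro b ⟨a, hb⟩
    by_contra! hbR
    apply hb
    by_cases hz : ∃ z ∈ Z, v (a - z) ≤ b
    · obtain ⟨z, hz, h⟩ := hz
      refine (hR z hz).mono fun t ht => ?_
      have e : t - z = (t - a) + (a - z) := by ring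
      change v (t - z) < R
      rw [e]
      exact (Valuation.map_add_le _ ht h).trans_lt hbR
    · push Not at hz
      obtain ⟨ε, hε, h⟩ := hloc a
      refine h.mono fun t ht z hz' => ?_
      have e : t - z = (t - a) + (a - z) := by ring
      have : v (t - z) = v (a - z) := by
        rw [e, Valuation.map_add_eq_of_lt_right _ (lt_of_le_of_lt ht (hz z hz'))]
      rw [this]
      exact ⟨lt_add_of_pos_right _ hε, lt_add_of_pos_right _ hε⟩
  exact absurd hrR hge.not_gt

/-- The maximum principle for rational functions without poles on a disc. -/
lemma max_principle [IsAlgClosed L] (hsurj : ∀ r : ℝ≥0, r ≠ 0 → ∃ y : L, v y = r)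
    (P Q : L[X]) {R c : ℝ≥0} (hR : R ≠ 0) (hQ : ∀ t, v t ≤ R → Q.eval t ≠ 0)
    (h : ∀ t, v t = R → v (P.eval t / Q.eval t) ≤ c) {t : L} (ht : v t ≤ R) :
    v (P.eval t / Q.eval t) ≤ c := by
  obtain ⟨a, ha⟩ := hsurj R hR
  have ha0 : a ≠ 0 := by rintro rfl; exact hR (by rw [← ha, map_zero])
  have unit : ∀ (P Q : L[X]), (∀ t, v t ≤ 1 → Q.eval t ≠ 0) →
      (∀ t, v t = 1 → v (P.eval t / Q.eval t) ≤ c) → ∀ t, v t ≤ 1 →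
      v (P.eval t / Q.eval t) ≤ c := by
    intro P Q hQ h t ht
    obtain ⟨θ, hθ, q, w, hw, e⟩ := exists_one_add (v := v) Q.roots (by
      intro ζ hζ
      by_contra! h
      exact hQ ζ h (isRoot_of_mem_roots hζ))
    have hQe : ∀ t, v t ≤ 1 → v (Q.eval t) = v (Q.leadingCoeff * q) := by
      intro t ht
      conv_lhs => rw [(IsAlgClosed.splits Q).eq_prod_roots]
      rw [e, eval_mul, eval_C, eval_mul, eval_C, eval_add,
        eval_one, map_mul, map_mul, Valuation.map_one_add_of_lt, mul_one, ← map_mul]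
      exact (hw.eval_le ht).trans_lt hθ
    have hpos : 0 < v (Q.leadingCoeff * q) := by
      rw [← hQe t ht]
      exact pos_iff_ne_zero.2 ((Valuation.ne_zero_iff _).2 (hQ t ht))
    have : Bd v P (c * v (Q.leadingCoeff * q)) := bd_of_circle _ fun t ht => by
      have := h t ht
      rwa [map_div₀, hQe t ht.le, div_le_iff₀ hpos] at this
    rw [map_div₀, hQe t ht, div_le_iff₀ hpos]
    exact this.eval_le ht
  have := unit (P.comp (C a * X)) (Q.comp (C a * X)) (by
    intro t ht
    simp only [eval_comp, eval_mul, eval_C, eval_X]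
    apply hQ
    rw [map_mul, ha]
    exact mul_le_of_le_one_right' ht) (by
    intro t ht
    simp only [eval_comp, eval_mul, eval_C, eval_X]
    apply h
    rw [map_mul, ha, ht, mul_one]) (t / a) (by
    rw [map_div₀, ha]; exact div_le_one_of_le₀ ht zero_le)
  simpa [eval_comp, mul_div_cancel₀ _ ha0] using this

lemma poly_growth (P : L[X]) {D : ℕ} (hD : P.natDegree ≤ D) :
    ∃ Λ : ℝ≥0, ∀ t, v (P.eval t) ≤ Λ * max 1 (v t) ^ D := by
  refine ⟨∑ i ∈ Finset.range (D + 1), v (P.coeff i), fun t => ?_⟩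
  rw [eval_eq_sum_range' (Nat.lt_succ_of_le hD)]
  refine Valuation.map_sum_le _ fun i hi => ?_
  rw [map_mul, map_pow]
  refine mul_le_mul' (Finset.single_le_sum (f := fun i => v (P.coeff i)) (fun _ _ => zero_le) hi) ?_
  calc v t ^ i ≤ max 1 (v t) ^ i := pow_le_pow_left' (le_max_right _ _) i
    _ ≤ _ := pow_le_pow_right₀ (le_max_left _ _) (Nat.lt_succ_iff.1 (Finset.mem_range.1 hi))

/-- Liouville's theorem: a function of polynomial growth that is rationally approximable on all
discs is a polynomial.  The difference of `u` and its interpolation polynomial `p` at `D + 1` nodes is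
the product of the nodal polynomial and a function that is `O(1 / R)` on the circle of radius `R`. -/
theorem liouville [IsAlgClosed L] (hsurj : ∀ r : ℝ≥0, r ≠ 0 → ∃ y : L, v y = r)
    {u : L → L} (hu : ∀ R, RA v u {t | v t ≤ R}) (B : ℝ≥0) (D : ℕ)
    (hB : ∀ t, v (u t) ≤ B * max 1 (v t) ^ D) :
    ∃ p : L[X], p.natDegree ≤ D ∧ ∀ t, u t = p.eval t := by
  classical
  obtain ⟨s, hs⟩ := Infinite.exists_subset_card_eq L (D + 1)
  set p := Lagrange.interpolate s id u with hp
  have hpdeg : p.natDegree ≤ D := by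
    have h := Lagrange.degree_interpolate_lt (s := s) (v := id) u (Set.injOn_id _)
    rw [hs] at h
    rw [← hp] at h
    rcases eq_or_ne p 0 with h0 | h0
    · simp [h0]
    · exact Nat.lt_succ_iff.1 ((natDegree_lt_iff_degree_lt h0).2 h)
  have hpev : ∀ y ∈ s, p.eval y = u y := fun y hy =>
    Lagrange.eval_interpolate_at_node (v := id) u (Set.injOn_id _) hy
  refine ⟨p, hpdeg, fun t1 => ?_⟩
  by_cases ht1s : t1 ∈ s
  · exact (hpev t1 ht1s).symm
  obtain ⟨Λ, hΛ⟩ := poly_growth (v := v) p hpdeg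
  set E := max B Λ + 1 with hE
  have hw : ∀ t, v (u t - p.eval t) ≤ E * max 1 (v t) ^ D := by
    intro t
    refine Valuation.map_sub_le _ ((hB t).trans ?_) ((hΛ t).trans ?_)
    · gcongr; exact (le_max_left B Λ).trans le_self_add
    · gcongr; exact (le_max_right B Λ).trans le_self_add
  set nod := Lagrange.nodal s (id : L → L) with hnod
  have hnodev : ∀ t, nod.eval t = ∏ y ∈ s, (t - y) := fun t => by
    simp [hnod, Lagrange.eval_nodal]
  have hnod1 : 0 < v (nod.eval t1) := by
    rw [pos_iff_ne_zero, Valuation.ne_zero_iff, hnodev, Finset.prod_ne_zero_iff]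
    intro y hy h
    exact ht1s (by rw [sub_eq_zero.1 h]; exact hy)
  obtain ⟨R0, hR01, hR0t, hR0s⟩ : ∃ R0 : ℝ≥0, 1 ≤ R0 ∧ v t1 ≤ R0 ∧ ∀ y ∈ s, v y < R0 := by
    refine ⟨1 + v t1 + ∑ y ∈ s, v y, ?_, ?_, ?_⟩
    · rw [add_assoc]; exact le_self_add
    · rw [add_comm 1, add_assoc]; exact le_self_add
    · intro y hy
      have : v y ≤ ∑ y ∈ s, v y := Finset.single_le_sum (f := fun y => v y) (fun _ _ => zero_le) hy
      calc v y ≤ _ := this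
        _ < (1 + v t1) + ∑ y ∈ s, v y := lt_add_of_pos_left _ (by positivity)
  have hEpos : 0 < E := by positivity
  have key : ∀ R, R0 ≤ R → v (u t1 - p.eval t1) ≤ v (nod.eval t1) * (E / R) := by
    intro R hR
    have hR1 : 1 ≤ R := hR01.trans hR
    have hRpos : 0 < R := one_pos.trans_le hR1
    obtain ⟨Λ', hΛ'1, hΛ'⟩ : ∃ Λ' : ℝ≥0, 1 ≤ Λ' ∧ ∀ y ∈ s, ∀ t, v t ≤ R →
        v ((Lagrange.basis s id y).eval t) ≤ Λ' := by
      have : ∀ y, ∃ Λ' : ℝ≥0, ∀ t, v t ≤ R → v ((Lagrange.basis s id y).eval t) ≤ Λ' := by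
        intro y
        obtain ⟨Λ', h⟩ := poly_growth (v := v) (Lagrange.basis s id y) le_rfl
        refine ⟨Λ' * R ^ (Lagrange.basis s id y).natDegree, fun t ht => (h t).trans ?_⟩
        gcongr
        exact max_le hR1 ht
      choose f hf using this
      refine ⟨1 + ∑ y ∈ s, f y, le_self_add, fun y hy t ht => (hf y t ht).trans ?_⟩
      exact (Finset.single_le_sum (f := f) (fun _ _ => zero_le) hy).trans le_add_self
    set m := min (E * R ^ D) (v (nod.eval t1) * (E / R)) with hm
    have hmpos : 0 < m := lt_min (by positivity) (by positivity)
    set δ := m / Λ' with hδ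
    have hΛpos : 0 < Λ' := one_pos.trans_le hΛ'1
    have hδpos : 0 < δ := div_pos hmpos hΛpos
    have hδm : δ ≤ m := div_le_self zero_le hΛ'1
    obtain ⟨P0, Q, hPQ⟩ := hu R δ hδpos
    set P := P0 - p * Q with hP
    have hPQ' : ∀ t, v t ≤ R → Q.eval t ≠ 0 ∧
        v ((u t - p.eval t) - P.eval t / Q.eval t) ≤ δ := by
      intro t ht
      obtain ⟨h1, h2⟩ := hPQ t ht
      refine ⟨h1, ?_⟩
      convert h2 using 2
      rw [hP, eval_sub, eval_mul]
      field_simp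
      ring
    set g : L → L := fun t => P.eval t / Q.eval t with hg
    have hgs : ∀ y ∈ s, v (g y) ≤ δ := by
      intro y hy
      have := (hPQ' y ((hR0s y hy).le.trans hR)).2
      rwa [hpev y hy, sub_self, zero_sub, Valuation.map_neg] at this
    -- The approximation `g` of `u - p` is small, but not zero, at the nodes; `ℓ` corrects this.
    set ℓ := Lagrange.interpolate s id g with hℓ
    have hℓs : ∀ y ∈ s, ℓ.eval y = g y := fun y hy =>
      Lagrange.eval_interpolate_at_node (v := id) g (Set.injOn_id _) hy
    have hℓb : ∀ t, v t ≤ R → v (ℓ.eval t) ≤ m := by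
      intro t ht
      rw [hℓ, Lagrange.interpolate_apply, eval_finsetSum]
      refine Valuation.map_sum_le _ fun y hy => ?_
      rw [eval_mul, eval_C, map_mul]
      calc _ ≤ δ * Λ' := mul_le_mul' (hgs y hy) (hΛ' y hy t ht)
        _ = m := div_mul_cancel₀ _ hΛpos.ne'
    have hdvd : nod ∣ P - ℓ * Q := by
      rw [hnod, Lagrange.nodal]
      refine Finset.prod_dvd_of_coprime ?_ ?_
      · intro x _ y _ hxy
        exact pairwise_coprime_X_sub_C Function.injective_id hxy
      · intro y hy
        rw [id, dvd_iff_isRoot, IsRoot, eval_sub, eval_mul, hℓs y hy, hg]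
        simp only
        rw [div_mul_cancel₀ _ (hPQ' y ((hR0s y hy).le.trans hR)).1, sub_self]
    obtain ⟨H, hH⟩ := hdvd
    have hHeq : ∀ t, v t ≤ R → nod.eval t * (H.eval t / Q.eval t) = g t - ℓ.eval t := by
      intro t ht
      have h1 := (hPQ' t ht).1
      have : eval t (P - ℓ * Q) = _ := congrArg (eval t) hH
      rw [eval_sub, eval_mul, eval_mul] at this
      rw [hg]
      simp only
      field_simp
      linear_combination -this
    have hsmall : v (H.eval t1 / Q.eval t1) ≤ E / R := by
      refine max_principle hsurj H Q hRpos.ne' (fun t ht => (hPQ' t ht).1) ?_ (hR0t.trans hR)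
      intro t ht
      have hn : v (nod.eval t) = R ^ (D + 1) := by
        rw [hnodev, map_prod, ← hs, ← Finset.prod_const]
        refine Finset.prod_congr rfl fun y hy => ?_
        rw [Valuation.map_sub_eq_of_lt_left _ (by rw [ht]; exact (hR0s y hy).trans_le hR), ht]
      have h1 : v (nod.eval t * (H.eval t / Q.eval t)) ≤ E * R ^ D := by
        rw [hHeq t ht.le]
        refine Valuation.map_sub_le _ ?_ ((hℓb t ht.le).trans (min_le_left _ _))
        have : g t = (u t - p.eval t) - ((u t - p.eval t) - g t) := by ring
        rw [this]
        refine Valuation.map_sub_le _ ?_ (((hPQ' t ht.le).2.trans hδm).trans (min_le_left _ _))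
        have := hw t
        rwa [ht, max_eq_right hR1] at this
      rw [map_mul, hn] at h1
      rw [le_div_iff₀ hRpos]
      refine le_of_mul_le_mul_left ?_ (pow_pos hRpos D)
      calc _ = R ^ (D + 1) * v (eval t H / eval t Q) := by rw [pow_succ]; ring
        _ ≤ _ := h1
        _ = _ := mul_comm _ _
    have e : u t1 - p.eval t1 = ((u t1 - p.eval t1) - g t1) +
        (nod.eval t1 * (H.eval t1 / Q.eval t1) + ℓ.eval t1) := by
      rw [hHeq t1 (hR0t.trans hR)]; ring
    rw [e]
    refine Valuation.map_add_le _ (((hPQ' t1 (hR0t.trans hR)).2.trans hδm).trans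
      (min_le_right _ _)) (Valuation.map_add_le _ ?_ ((hℓb t1 (hR0t.trans hR)).trans
      (min_le_right _ _)))
    rw [map_mul]
    exact mul_le_mul' le_rfl hsmall
  by_contra hne
  have hpos : 0 < v (u t1 - p.eval t1) :=
    pos_iff_ne_zero.2 ((Valuation.ne_zero_iff _).2 (sub_ne_zero.2 hne))
  set F := v (nod.eval t1) * E with hF
  have h := key (max R0 (F / v (u t1 - p.eval t1) + 1)) (le_max_left _ _)
  have hRpos : 0 < max R0 (F / v (u t1 - p.eval t1) + 1) :=
    (one_pos.trans_le hR01).trans_le (le_max_left _ _)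
  rw [← mul_div_assoc, le_div_iff₀ hRpos] at h
  have h2 : v (u t1 - p.eval t1) * (F / v (u t1 - p.eval t1) + 1) ≤ F :=
    (mul_le_mul' le_rfl (le_max_right _ _)).trans h
  rw [mul_add, mul_div_cancel₀ _ hpos.ne', mul_one] at h2
  exact absurd h2 (lt_add_of_pos_right _ hpos).not_ge

end OneVar2

/-! ### Dominant terms and separating exponents -/

section Dominant
variable {L : Type*} [Field L] {v : Valuation L ℝ≥0}

/-- The `i0`-th term of `P` strictly dominates all other terms at arguments of value `ρ`. -/
def Dom (v : Valuation L ℝ≥0) (ρ : ℝ≥0) (P : L[X]) (i0 : ℕ) : Prop :=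
  0 < v (P.coeff i0) * ρ ^ i0 ∧ ∀ i, i ≠ i0 → v (P.coeff i) * ρ ^ i < v (P.coeff i0) * ρ ^ i0

lemma Dom.mul {ρ : ℝ≥0} {P Q : L[X]} {i0 j0 : ℕ} (hP : Dom v ρ P i0) (hQ : Dom v ρ Q j0) :
    Dom v ρ (P * Q) (i0 + j0) := by
  have hmul : ∀ i j, v (P.coeff i * Q.coeff j) * ρ ^ (i + j) =
      (v (P.coeff i) * ρ ^ i) * (v (Q.coeff j) * ρ ^ j) := by
    intro i j; rw [map_mul, pow_add]; ring
  have hρ : ρ ^ (i0 + j0) ≠ 0 := by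
    rw [pow_add]
    exact mul_ne_zero (right_ne_zero_of_mul hP.1.ne') (right_ne_zero_of_mul hQ.1.ne')
  have hlt : ∀ i j, (i, j) ≠ (i0, j0) → v (P.coeff i * Q.coeff j) * ρ ^ (i + j) <
      v (P.coeff i0 * Q.coeff j0) * ρ ^ (i0 + j0) := by
    intro i j hij
    rw [hmul, hmul]
    by_cases hi : i = i0
    · subst hi
      have hj : j ≠ j0 := by rintro rfl; exact hij rfl
      exact mul_lt_mul_of_pos_left (hQ.2 j hj) hP.1
    · refine mul_lt_mul_of_lt_of_le_of_nonneg_of_pos (hP.2 i hi) ?_ zero_le hQ.1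
      by_cases hj : j = j0
      · rw [hj]
      · exact (hQ.2 j hj).le
  have hmain : v ((P * Q).coeff (i0 + j0)) = v (P.coeff i0 * Q.coeff j0) := by
    rw [coeff_mul]
    refine Valuation.map_sum_eq_of_lt _ (f := fun p : ℕ × ℕ => P.coeff p.1 * Q.coeff p.2)
      (j := (i0, j0)) (by simp) ?_
    rintro ⟨i, j⟩ hij
    simp only [Finset.mem_sdiff, Finset.HasAntidiagonal.mem_antidiagonal, Finset.mem_singleton] at hij
    have := hlt i j hij.2
    rw [hij.1] at this
    exact lt_of_mul_lt_mul_right this zero_le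
  refine ⟨?_, fun k hk => ?_⟩
  · rw [hmain, hmul]; exact mul_pos hP.1 hQ.1
  · rw [hmain]
    by_cases hρk : ρ ^ k = 0
    · rw [hρk, mul_zero, hmul]; exact mul_pos hP.1 hQ.1
    have hρk' : 0 < ρ ^ k := pos_iff_ne_zero.2 hρk
    rw [← lt_div_iff₀ hρk', coeff_mul]
    refine Valuation.map_sum_lt' _ ?_ ?_
    · refine div_pos ?_ hρk'
      rw [hmul]; exact mul_pos hP.1 hQ.1
    · rintro ⟨i, j⟩ hij
      simp only [Finset.HasAntidiagonal.mem_antidiagonal] at hij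
      rw [lt_div_iff₀ hρk', ← hij]
      apply hlt
      rintro h
      simp only [Prod.mk.injEq] at h
      exact hk (by rw [← hij, h.1, h.2])

lemma dom_X_sub_C {ρ : ℝ≥0} {ζ : L} (h : v ζ ≠ ρ) : ∃ i0, Dom v ρ (X - C ζ) i0 := by
  have hc : ∀ i, i ≠ 0 → i ≠ 1 → (X - C ζ).coeff i = 0 := by
    intro i h0 h1
    rw [coeff_sub, coeff_X, coeff_C, if_neg h0, if_neg (Ne.symm h1), sub_zero]
  have h0 : v ((X - C ζ).coeff 0) * ρ ^ 0 = v ζ := by simp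
  have h1 : v ((X - C ζ).coeff 1) * ρ ^ 1 = ρ := by simp
  rcases lt_or_gt_of_ne h with h | h
  · refine ⟨1, by rw [h1]; exact bot_le.trans_lt h, fun i hi => ?_⟩
    rw [h1]
    by_cases hi0 : i = 0
    · rw [hi0, h0]; exact h
    · rw [hc i hi0 hi, map_zero, zero_mul]; exact bot_le.trans_lt h
  · refine ⟨0, by rw [h0]; exact bot_le.trans_lt h, fun i hi => ?_⟩
    rw [h0]
    by_cases hi1 : i = 1
    · rw [hi1, h1]; exact h
    · rw [hc i hi hi1, map_zero, zero_mul]; exact bot_le.trans_lt h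

/-- A polynomial without roots of value `ρ` has a strictly dominant term at arguments of value `ρ`. -/
lemma dom_prod {ι : Type*} {ρ : ℝ≥0} (s : Finset ι) (ζ : ι → L) (h : ∀ i ∈ s, v (ζ i) ≠ ρ) :
    ∃ i0, Dom v ρ (∏ i ∈ s, (X - C (ζ i))) i0 := by
  classical
  induction s using Finset.induction_on with
  | empty =>
    refine ⟨0, by simp, fun i hi => ?_⟩
    simp [coeff_one, hi]
  | insert a s ha ih =>
    obtain ⟨i0, h0⟩ := ih fun i hi => h i (Finset.mem_insert_of_mem hi)
    obtain ⟨j0, h1⟩ := dom_X_sub_C (h a (Finset.mem_insert_self _ _))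
    rw [Finset.prod_insert ha]
    exact ⟨_, h1.mul h0⟩

end Dominant

lemma tendsto_of_pow {α : Type*} {l : Filter α} {f : α → ℝ≥0} {a : ℝ≥0} {q : ℕ} (hq : q ≠ 0)
    (h : Tendsto (fun x => f x ^ q) l (𝓝 (a ^ q))) : Tendsto f l (𝓝 a) := by
  have hc : Continuous fun y : ℝ≥0 => y ^ ((q : ℝ)⁻¹) :=
    NNReal.continuous_rpow_const (by positivity)
  have := (hc.tendsto (a ^ q)).comp h
  simpa [Function.comp_def, NNReal.pow_rpow_inv_natCast _ hq] using this

/-- Finitely many exponent vectors suffice for separating, by monomials, the points of any set of at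
most `M` points of the open positive orthant: take the exponents `(1, k, k², …)` for sufficiently
many `k`. -/
lemma exists_exponents (n M : ℕ) : ∃ E : Finset (Fin n → ℕ), ∀ Y : Finset (Fin n → ℝ≥0),
    Y.card ≤ M → (∀ y ∈ Y, ∀ i, y i ≠ 0) →
    ∃ e ∈ E, ∀ y ∈ Y, ∀ y' ∈ Y, ∏ i, y i ^ e i = ∏ i, y' i ^ e i → y = y' := by
  classical
  refine ⟨(Finset.range (M * M * n + 1)).image fun k i => k ^ (i : ℕ), fun Y hY hpos => ?_⟩
  set pol : (Fin n → ℝ≥0) × (Fin n → ℝ≥0) → ℝ[X] := fun p =>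
    ∑ i : Fin n, C (Real.log (p.1 i) - Real.log (p.2 i)) * X ^ (i : ℕ) with hpol
  have hcoeff : ∀ p (i : Fin n), (pol p).coeff i = Real.log (p.1 i) - Real.log (p.2 i) := by
    intro p i
    rw [hpol]
    simp only [finsetSum_coeff, coeff_C_mul, coeff_X_pow]
    rw [Finset.sum_eq_single i]
    · simp
    · intro j _ hj
      rw [if_neg (fun h => hj (Fin.ext h.symm)), mul_zero]
    · simp
  have hdeg : ∀ p, (pol p).natDegree ≤ n := by
    intro p
    refine natDegree_sum_le_of_forall_le _ _ fun i _ => ?_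
    exact (natDegree_C_mul_X_pow_le _ _).trans i.2.le
  set Bad := (Y ×ˢ Y).biUnion fun p => (pol p).roots.toFinset with hBad
  have hBadcard : Bad.card ≤ M * M * n := by
    calc Bad.card ≤ (Y ×ˢ Y).card * n := Finset.card_biUnion_le_card_mul _ _ _ fun p _ =>
          ((Multiset.toFinset_card_le _).trans (card_roots' _)).trans (hdeg p)
      _ ≤ M * M * n := by
          rw [Finset.card_product]; gcongr
  obtain ⟨k, hk, hkB⟩ : ∃ k ∈ Finset.range (M * M * n + 1), (k : ℝ) ∉ Bad := by
    by_contra! h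
    have : ((Finset.range (M * M * n + 1)).image fun k : ℕ => (k : ℝ)).card ≤ Bad.card := by
      refine Finset.card_le_card fun x hx => ?_
      obtain ⟨k, hk, rfl⟩ := Finset.mem_image.1 hx
      exact h k hk
    rw [Finset.card_image_of_injective _ Nat.cast_injective, Finset.card_range] at this
    omega
  refine ⟨fun i => k ^ (i : ℕ), Finset.mem_image.2 ⟨k, hk, rfl⟩, fun y hy y' hy' heq => ?_⟩
  have hlog : ∀ y ∈ Y, Real.log ((∏ i, y i ^ k ^ (i : ℕ) : ℝ≥0) : ℝ) =
      ∑ i : Fin n, (k : ℝ) ^ (i : ℕ) * Real.log (y i) := by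
    intro y hy
    push_cast
    rw [Real.log_prod]
    · refine Finset.sum_congr rfl fun i _ => ?_
      rw [Real.log_pow]; push_cast; rfl
    · intro i _
      exact pow_ne_zero _ (by exact_mod_cast hpos y hy i)
  have h0 : (pol (y, y')).eval (k : ℝ) = 0 := by
    have h1 := hlog y hy
    rw [heq, hlog y' hy'] at h1
    rw [hpol]
    simp only [eval_finsetSum, eval_mul, eval_C, eval_pow, eval_X, sub_mul, Finset.sum_sub_distrib]
    simp only [mul_comm (Real.log _)]
    rw [h1, sub_self]
  have hpz : pol (y, y') = 0 := by
    by_contra hne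
    exact hkB (Finset.mem_biUnion.2 ⟨(y, y'), Finset.mem_product.2 ⟨hy, hy'⟩,
      Multiset.mem_toFinset.2 ((mem_roots hne).2 h0)⟩)
  funext i
  have h := hcoeff (y, y') i
  rw [hpz, coeff_zero] at h
  have h2 : Real.log (y i) = Real.log (y' i) := sub_eq_zero.1 h.symm
  have p1 : (0 : ℝ) < y i := by
    exact_mod_cast pos_iff_ne_zero.2 (hpos y hy i)
  have p2 : (0 : ℝ) < y' i := by
    exact_mod_cast pos_iff_ne_zero.2 (hpos y' hy' i)
  exact NNReal.coe_injective (Real.log_injOn_pos p1 p2 h2)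

/-! ### Branched coverings of the line -/

/-- A branched covering of the affine line with symmetry group `G`, given by its set of points `𝒳`,
a ring of functions `𝓞` (acting on the points through `ev`) and the projection `π`.  The map from `𝓞`
to functions need not be injective: invariance under `G` is required in `𝓞` itself.  Constants
come from invariants, the `q`-th powers of invariants are polynomials in the coordinate of the line,
and all functions are bounded over bounded sets. -/
structure Cover {L : Type*} [Field L] (v : Valuation L ℝ≥0) (G 𝓞 𝒳 : Type*) [Group G]
    [CommRing 𝓞] where
  ρ : G →* (𝓞 →+* 𝓞)
  ev : 𝒳 → 𝓞 →+* L
  act : G → 𝒳 → 𝒳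
  π : 𝒳 → L
  q : ℕ
  q_ne : q ≠ 0
  ev_act : ∀ g x b, ev (act g x) b = ev x (ρ g b)
  π_act : ∀ g x, π (act g x) = π x
  π_surj : Function.Surjective π
  const : ∀ c : L, ∃ κ : 𝓞, (∀ g, ρ g κ = κ) ∧ ∀ x, ev x κ = c
  inv : ∀ b, (∀ g, ρ g b = b) → ∃ P : L[X], ∀ x, ev x b ^ q = P.eval (π x)
  bdd : ∀ a (R : ℝ≥0), ∃ B : ℝ≥0, ∀ x, v (π x) ≤ R → v (ev x a) ≤ B

/-- The points whose distances to the elements of `Z` differ by less than `ε` from those of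
`t0`. -/
def near {L : Type*} [Field L] (v : Valuation L ℝ≥0) (Z : Finset L) (t0 : L) (ε : ℝ≥0) : Set L :=
  {t | ∀ z ∈ Z, v (t - z) < v (t0 - z) + ε ∧ v (t0 - z) < v (t - z) + ε}

lemma prod_close {L ι : Type*} [Field L] {v : Valuation L ℝ≥0} (s : Finset ι) (y w : ι → L)
    {B δ : ℝ≥0} (hB : 1 ≤ B) (h1 : ∀ i ∈ s, v (y i) ≤ B) (h2 : ∀ i ∈ s, v (w i) ≤ B)
    (h3 : ∀ i ∈ s, v (y i - w i) ≤ δ) :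
    v (∏ i ∈ s, y i - ∏ i ∈ s, w i) ≤ δ * B ^ s.card := by
  classical
  induction s using Finset.induction_on with
  | empty => simp
  | insert a s ha ih =>
    rw [Finset.prod_insert ha, Finset.prod_insert ha, Finset.card_insert_of_notMem ha]
    have e : y a * ∏ i ∈ s, y i - w a * ∏ i ∈ s, w i =
      y a * (∏ i ∈ s, y i - ∏ i ∈ s, w i) + (y a - w a) * ∏ i ∈ s, w i := by ring
    rw [e]
    have hs : ∀ i ∈ s, i ∈ insert a s := fun i hi => Finset.mem_insert_of_mem hi
    have ha' := Finset.mem_insert_self a s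
    refine Valuation.map_add_le _ ?_ ?_
    · rw [map_mul]
      calc _ ≤ B * (δ * B ^ s.card) := mul_le_mul' (h1 a ha')
            (ih (fun i hi => h1 i (hs i hi)) (fun i hi => h2 i (hs i hi))
              (fun i hi => h3 i (hs i hi)))
        _ = _ := by rw [pow_succ]; ring
    · rw [map_mul, map_prod]
      calc _ ≤ δ * B ^ s.card := mul_le_mul' (h3 a ha') (Finset.prod_le_pow_card _ _ _
            fun i hi => h2 i (hs i hi))
        _ ≤ _ := by gcongr; exact Nat.le_succ _

namespace Cover

variable {L : Type*} [Field L] {v : Valuation L ℝ≥0} {G 𝓞 𝒳 : Type*} [Group G] [Fintype G]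
  [CommRing 𝓞] (D : Cover v G 𝓞 𝒳)

omit [Fintype G] in
lemma ρ_mul (g h : G) (b : 𝓞) : D.ρ (g * h) b = D.ρ g (D.ρ h b) := by
  rw [map_mul]; rfl

lemma inv_sum (a : 𝓞) (h : G) : D.ρ h (∑ g, D.ρ g a) = ∑ g, D.ρ g a := by
  rw [map_sum]
  exact Fintype.sum_equiv (Equiv.mulLeft h) _ _ fun g => (D.ρ_mul h g a).symm

lemma inv_prod (a : 𝓞) (h : G) : D.ρ h (∏ g, D.ρ g a) = ∏ g, D.ρ g a := by
  rw [map_prod]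
  exact Fintype.prod_equiv (Equiv.mulLeft h) _ _ fun g => (D.ρ_mul h g a).symm

/-- The characteristic polynomial of `H` over the invariants. -/
noncomputable def chp (H : 𝓞) : 𝓞[X] := ∏ g, (X - C (D.ρ g H))

lemma chp_inv (H : 𝓞) (j : ℕ) (h : G) : D.ρ h ((D.chp H).coeff j) = (D.chp H).coeff j := by
  rw [← coeff_map]
  congr 1
  rw [chp, Polynomial.map_prod]
  refine Fintype.prod_equiv (Equiv.mulLeft h) _ _ fun g => ?_
  simp

lemma ev_chp (H : 𝓞) (x : 𝒳) : (D.chp H).map (D.ev x) = ∏ g, (X - C (D.ev x (D.ρ g H))) := by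
  simp [chp, Polynomial.map_prod]

/-- The zeros in the base of the coefficients of the characteristic polynomial of `H` lie in
`Z`. -/
def Adapted (Z : Finset L) (H : 𝓞) : Prop :=
  ∀ j, ∃ P : L[X], (∀ x, D.ev x ((D.chp H).coeff j) ^ D.q = P.eval (D.π x)) ∧ ∀ ζ ∈ P.roots, ζ ∈ Z

/-- Finitely many functions have a common finite set of special points of the line. -/
lemma exists_adapted (S : Finset 𝓞) : ∃ Z : Finset L, 0 ∈ Z ∧ ∀ H ∈ S, D.Adapted Z H := by
  classical
  have hone : ∀ H, ∃ Z : Finset L, D.Adapted Z H := by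
    intro H
    choose P hP using fun j => D.inv ((D.chp H).coeff j) (fun h => D.chp_inv H j h)
    refine ⟨(Finset.range ((D.chp H).natDegree + 1)).biUnion fun j => (P j).roots.toFinset,
      fun j => ?_⟩
    by_cases hj : j < (D.chp H).natDegree + 1
    · refine ⟨P j, hP j, fun ζ hζ => ?_⟩
      exact Finset.mem_biUnion.2 ⟨j, Finset.mem_range.2 hj, Multiset.mem_toFinset.2 hζ⟩
    · refine ⟨0, fun x => ?_, by simp⟩
      rw [coeff_eq_zero_of_natDegree_lt (by omega), map_zero, zero_pow D.q_ne, eval_zero]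
  choose Z hZ using hone
  refine ⟨insert 0 (S.biUnion Z), Finset.mem_insert_self _ _, fun H hH j => ?_⟩
  obtain ⟨P, h1, h2⟩ := hZ H j
  exact ⟨P, h1, fun ζ hζ => Finset.mem_insert_of_mem (Finset.mem_biUnion.2 ⟨H, hH, h2 ζ hζ⟩)⟩

/-- The filter of points whose distances to `Z` in the base are close to those of `t0`. -/
noncomputable def F (Z : Finset L) (t0 : L) : Filter 𝒳 :=
  comap (fun x (z : Z) => v (D.π x - z)) (𝓝 fun z => v (t0 - z))

omit [Fintype G] in
lemma exists_near_of_mem {Z : Finset L} {t0 : L} {s : Set 𝒳} (hs : s ∈ D.F Z t0) :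
    ∃ ε : ℝ≥0, 0 < ε ∧ ∀ x, D.π x ∈ near v Z t0 ε → x ∈ s := by
  obtain ⟨u, hu, hus⟩ := mem_comap.1 hs
  obtain ⟨ε, hε, hb⟩ := Metric.mem_nhds_iff.1 hu
  refine ⟨⟨ε, hε.le⟩, hε, fun x hx => hus (hb ?_)⟩
  rw [Metric.mem_ball, dist_pi_lt_iff hε]
  intro z
  obtain ⟨h1, h2⟩ := hx z z.2
  rw [NNReal.dist_eq, abs_lt]
  have h1' : (v (D.π x - z) : ℝ) < v (t0 - z) + ε := by exact_mod_cast h1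
  have h2' : (v (t0 - z) : ℝ) < v (D.π x - z) + ε := by exact_mod_cast h2
  constructor <;> linarith

omit [Fintype G] in
lemma tendsto_dist {Z : Finset L} {t0 z : L} (hz : z ∈ Z) :
    Tendsto (fun x => v (D.π x - z)) (D.F Z t0) (𝓝 (v (t0 - z))) := by
  have : Tendsto (fun x (z : Z) => v (D.π x - z)) (D.F Z t0) (𝓝 fun z => v (t0 - z)) :=
    tendsto_comap
  exact (tendsto_pi_nhds.1 this) ⟨z, hz⟩

omit [Fintype G] in
/-- The value of a polynomial depends continuously on the distances of the argument to the roots. -/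
lemma tendsto_poly [IsAlgClosed L] {Z : Finset L} {t0 : L} (P : L[X]) (hP : ∀ ζ ∈ P.roots, ζ ∈ Z) :
    Tendsto (fun x => v (P.eval (D.π x))) (D.F Z t0) (𝓝 (v (P.eval t0))) := by
  have e : ∀ t, v (P.eval t) = v P.leadingCoeff * (P.roots.map fun ζ => v (t - ζ)).prod := by
    intro t
    conv_lhs => rw [(IsAlgClosed.splits P).eq_prod_roots]
    rw [eval_mul, eval_C, map_mul, eval_multiset_prod, map_multiset_prod]
    simp [Multiset.map_map]
  simp only [e]
  refine Tendsto.const_mul _ ?_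
  exact tendsto_multiset_prod (f := fun ζ x => v (D.π x - ζ)) _ fun ζ hζ => D.tendsto_dist (hP ζ hζ)

/-- Along an ultrafilter of points approaching the fibre of `x0`, the value of `H` converges to one
of its values on this fibre: this is the continuity of the slopes of Newton polygons. -/
lemma newton [IsAlgClosed L] {Z : Finset L} (h0 : (0 : L) ∈ Z) {x0 : 𝒳} {H : 𝓞}
    (hH : D.Adapted Z H) (𝒰 : Ultrafilter 𝒳) (h𝒰 : ↑𝒰 ≤ D.F Z (D.π x0)) :
    ∃ g, Tendsto (fun x => v (D.ev x H)) 𝒰 (𝓝 (v (D.ev x0 (D.ρ g H)))) := by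
  classical
  have hcoeff : ∀ j, Tendsto (fun x => v (D.ev x ((D.chp H).coeff j))) 𝒰
      (𝓝 (v (D.ev x0 ((D.chp H).coeff j)))) := by
    intro j
    obtain ⟨P, h1, h2⟩ := hH j
    apply tendsto_of_pow D.q_ne
    simp only [← map_pow, h1]
    exact (D.tendsto_poly P h2).mono_left h𝒰
  obtain ⟨B, hB⟩ := D.bdd H (v (D.π x0) + 1)
  have hev : ∀ᶠ x in (𝒰 : Filter 𝒳), v (D.ev x H) ∈ Set.Icc 0 B := by
    have h1 := (D.tendsto_dist h0).mono_left h𝒰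
    simp only [sub_zero] at h1
    filter_upwards [h1.eventually (eventually_lt_nhds (lt_add_one _))] with x hx
    exact ⟨zero_le, hB x hx.le⟩
  obtain ⟨ρ, -, hρ⟩ := (isCompact_Icc (a := (0 : ℝ≥0)) (b := B)).ultrafilter_le_nhds
    (𝒰.map fun x => v (D.ev x H)) (by rw [le_principal_iff]; exact hev)
  have hρ' : Tendsto (fun x => v (D.ev x H)) 𝒰 (𝓝 ρ) := hρ
  -- If the limit `ρ` were not a value of `H` on the fibre, one term of the characteristic equation of
  -- `H` would strictly dominate the others close to this fibre.
  by_contra! hno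
  have hne : ∀ g ∈ (Finset.univ : Finset G), v (D.ev x0 (D.ρ g H)) ≠ ρ := by
    rintro g - rfl
    exact hno g hρ'
  obtain ⟨i0, hi0, hdom⟩ := dom_prod _ _ hne
  rw [← D.ev_chp] at hi0 hdom
  simp only [coeff_map] at hi0 hdom
  set N := (D.chp H).natDegree with hN
  have hterm : ∀ j, Tendsto (fun x => v (D.ev x ((D.chp H).coeff j)) * v (D.ev x H) ^ j) 𝒰
      (𝓝 (v (D.ev x0 ((D.chp H).coeff j)) * ρ ^ j)) := fun j => (hcoeff j).mul (hρ'.pow j)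
  have h1 : ∀ᶠ x in (𝒰 : Filter 𝒳), ∀ i ∈ (Finset.range (N + 1)), i ≠ i0 →
      v (D.ev x ((D.chp H).coeff i)) * v (D.ev x H) ^ i <
        v (D.ev x ((D.chp H).coeff i0)) * v (D.ev x H) ^ i0 := by
    rw [eventually_all_finset]
    intro i _
    by_cases hi : i = i0
    · exact Eventually.of_forall fun x h => absurd hi h
    · filter_upwards [(hterm i).eventually_lt (hterm i0) (hdom i hi)] with x hx _
      exact hx
  have h2 : ∀ᶠ x in (𝒰 : Filter 𝒳),
      0 < v (D.ev x ((D.chp H).coeff i0)) * v (D.ev x H) ^ i0 :=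
    (hterm i0).eventually (eventually_gt_nhds hi0)
  obtain ⟨x, hx1, hx2⟩ := (h1.and h2).exists
  have hroot : ∑ i ∈ Finset.range (N + 1), D.ev x ((D.chp H).coeff i) * D.ev x H ^ i = 0 := by
    have : ((D.chp H).eval H) = 0 := by
      rw [chp, eval_prod]
      apply Finset.prod_eq_zero (Finset.mem_univ (1 : G))
      simp
    rw [eval_eq_sum_range] at this
    simpa using congrArg (D.ev x) this
  have hi0N : i0 ∈ Finset.range (N + 1) := by
    rw [Finset.mem_range]
    by_contra! h
    rw [coeff_eq_zero_of_natDegree_lt (by omega)] at hx2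
    simp at hx2
  have := Valuation.map_sum_eq_of_lt v (f := fun i => D.ev x ((D.chp H).coeff i) * D.ev x H ^ i)
    hi0N (by
      intro i hi
      rw [Finset.mem_sdiff, Finset.mem_singleton] at hi
      simpa using hx1 i hi.1 hi.2)
  rw [hroot] at this
  simp only [map_zero, map_mul, map_pow] at this
  exact hx2.ne this

/-- `ψ` is bounded on `s` and uniformly approximable there by fractions with invariant
denominator. -/
def App (s : Set 𝒳) (ψ : 𝒳 → L) : Prop :=
  (∃ B, ∀ x ∈ s, v (ψ x) ≤ B) ∧ ∀ δ : ℝ≥0, 0 < δ → ∃ a b, (∀ g, D.ρ g b = b) ∧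
    ∀ x ∈ s, D.ev x b ≠ 0 ∧ v (ψ x - D.ev x a / D.ev x b) ≤ δ

variable {D} {s : Set 𝒳} {ψ ψ' : 𝒳 → L}

omit [Fintype G] in
lemma App.congr (h : D.App s ψ) (hs : ∀ x ∈ s, ψ' x = ψ x) : D.App s ψ' := by
  obtain ⟨⟨B, hB⟩, h2⟩ := h
  refine ⟨⟨B, fun x hx => by rw [hs x hx]; exact hB x hx⟩, fun δ hδ => ?_⟩
  obtain ⟨a, b, hb, h⟩ := h2 δ hδ
  exact ⟨a, b, hb, fun x hx => by rw [hs x hx]; exact h x hx⟩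

omit [Fintype G] in
lemma app_ev (a : 𝓞) (hs : ∃ R, ∀ x ∈ s, v (D.π x) ≤ R) : D.App s fun x => D.ev x a := by
  obtain ⟨R, hR⟩ := hs
  obtain ⟨B, hB⟩ := D.bdd a R
  refine ⟨⟨B, fun x hx => hB x (hR x hx)⟩, fun δ hδ => ⟨a, 1, fun g => map_one _, fun x _ => ?_⟩⟩
  simp

omit [Fintype G] in
lemma app_zero : D.App s fun _ => 0 :=
  ⟨⟨0, by simp⟩, fun δ _ => ⟨0, 1, fun g => map_one _, fun x _ => by simp⟩⟩

omit [Fintype G] in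
lemma App.sub (h : D.App s ψ) (h' : D.App s ψ') : D.App s fun x => ψ x - ψ' x := by
  obtain ⟨⟨B, hB⟩, h2⟩ := h
  obtain ⟨⟨B', hB'⟩, h2'⟩ := h'
  refine ⟨⟨max B B', fun x hx => Valuation.map_sub_le _ ((hB x hx).trans (le_max_left _ _))
    ((hB' x hx).trans (le_max_right _ _))⟩, fun δ hδ => ?_⟩
  obtain ⟨a, b, hb, h⟩ := h2 δ hδ
  obtain ⟨a', b', hb', h'⟩ := h2' δ hδ
  refine ⟨a * b' - a' * b, b * b', fun g => by rw [map_mul, hb, hb'], fun x hx => ?_⟩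
  obtain ⟨h3, h4⟩ := h x hx
  obtain ⟨h3', h4'⟩ := h' x hx
  refine ⟨by rw [map_mul]; exact mul_ne_zero h3 h3', ?_⟩
  have e : ψ x - ψ' x - D.ev x (a * b' - a' * b) / D.ev x (b * b') =
      (ψ x - D.ev x a / D.ev x b) - (ψ' x - D.ev x a' / D.ev x b') := by
    simp only [map_sub, map_mul]
    field_simp
    ring
  rw [e]
  exact Valuation.map_sub_le _ h4 h4'

omit [Fintype G] in
lemma App.add (h : D.App s ψ) (h' : D.App s ψ') : D.App s fun x => ψ x + ψ' x :=
  (h.sub ((app_zero).sub h')).congr fun x _ => by ring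

omit [Fintype G] in
lemma App.sum {ι : Type*} (T : Finset ι) {ψ : ι → 𝒳 → L} (h : ∀ i ∈ T, D.App s (ψ i)) :
    D.App s fun x => ∑ i ∈ T, ψ i x := by
  classical
  induction T using Finset.induction_on with
  | empty => simpa using app_zero
  | insert a T ha ih =>
    simp only [Finset.sum_insert ha]
    exact (h a (Finset.mem_insert_self _ _)).add (ih fun i hi => h i (Finset.mem_insert_of_mem hi))

omit [Fintype G] in
lemma App.mul (h : D.App s ψ) (h' : D.App s ψ') : D.App s fun x => ψ x * ψ' x := by
  obtain ⟨⟨B, hB⟩, h2⟩ := h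
  obtain ⟨⟨B', hB'⟩, h2'⟩ := h'
  refine ⟨⟨B * B', fun x hx => by rw [map_mul]; exact mul_le_mul' (hB x hx) (hB' x hx)⟩,
    fun δ hδ => ?_⟩
  set M := B + B' + 1 with hM
  have hMpos : 0 < M := by positivity
  set δ' := min 1 (δ / M) with hδ'
  have hδ'pos : 0 < δ' := lt_min one_pos (div_pos hδ hMpos)
  have hδM : δ' * M ≤ δ := by
    calc δ' * M ≤ δ / M * M := by gcongr; exact min_le_right _ _
      _ = δ := div_mul_cancel₀ _ hMpos.ne'
  obtain ⟨a, b, hb, h⟩ := h2 δ' hδ'pos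
  obtain ⟨a', b', hb', h'⟩ := h2' δ' hδ'pos
  refine ⟨a * a', b * b', fun g => by rw [map_mul, hb, hb'], fun x hx => ?_⟩
  obtain ⟨h3, h4⟩ := h x hx
  obtain ⟨h3', h4'⟩ := h' x hx
  refine ⟨by rw [map_mul]; exact mul_ne_zero h3 h3', ?_⟩
  have e : ψ x * ψ' x - D.ev x (a * a') / D.ev x (b * b') =
      (ψ' x - D.ev x a' / D.ev x b') * ψ x +
      (ψ x - D.ev x a / D.ev x b) * (ψ' x - (ψ' x - D.ev x a' / D.ev x b')) := by
    simp only [map_mul]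
    field_simp
    ring
  rw [e]
  refine Valuation.map_add_le _ ?_ ?_ <;> rw [map_mul] <;> refine le_trans ?_ hδM
  · refine mul_le_mul' h4' ((hB x hx).trans ?_)
    rw [hM, add_assoc]; exact le_self_add
  · refine mul_le_mul' h4 (Valuation.map_sub_le _ ((hB' x hx).trans ?_) (h4'.trans ?_))
    · rw [hM, add_comm B, add_assoc]; exact le_self_add
    · exact (min_le_left _ _).trans le_add_self

/-- Sharp cutoffs with respect to the value of a function are approximable: up to scaling, the
fractions `1 / (1 + φ ^ M)` converge to the indicator function of `v φ < 1`. -/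
lemma app_cut (hsurj : ∀ r : ℝ≥0, r ≠ 0 → ∃ y : L, v y = r) (φ : 𝓞) {r η : ℝ≥0} (hr : r ≠ 0)
    (hη : η < 1) (hstable : ∀ g, ∀ x ∈ s, D.act g x ∈ s)
    (hgap : ∀ x ∈ s, v (D.ev x φ) ≤ η * r ∨ r ≤ η * v (D.ev x φ)) :
    D.App s fun x => if v (D.ev x φ) < r then 1 else 0 := by
  classical
  refine ⟨⟨1, fun x _ => by dsimp only; split_ifs <;> simp⟩, fun δ hδ => ?_⟩
  obtain ⟨M, hM⟩ := exists_pow_lt_of_lt_one (show 0 < min δ 1 from lt_min hδ one_pos) hη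
  have hMδ : η ^ M ≤ δ := hM.le.trans (min_le_left _ _)
  have hM1 : η ^ M < 1 := hM.trans_le (min_le_right _ _)
  obtain ⟨c, hc⟩ := hsurj r hr
  have hc0 : c ≠ 0 := by rintro rfl; exact hr (by rw [← hc, map_zero])
  have hrpos : 0 < r := pos_iff_ne_zero.2 hr
  obtain ⟨κ, hκ, hκc⟩ := D.const c
  set β := κ ^ M + φ ^ M with hβ
  have hevβ : ∀ x, D.ev x β = c ^ M + D.ev x φ ^ M := fun x => by
    rw [hβ, map_add, map_pow, map_pow, hκc]
  have hest : ∀ x ∈ s, D.ev x β ≠ 0 ∧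
      v ((if v (D.ev x φ) < r then 1 else 0) - c ^ M / D.ev x β) ≤ δ := by
    intro x hx
    rw [hevβ]
    rcases hgap x hx with h | h
    · have hlt : v (D.ev x φ) < r := h.trans_lt (by
        calc η * r < 1 * r := mul_lt_mul_of_pos_right hη hrpos
          _ = r := one_mul r)
      have h1 : v (D.ev x φ ^ M) ≤ η ^ M * v (c ^ M) := by
        rw [map_pow, map_pow, hc, ← mul_pow]; exact pow_le_pow_left' h M
      have hcM : 0 < v (c ^ M) := pos_iff_ne_zero.2 ((Valuation.ne_zero_iff _).2 (pow_ne_zero _ hc0))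
      have h2 : v (D.ev x φ ^ M) < v (c ^ M) := h1.trans_lt (by
        calc _ < 1 * v (c ^ M) := mul_lt_mul_of_pos_right hM1 hcM
          _ = _ := one_mul _)
      have h3 : v (c ^ M + D.ev x φ ^ M) = v (c ^ M) := Valuation.map_add_eq_of_lt_left _ h2
      have hne : c ^ M + D.ev x φ ^ M ≠ 0 := by
        rw [← Valuation.ne_zero_iff v, h3]; exact hcM.ne'
      refine ⟨hne, ?_⟩
      rw [if_pos hlt]
      have e : 1 - c ^ M / (c ^ M + D.ev x φ ^ M) = D.ev x φ ^ M / (c ^ M + D.ev x φ ^ M) := by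
        field_simp; ring
      rw [e, map_div₀, h3, div_le_iff₀ hcM]
      exact h1.trans (by gcongr)
    · have hpos : 0 < v (D.ev x φ) := by
        rw [pos_iff_ne_zero]; intro h0
        rw [h0, mul_zero] at h
        exact hrpos.not_ge h
      have hnlt : ¬ v (D.ev x φ) < r := by
        rw [not_lt]
        exact h.trans (mul_le_of_le_one_left' hη.le)
      have h1 : v (c ^ M) ≤ η ^ M * v (D.ev x φ ^ M) := by
        rw [map_pow, map_pow, hc, ← mul_pow]; exact pow_le_pow_left' h M
      have hcM : 0 < v (D.ev x φ ^ M) := by rw [map_pow]; exact pow_pos hpos _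
      have h2 : v (c ^ M) < v (D.ev x φ ^ M) := h1.trans_lt (by
        calc _ < 1 * v (D.ev x φ ^ M) := mul_lt_mul_of_pos_right hM1 hcM
          _ = _ := one_mul _)
      have h3 : v (c ^ M + D.ev x φ ^ M) = v (D.ev x φ ^ M) := Valuation.map_add_eq_of_lt_right _ h2
      have hne : c ^ M + D.ev x φ ^ M ≠ 0 := by
        rw [← Valuation.ne_zero_iff v, h3]; exact hcM.ne'
      refine ⟨hne, ?_⟩
      rw [if_neg hnlt, zero_sub, Valuation.map_neg, map_div₀, h3, div_le_iff₀ hcM]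
      exact h1.trans (by gcongr)
  -- the denominator is made invariant by passing to its norm
  refine ⟨κ ^ M * ∏ g ∈ Finset.univ.erase (1 : G), D.ρ g β, ∏ g, D.ρ g β, D.inv_prod β, ?_⟩
  intro x hx
  have hne : ∀ g, D.ev x (D.ρ g β) ≠ 0 := fun g => by
    rw [← D.ev_act]; exact (hest _ (hstable g x hx)).1
  refine ⟨by rw [map_prod]; exact Finset.prod_ne_zero_iff.2 fun g _ => hne g, ?_⟩
  have e : D.ev x (κ ^ M * ∏ g ∈ Finset.univ.erase (1 : G), D.ρ g β) / D.ev x (∏ g, D.ρ g β) =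
      c ^ M / D.ev x β := by
    rw [← Finset.mul_prod_erase _ _ (Finset.mem_univ (1 : G)), map_mul, map_mul, map_pow, hκc,
      map_one, RingHom.one_def, RingHom.id_apply]
    refine mul_div_mul_right _ _ ?_
    rw [map_prod]; exact Finset.prod_ne_zero_iff.2 fun g _ => hne g
  rw [e]
  exact (hest x hx).2

end Cover

/-! ### Partial traces on coverings of the line -/

/-- Trichotomy behind the separation of the finitely many values `σ` of a function on a fibre: `a` is
the value close to `w`. -/
lemma gap_trichotomy {l a w σ : ℝ≥0} (hl : 1 < l) (h1 : a < l * w) (h2 : w < l * a)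
    (h3 : a < σ → a * l ^ 4 ≤ σ) (h4 : σ < a → σ * l ^ 4 ≤ a) :
    (a = σ ∧ σ ≤ l * w ∧ w ≤ l * σ) ∨ (a ≠ σ ∧ l ^ 3 * w ≤ σ) ∨ (a ≠ σ ∧ σ * l ^ 3 ≤ w) := by
  have hl0 : 0 < l := zero_lt_one.trans hl
  rcases lt_trichotomy a σ with h | h | h
  · refine Or.inr (Or.inl ⟨h.ne, ?_⟩)
    calc l ^ 3 * w ≤ l ^ 3 * (l * a) := by gcongr
      _ = a * l ^ 4 := by ring
      _ ≤ σ := h3 h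
  · subst h; exact Or.inl ⟨rfl, h1.le, h2.le⟩
  · refine Or.inr (Or.inr ⟨h.ne', ?_⟩)
    have : l * (σ * l ^ 3) ≤ l * w := by
      calc l * (σ * l ^ 3) = σ * l ^ 4 := by ring
        _ ≤ a := h4 h
        _ ≤ _ := h1.le
    exact le_of_mul_le_mul_left this hl0

/-- The ratios of the distinct nonzero values among finitely many are at least some `l ^ 4 > 1`. -/
lemma exists_gap {ι : Type*} [Finite ι] (val : ι → ℝ≥0) :
    ∃ l : ℝ≥0, 1 < l ∧ ∀ g g', val g < val g' → val g * l ^ 4 ≤ val g' := by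
  have h : ∀ᶠ l in 𝓝[>] (1 : ℝ≥0), ∀ g g', val g < val g' → val g * l ^ 4 ≤ val g' := by
    refine Eventually.filter_mono nhdsWithin_le_nhds ?_
    rw [eventually_all]; intro g
    rw [eventually_all]; intro g'
    by_cases hg : val g < val g'
    · have : Tendsto (fun l : ℝ≥0 => val g * l ^ 4) (𝓝 1) (𝓝 (val g * 1 ^ 4)) :=
        (tendsto_id.pow 4).const_mul _
      rw [one_pow, mul_one] at this
      filter_upwards [this.eventually (eventually_lt_nhds hg)] with l hl _ using hl.le
    · exact Eventually.of_forall fun l h => absurd h hg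
  have : (𝓝[>] (1 : ℝ≥0)).NeBot := nhdsGT_neBot _
  obtain ⟨l, h1, h2⟩ := (h.and self_mem_nhdsWithin).exists
  exact ⟨l, h2, h1⟩

namespace Cover

variable {L : Type*} [Field L] {v : Valuation L ℝ≥0} {G 𝓞 𝒳 : Type*} [Group G] [Fintype G]
  [CommRing 𝓞] (D : Cover v G 𝓞 𝒳)

open Classical in
/-- A clopen decomposition of the tropicalization lifts to a decomposition of the points whose
indicator function is locally (in the base) approximable.  Near the fibre of `x0`, the value of a
suitable monomial `H` in the `f i` decides to which point of this fibre a given point is close. -/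
lemma exists_app_indicator [IsAlgClosed L] (hsurj : ∀ r : ℝ≥0, r ≠ 0 → ∃ y : L, v y = r)
    {n : ℕ} (f : Fin n → 𝓞) (hf : ∀ x i, D.ev x (f i) ≠ 0) (A : Set 𝒳) (U V : Set (Fin n → ℝ≥0))
    (hUo : IsOpen U) (hVo : IsOpen V) (hU : ∀ x ∈ A, (fun i => v (D.ev x (f i))) ∈ U)
    (hV : ∀ x ∉ A, (fun i => v (D.ev x (f i))) ∈ V)
    (hd : ∀ x, (fun i => v (D.ev x (f i))) ∈ U → (fun i => v (D.ev x (f i))) ∉ V) :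
    ∃ Z : Finset L, 0 ∈ Z ∧ ∀ t0, ∃ ε : ℝ≥0, 0 < ε ∧
      D.App {x | D.π x ∈ near v Z t0 ε} fun x => if x ∈ A then 1 else 0 := by
  set T : 𝒳 → Fin n → ℝ≥0 := fun x i => v (D.ev x (f i)) with hT
  change ∀ x ∈ A, T x ∈ U at hU
  change ∀ x ∉ A, T x ∈ V at hV
  change ∀ x, T x ∈ U → T x ∉ V at hd
  obtain ⟨E, hE⟩ := exists_exponents n (Fintype.card G ^ n)
  obtain ⟨Z, hZ0, hZ⟩ := D.exists_adapted
    (Finset.univ.image f ∪ E.image fun e => ∏ i, f i ^ e i)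
  refine ⟨Z, hZ0, fun t0 => ?_⟩
  obtain ⟨x0, rfl⟩ := D.π_surj t0
  set Y : Finset (Fin n → ℝ≥0) :=
    Fintype.piFinset fun i => Finset.univ.image fun g => v (D.ev x0 (D.ρ g (f i))) with hY
  have hYcard : Y.card ≤ Fintype.card G ^ n := by
    rw [hY, Fintype.card_piFinset]
    refine (Finset.prod_le_pow_card _ _ (Fintype.card G) fun i _ => ?_).trans (by simp)
    exact Finset.card_image_le.trans (by simp)
  have hYpos : ∀ y ∈ Y, ∀ i, y i ≠ 0 := by
    intro y hy i
    obtain ⟨g, -, hg⟩ := Finset.mem_image.1 (Fintype.mem_piFinset.1 hy i)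
    rw [← hg, ← D.ev_act, Valuation.ne_zero_iff]
    exact hf _ _
  obtain ⟨e, heE, heinj⟩ := hE Y hYcard hYpos
  set H : 𝓞 := ∏ i, f i ^ e i with hH
  have hvH : ∀ x, v (D.ev x H) = ∏ i, T x i ^ e i := fun x => by simp [hH, hT]
  set val : G → ℝ≥0 := fun g => v (D.ev x0 (D.ρ g H)) with hval
  have hvalT : ∀ g, val g = ∏ i, T (D.act g x0) i ^ e i := fun g => by
    rw [← hvH, D.ev_act]
  have hTY : ∀ g, T (D.act g x0) ∈ Y := fun g => Fintype.mem_piFinset.2 fun i =>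
    Finset.mem_image.2 ⟨g, Finset.mem_univ _, by simp only [hT]; rw [D.ev_act]⟩
  have hval0 : ∀ g, val g ≠ 0 := fun g => by
    rw [hvalT]
    exact Finset.prod_ne_zero_iff.2 fun i _ => pow_ne_zero _ (hYpos _ (hTY g) i)
  obtain ⟨l, hl1, hl⟩ := exists_gap val
  have hl0 : 0 < l := zero_lt_one.trans hl1
  -- Each point `x` near the fibre is close to some point of the fibre, as measured by `H`, which lies in
  -- `A` if and only if `x` does.
  have hmem : {x | ∃ g, val g < l * v (D.ev x H) ∧ v (D.ev x H) < l * val g ∧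
      (x ∈ A ↔ D.act g x0 ∈ A)} ∈ D.F Z (D.π x0) := by
    rw [mem_iff_ultrafilter]
    intro 𝒰 h𝒰
    have hi : ∀ i, ∃ g, Tendsto (fun x => T x i) 𝒰 (𝓝 (v (D.ev x0 (D.ρ g (f i))))) := fun i =>
      D.newton hZ0 (hZ _ (Finset.mem_union_left _ (Finset.mem_image_of_mem _ (Finset.mem_univ i))))
        𝒰 h𝒰
    choose γ hγ using hi
    set τ : Fin n → ℝ≥0 := fun i => v (D.ev x0 (D.ρ (γ i) (f i))) with hτ
    have hTτ : Tendsto T 𝒰 (𝓝 τ) := tendsto_pi_nhds.2 hγ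
    have hτY : τ ∈ Y := Fintype.mem_piFinset.2 fun i =>
      Finset.mem_image.2 ⟨γ i, Finset.mem_univ _, rfl⟩
    obtain ⟨g, hg⟩ := D.newton hZ0
      (hZ H (Finset.mem_union_right _ (Finset.mem_image_of_mem _ heE))) 𝒰 h𝒰
    have hlim : Tendsto (fun x => v (D.ev x H)) 𝒰 (𝓝 (∏ i, τ i ^ e i)) := by
      simp only [hvH]
      exact tendsto_finsetProd _ fun i _ => (hγ i).pow _
    have heq : τ = T (D.act g x0) :=
      heinj _ hτY _ (hTY g) (by rw [← hvalT]; exact tendsto_nhds_unique hlim hg)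
    have hgpos : 0 < val g := pos_iff_ne_zero.2 (hval0 g)
    have hlt : val g < l * val g := lt_mul_of_one_lt_left hgpos hl1
    have e1 : ∀ᶠ x in (𝒰 : Filter 𝒳), val g < l * v (D.ev x H) :=
      (hg.const_mul l).eventually (eventually_gt_nhds hlt)
    have e2 : ∀ᶠ x in (𝒰 : Filter 𝒳), v (D.ev x H) < l * val g :=
      hg.eventually (eventually_lt_nhds hlt)
    have e3 : ∀ᶠ x in (𝒰 : Filter 𝒳), (x ∈ A ↔ D.act g x0 ∈ A) := by
      rw [heq] at hTτ
      by_cases hA : D.act g x0 ∈ A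
      · filter_upwards [hTτ.eventually (hUo.mem_nhds (hU _ hA))] with x hx
        refine iff_of_true (by_contra fun hxA => hd x hx (hV x hxA)) hA
      · filter_upwards [hTτ.eventually (hVo.mem_nhds (hV _ hA))] with x hx
        exact iff_of_false (fun hxA => hd x (hU x hxA) hx) hA
    change ∀ᶠ x in (𝒰 : Filter 𝒳), ∃ g, val g < l * v (D.ev x H) ∧ v (D.ev x H) < l * val g ∧
      (x ∈ A ↔ D.act g x0 ∈ A)
    filter_upwards [e1, e2, e3] with x h1 h2 h3 using ⟨g, h1, h2, h3⟩
  obtain ⟨ε, hε, hs⟩ := D.exists_near_of_mem hmem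
  set s := {x | D.π x ∈ near v Z (D.π x0) ε} with hsdef
  refine ⟨ε, hε, ?_⟩
  have hstable : ∀ g, ∀ x ∈ s, D.act g x ∈ s := fun g x hx => by
    simpa only [hsdef, Set.mem_ofPred_eq, D.π_act] using hx
  have htri : ∀ x ∈ s, ∃ g, (x ∈ A ↔ D.act g x0 ∈ A) ∧ ∀ g',
      (val g = val g' ∧ val g' ≤ l * v (D.ev x H) ∧ v (D.ev x H) ≤ l * val g') ∨
      (val g ≠ val g' ∧ l ^ 3 * v (D.ev x H) ≤ val g') ∨
      (val g ≠ val g' ∧ val g' * l ^ 3 ≤ v (D.ev x H)) := by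
    intro x hx
    obtain ⟨g, h1, h2, h3⟩ := hs x hx
    exact ⟨g, h3, fun g' => gap_trichotomy hl1 h1 h2 (hl g g') (hl g' g)⟩
  have hη : l⁻¹ < 1 := inv_lt_one_of_one_lt₀ hl1
  have hll : l⁻¹ * l = 1 := inv_mul_cancel₀ hl0.ne'
  have hcut1 : ∀ g', D.App s fun x => if v (D.ev x H) < l ^ 2 * val g' then 1 else 0 := by
    intro g'
    refine app_cut hsurj H (mul_ne_zero (pow_ne_zero _ hl0.ne') (hval0 g')) hη hstable fun x hx => ?_
    have e : l⁻¹ * (l ^ 2 * val g') = l * val g' := by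
      calc _ = (l⁻¹ * l) * (l * val g') := by ring
        _ = _ := by rw [hll, one_mul]
    rw [e]
    obtain ⟨g, -, hg⟩ := htri x hx
    rcases hg g' with ⟨-, -, h⟩ | ⟨-, h⟩ | ⟨-, h⟩
    · exact Or.inl h
    · left
      calc v (D.ev x H) ≤ l ^ 3 * v (D.ev x H) := le_mul_of_one_le_left' (one_le_pow_of_one_le' hl1.le 3)
        _ ≤ val g' := h
        _ ≤ _ := le_mul_of_one_le_left' hl1.le
    · right
      calc l ^ 2 * val g' = (l⁻¹ * l) * (l ^ 2 * val g') := by rw [hll, one_mul]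
        _ = l⁻¹ * (val g' * l ^ 3) := by ring
        _ ≤ _ := by gcongr
  have hcut2 : ∀ g', D.App s fun x => if v (D.ev x H) < l⁻¹ ^ 2 * val g' then 1 else 0 := by
    intro g'
    refine app_cut hsurj H (mul_ne_zero (pow_ne_zero _ (inv_ne_zero hl0.ne')) (hval0 g')) hη hstable
      fun x hx => ?_
    obtain ⟨g, -, hg⟩ := htri x hx
    have key : val g' ≤ l * v (D.ev x H) →
        l⁻¹ ^ 2 * val g' ≤ l⁻¹ * v (D.ev x H) := fun h => by
      calc l⁻¹ ^ 2 * val g' ≤ l⁻¹ ^ 2 * (l * v (D.ev x H)) := by gcongr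
        _ = (l⁻¹ * l) * (l⁻¹ * v (D.ev x H)) := by ring
        _ = _ := by rw [hll, one_mul]
    rcases hg g' with ⟨-, h, -⟩ | ⟨-, h⟩ | ⟨-, h⟩
    · exact Or.inr (key h)
    · left
      calc v (D.ev x H) = (l⁻¹ * l) ^ 3 * v (D.ev x H) := by rw [hll, one_pow, one_mul]
        _ = l⁻¹ * (l⁻¹ ^ 2 * (l ^ 3 * v (D.ev x H))) := by ring
        _ ≤ _ := by gcongr
    · refine Or.inr (key ?_)
      calc val g' ≤ val g' * l ^ 3 := le_mul_of_one_le_right' (one_le_pow_of_one_le' hl1.le 3)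
        _ ≤ _ := h
        _ ≤ _ := le_mul_of_one_le_left' hl1.le
  -- representatives of the values attained on the part of the fibre inside `A`
  set S : Finset ℝ≥0 := (Finset.univ.filter fun g => D.act g x0 ∈ A).image val with hS
  have happ : D.App s fun x => ∑ σ ∈ S, ((if v (D.ev x H) < l ^ 2 * σ then (1 : L) else 0) -
      if v (D.ev x H) < l⁻¹ ^ 2 * σ then 1 else 0) := by
    refine App.sum _ fun σ hσ => ?_
    obtain ⟨g', -, rfl⟩ := Finset.mem_image.1 hσ
    exact (hcut1 g').sub (hcut2 g')
  refine happ.congr fun x hx => ?_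
  obtain ⟨g, hgA, hg⟩ := htri x hx
  have hw : ∀ g', 0 < val g' := fun g' => pos_iff_ne_zero.2 (hval0 g')
  have hterm : ∀ σ ∈ S, ((if v (D.ev x H) < l ^ 2 * σ then (1 : L) else 0) -
      if v (D.ev x H) < l⁻¹ ^ 2 * σ then 1 else 0) = if val g = σ then 1 else 0 := by
    intro σ hσ
    obtain ⟨g', -, rfl⟩ := Finset.mem_image.1 hσ
    have hi1 : l⁻¹ ^ 2 * val g' ≤ l ^ 2 * val g' := by
      gcongr; exact hη.le.trans hl1.le
    rcases hg g' with ⟨h0, h1, h2⟩ | ⟨h0, h⟩ | ⟨h0, h⟩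
    · rw [if_pos h0, if_pos, if_neg, sub_zero]
      · rw [not_lt]
        calc l⁻¹ ^ 2 * val g' ≤ l⁻¹ ^ 2 * (l * v (D.ev x H)) := by gcongr
          _ = l⁻¹ * l * (l⁻¹ * v (D.ev x H)) := by ring
          _ = l⁻¹ * v (D.ev x H) := by rw [hll, one_mul]
          _ ≤ _ := mul_le_of_le_one_left' hη.le
      · calc v (D.ev x H) ≤ l * val g' := h2
          _ < l * (l * val g') := lt_mul_of_one_lt_left (mul_pos hl0 (hw g')) hl1
          _ = _ := by ring
    · have h3 : v (D.ev x H) < l⁻¹ ^ 2 * val g' := by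
        calc v (D.ev x H) = (l⁻¹ * l) ^ 3 * v (D.ev x H) := by rw [hll, one_pow, one_mul]
          _ = l⁻¹ * (l⁻¹ ^ 2 * (l ^ 3 * v (D.ev x H))) := by ring
          _ ≤ l⁻¹ * (l⁻¹ ^ 2 * val g') := by gcongr
          _ < _ := mul_lt_of_lt_one_left (mul_pos (pow_pos (inv_pos.2 hl0) 2) (hw g')) hη
      rw [if_neg h0, if_pos h3, if_pos (h3.trans_le hi1), sub_self]
    · have h3 : l ^ 2 * val g' ≤ v (D.ev x H) := by
        refine le_trans ?_ h
        rw [mul_comm (val g')]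
        gcongr
        · exact hl1.le
        · norm_num
      rw [if_neg h0, if_neg (not_lt.2 h3), if_neg (not_lt.2 (hi1.trans h3)), sub_self]
  rw [Finset.sum_congr rfl hterm, Finset.sum_ite_eq]
  congr 1
  rw [hgA, eq_iff_iff]
  constructor
  · exact fun h => Finset.mem_image_of_mem _ (by simpa using h)
  · intro h
    obtain ⟨g', hg', hgg⟩ := Finset.mem_image.1 h
    have hA' : D.act g' x0 ∈ A := by simpa using hg'
    have : T (D.act g' x0) = T (D.act g x0) :=
      heinj _ (hTY g') _ (hTY g) (by rw [← hvalT, ← hvalT, hgg])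
    by_contra hA
    exact hd _ (hU _ hA') (this ▸ hV _ hA)

/-- Like `App`, with invariant numerators. -/
def AppInv (s : Set 𝒳) (ψ : 𝒳 → L) : Prop :=
  (∃ B, ∀ x ∈ s, v (ψ x) ≤ B) ∧ ∀ δ : ℝ≥0, 0 < δ → ∃ a b, (∀ g, D.ρ g a = a) ∧ (∀ g, D.ρ g b = b) ∧
    ∀ x ∈ s, D.ev x b ≠ 0 ∧ v (ψ x - D.ev x a / D.ev x b) ≤ δ

variable {D} {s : Set 𝒳} {ψ : 𝒳 → L}

lemma App.sum_orbit (h : D.App s ψ) (hst : ∀ g, ∀ x ∈ s, D.act g x ∈ s) :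
    D.AppInv s fun x => ∑ g, ψ (D.act g x) := by
  obtain ⟨⟨B, hB⟩, h2⟩ := h
  refine ⟨⟨B, fun x hx => Valuation.map_sum_le _ fun g _ => hB _ (hst g x hx)⟩, fun δ hδ => ?_⟩
  obtain ⟨a, b, hb, h⟩ := h2 δ hδ
  refine ⟨∑ g, D.ρ g a, b, D.inv_sum a, hb, fun x hx => ⟨(h x hx).1, ?_⟩⟩
  rw [map_sum, Finset.sum_div, ← Finset.sum_sub_distrib]
  refine Valuation.map_sum_le _ fun g _ => ?_
  have := (h _ (hst g x hx)).2
  rwa [D.ev_act, D.ev_act, hb] at this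

lemma App.prod_orbit (h : D.App s ψ) (hst : ∀ g, ∀ x ∈ s, D.act g x ∈ s) :
    D.AppInv s fun x => ∏ g, ψ (D.act g x) := by
  obtain ⟨⟨B₀, hB₀⟩, h2⟩ := h
  set B := max 1 B₀ with hBdef
  have hB1 : 1 ≤ B := le_max_left _ _
  have hB : ∀ x ∈ s, v (ψ x) ≤ B := fun x hx => (hB₀ x hx).trans (le_max_right _ _)
  refine ⟨⟨B ^ Fintype.card G, fun x hx => ?_⟩, fun δ hδ => ?_⟩
  · rw [map_prod]
    exact Finset.prod_le_pow_card _ _ _ fun g _ => hB _ (hst g x hx)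
  have hBN : 0 < B ^ Fintype.card G := pow_pos (zero_lt_one.trans_le hB1) _
  obtain ⟨a, b, hb, h⟩ := h2 (min 1 (δ / B ^ Fintype.card G)) (lt_min one_pos (div_pos hδ hBN))
  refine ⟨∏ g, D.ρ g a, b ^ Fintype.card G, D.inv_prod a, fun g => by rw [map_pow, hb],
    fun x hx => ⟨by rw [map_pow]; exact pow_ne_zero _ (h x hx).1, ?_⟩⟩
  have e : D.ev x (∏ g, D.ρ g a) / D.ev x (b ^ Fintype.card G) =
      ∏ g, D.ev x (D.ρ g a) / D.ev x b := by
    rw [Finset.prod_div_distrib, map_prod, map_pow, Finset.prod_const, Finset.card_univ]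
  rw [e]
  have h3 : ∀ g, v (ψ (D.act g x) - D.ev x (D.ρ g a) / D.ev x b) ≤
      min 1 (δ / B ^ Fintype.card G) := fun g => by
    have := (h _ (hst g x hx)).2
    rwa [D.ev_act, D.ev_act, hb] at this
  refine (prod_close Finset.univ _ _ hB1 (fun g _ => hB _ (hst g x hx)) (fun g _ => ?_)
    (fun g _ => (h3 g).trans (min_le_right _ _))).trans ?_
  · have : D.ev x (D.ρ g a) / D.ev x b =
      ψ (D.act g x) - (ψ (D.act g x) - D.ev x (D.ρ g a) / D.ev x b) := by ring
    rw [this]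
    exact Valuation.map_sub_le _ (hB _ (hst g x hx)) ((h3 g).trans ((min_le_left _ _).trans hB1))
  · rw [Finset.card_univ, div_mul_cancel₀ _ hBN.ne']

omit [Fintype G] in
/-- A function on the line whose pullback is the `q`-th power of an approximable invariant function is
rationally approximable. -/
lemma AppInv.ra {W : Set L} (h : D.AppInv {x | D.π x ∈ W} ψ) {u : L → L}
    (hu : ∀ x, u (D.π x) = ψ x ^ D.q) : RA v u W := by
  obtain ⟨⟨B₀, hB₀⟩, h2⟩ := h
  set B := max 1 B₀ with hBdef
  have hB1 : 1 ≤ B := le_max_left _ _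
  have hB : ∀ x, D.π x ∈ W → v (ψ x) ≤ B := fun x hx => (hB₀ x hx).trans (le_max_right _ _)
  intro δ hδ
  have hBN : 0 < B ^ D.q := pow_pos (zero_lt_one.trans_le hB1) _
  obtain ⟨a, b, ha, hb, h⟩ := h2 (min 1 (δ / B ^ D.q)) (lt_min one_pos (div_pos hδ hBN))
  obtain ⟨P, hP⟩ := D.inv a ha
  obtain ⟨Q, hQ⟩ := D.inv b hb
  refine ⟨P, Q, fun t ht => ?_⟩
  obtain ⟨x, rfl⟩ := D.π_surj t
  obtain ⟨h3, h4⟩ := h x ht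
  rw [← hP, ← hQ, hu]
  refine ⟨pow_ne_zero _ h3, ?_⟩
  rw [← div_pow]
  have := prod_close (v := v) (Finset.range D.q) (fun _ => ψ x) (fun _ => D.ev x a / D.ev x b) hB1
    (fun _ _ => hB x ht) (fun _ _ => ?_) (fun _ _ => h4.trans (min_le_right _ _))
  · rwa [Finset.prod_const, Finset.prod_const, Finset.card_range, div_mul_cancel₀ _ hBN.ne'] at this
  · have : D.ev x a / D.ev x b = ψ x - (ψ x - D.ev x a / D.ev x b) := by ring
    rw [this]
    exact Valuation.map_sub_le _ (hB x ht) (h4.trans ((min_le_left _ _).trans hB1))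

variable (D)

open Classical in
/-- The trace of `h` over the part of a fibre inside `A`, and the indicator of the fibres contained
in `A`, are polynomials in the coordinate of the base (after raising to the power `q`). -/
theorem exists_polynomial [IsAlgClosed L] (hsurj : ∀ r : ℝ≥0, r ≠ 0 → ∃ y : L, v y = r)
    {n : ℕ} (f : Fin n → 𝓞) (hf : ∀ x i, D.ev x (f i) ≠ 0) (A : Set 𝒳) (U V : Set (Fin n → ℝ≥0))
    (hUo : IsOpen U) (hVo : IsOpen V) (hU : ∀ x ∈ A, (fun i => v (D.ev x (f i))) ∈ U)
    (hV : ∀ x ∉ A, (fun i => v (D.ev x (f i))) ∈ V)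
    (hd : ∀ x, (fun i => v (D.ev x (f i))) ∈ U → (fun i => v (D.ev x (f i))) ∉ V) :
    (∀ (h : 𝓞) (u : L → L) (B : ℝ≥0) (N : ℕ),
      (∀ x, u (D.π x) = (∑ g, if D.act g x ∈ A then D.ev x (D.ρ g h) else 0) ^ D.q) →
      (∀ t, v (u t) ≤ B * max 1 (v t) ^ N) → ∃ p : L[X], p.natDegree ≤ N ∧ ∀ t, u t = p.eval t) ∧
    (∀ (u : L → L),
      (∀ x, u (D.π x) = (∏ g, if D.act g x ∈ A then 1 else 0) ^ D.q) →
      ∃ p : L[X], p.natDegree ≤ 0 ∧ ∀ t, u t = p.eval t) := by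
  obtain ⟨Z, hZ0, hZ⟩ := D.exists_app_indicator hsurj f hf A U V hUo hVo hU hV hd
  have hst : ∀ t0 ε, ∀ g, ∀ x ∈ {x | D.π x ∈ near v Z t0 ε}, D.act g x ∈
      {x | D.π x ∈ near v Z t0 ε} := fun t0 ε g x hx => by
    simpa only [Set.mem_ofPred_eq, D.π_act] using hx
  have hdisc : ∀ u : L → L, (∀ t0, ∃ ε : ℝ≥0, 0 < ε ∧ RA v u (near v Z t0 ε)) →
      ∀ R, RA v u {t | v t ≤ R} := by
    intro u hu R
    simpa using RA.disc hsurj Z hu R 0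
  constructor
  · intro h u B N hu hB
    refine liouville hsurj (hdisc u fun t0 => ?_) B N hB
    obtain ⟨ε, hε, happ⟩ := hZ t0
    refine ⟨ε, hε, ?_⟩
    have hbd : ∃ R, ∀ x ∈ {x | D.π x ∈ near v Z t0 ε}, v (D.π x) ≤ R :=
      ⟨v t0 + ε, fun x hx => by simpa using (hx 0 hZ0).1.le⟩
    refine ((happ.mul (app_ev h hbd)).sum_orbit (hst t0 ε)).ra fun x => ?_
    rw [hu]
    congr 1
    refine Finset.sum_congr rfl fun g _ => ?_
    rw [D.ev_act, ite_mul, one_mul, zero_mul]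
  · intro u hu
    refine liouville hsurj (hdisc u fun t0 => ?_) 1 0 ?_
    · obtain ⟨ε, hε, happ⟩ := hZ t0
      exact ⟨ε, hε, (happ.prod_orbit (hst t0 ε)).ra hu⟩
    · intro t
      obtain ⟨x, rfl⟩ := D.π_surj t
      rw [hu, map_pow, map_prod, pow_zero, mul_one]
      refine pow_le_one' (Finset.prod_le_one' fun g _ => ?_) _
      split_ifs <;> simp

end Cover

/-! ### Normal coverings of affine space -/

/-- A `K`-algebra `S` with a faithful action `α` of a group `G` whose invariants become polynomials
in the invariant elements `t` after raising to the power `p ^ e` (where `p` is meant to be the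
characteristic exponent); every point of the affine space with coordinates `t` lifts to a point of `S`. -/
structure Galois (K L S G : Type*) [Field K] [Field L] [Algebra K L] [CommRing S] [Algebra K S]
    [Group G] (p d : ℕ) where
  α : G →* (S →ₐ[K] S)
  faithful : Function.Injective α
  t : Fin d → S
  α_t : ∀ g j, α g (t j) = t j
  e : ℕ
  inv : ∀ b, (∀ g, α g b = b) → ∃ P : MvPolynomial (Fin d) K, b ^ p ^ e = MvPolynomial.aeval t P
  surj : ∀ τ : Fin d → L, ∃ x : S →ₐ[K] L, ∀ j, x (t j) = τ j

namespace Galois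

variable {K L S G : Type*} [Field K] [Field L] [Algebra K L] [CommRing S] [Algebra K S]
    [Group G] {p d : ℕ} (D : Galois K L S G p d)

lemma α_mul (g h : G) (b : S) : D.α (g * h) b = D.α g (D.α h b) := by
  rw [map_mul]; rfl

lemma α_one (b : S) : D.α 1 b = b := by
  rw [map_one]; rfl

/-- Evaluation at `x`, extended to polynomials over `S` with one variable for each constant in `L`,
which evaluates to this constant. -/
noncomputable def ev (x : S →ₐ[K] L) : MvPolynomial L S →+* L :=
  MvPolynomial.eval₂Hom (x : S →+* L) id

/-- The action of `G` on the coefficients. -/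
noncomputable def ρ : G →* (MvPolynomial L S →+* MvPolynomial L S) where
  toFun g := MvPolynomial.map (D.α g : S →+* S)
  map_one' := by
    ext <;> simp
  map_mul' g h := by
    ext <;> simp [RingHom.mul_def]

lemma ev_C (x : S →ₐ[K] L) (s : S) : ev x (MvPolynomial.C s) = x s := by simp [ev]

lemma ev_X (x : S →ₐ[K] L) (c : L) : ev x (MvPolynomial.X c) = c := by simp [ev]

lemma ρ_C (g : G) (s : S) : D.ρ g (MvPolynomial.C s) = MvPolynomial.C (D.α g s) := by simp [ρ]

lemma ρ_X (g : G) (c : L) : D.ρ g (MvPolynomial.X c) = MvPolynomial.X c := by simp [ρ]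

lemma ev_comp (x : S →ₐ[K] L) (g : G) (b : MvPolynomial L S) :
    ev (x.comp (D.α g)) b = ev x (D.ρ g b) := by
  have : ev (x.comp (D.α g)) = (ev x).comp (D.ρ g) := by
    ext <;> simp [ev_C, ev_X, ρ_C, ρ_X]
  rw [this]; rfl

lemma comp_t (x : S →ₐ[K] L) (g : G) : (x.comp (D.α g)) ∘ D.t = x ∘ D.t := by
  ext j; simp [D.α_t]

lemma x_aeval (x : S →ₐ[K] L) (P : MvPolynomial (Fin d) K) :
    x (MvPolynomial.aeval D.t P) = MvPolynomial.aeval (x ∘ D.t) P := by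
  rw [← AlgHom.comp_apply, MvPolynomial.comp_aeval]; rfl

/-- Invariants of the extended ring are, up to `p`-powers, polynomial functions on affine space. -/
lemma ev_inv [ExpChar L p] (b : MvPolynomial L S) (hb : ∀ g, D.ρ g b = b) :
    ∃ P : MvPolynomial (Fin d) L, ∀ x : S →ₐ[K] L,
      ev x b ^ p ^ D.e = MvPolynomial.eval (x ∘ D.t) P := by
  have hc : ∀ m, ∃ P : MvPolynomial (Fin d) K, b.coeff m ^ p ^ D.e = MvPolynomial.aeval D.t P := by
    intro m
    refine D.inv _ fun g => ?_
    conv_rhs => rw [← hb g]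
    simp [ρ, MvPolynomial.coeff_map]
  choose P hP using hc
  refine ⟨∑ m ∈ b.support, MvPolynomial.map (algebraMap K L) (P m) *
    MvPolynomial.C ((∏ c ∈ m.support, c ^ m c) ^ p ^ D.e), fun x => ?_⟩
  have h1 : ev x b = ∑ m ∈ b.support, x (b.coeff m) * ∏ c ∈ m.support, c ^ m c := by
    simp only [ev, MvPolynomial.coe_eval₂Hom, MvPolynomial.eval₂_eq]
    rfl
  rw [h1, ← iterateFrobenius_def, map_sum, map_sum]
  refine Finset.sum_congr rfl fun m _ => ?_
  rw [iterateFrobenius_def, mul_pow, ← map_pow, hP, x_aeval, map_mul, MvPolynomial.eval_C,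
    MvPolynomial.eval_map, MvPolynomial.aeval_def]

variable [Fintype G]

/-- `G` acts transitively on the points of `S` above a given point of the affine space. -/
lemma transitive [ExpChar L p] (x y : S →ₐ[K] L) (h : x ∘ D.t = y ∘ D.t) :
    ∃ g, y = x.comp (D.α g) := by
  classical
  have hsub : ((RingHom.ker (ev y) : Ideal (MvPolynomial L S)) : Set (MvPolynomial L S)) ⊆
      ⋃ g ∈ ((Finset.univ : Finset G) : Set G), RingHom.ker (ev (x.comp (D.α g))) := by
    intro b hb
    have hb0 : ev y b = 0 := hb
    have hinv : ∀ g, D.ρ g (∏ h, D.ρ h b) = ∏ h, D.ρ h b := by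
      intro g
      rw [map_prod]
      refine Fintype.prod_equiv (Equiv.mulLeft g) _ _ fun h => ?_
      rw [Equiv.coe_mulLeft, map_mul]; rfl
    obtain ⟨P, hP⟩ := D.ev_inv _ hinv
    have h1 : ev y (∏ h, D.ρ h b) = 0 := by
      rw [map_prod]
      refine Finset.prod_eq_zero (Finset.mem_univ 1) ?_
      rw [map_one]; exact hb0
    have hq : p ^ D.e ≠ 0 := pow_ne_zero _ (expChar_pos L p).ne'
    have h2 : ev x (∏ h, D.ρ h b) = 0 := by
      refine eq_zero_of_pow_eq_zero (n := p ^ D.e) ?_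
      rw [hP, h, ← hP, h1, zero_pow hq]
    rw [map_prod, Finset.prod_eq_zero_iff] at h2
    obtain ⟨g, -, hg⟩ := h2
    simp only [Finset.coe_univ, Set.mem_univ, Set.iUnion_true, Set.mem_iUnion]
    refine ⟨g, ?_⟩
    change ev (x.comp (D.α g)) b = 0
    rw [D.ev_comp]; exact hg
  rw [Ideal.subset_union_prime 1 1 (fun g _ _ _ => RingHom.ker_isPrime _)] at hsub
  obtain ⟨g, -, hg⟩ := hsub
  refine ⟨g, AlgHom.ext fun s => ?_⟩
  have hm : MvPolynomial.C s - MvPolynomial.X (y s) ∈ RingHom.ker (ev y) := by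
    rw [RingHom.mem_ker, map_sub, ev_C, ev_X, sub_self]
  have := hg hm
  rw [RingHom.mem_ker, map_sub, ev_C, ev_X, sub_eq_zero] at this
  exact this.symm

/-- Functions of polynomial growth in the coordinates. -/
def Growth (v : Valuation L ℝ≥0) (φ : (S →ₐ[K] L) → L) (Λ : ℝ≥0) (N : ℕ) : Prop :=
  ∀ x, v (φ x) ≤ Λ * (∏ j, max 1 (v (x (D.t j)))) ^ N

variable {v : Valuation L ℝ≥0}

omit [Fintype G] in
lemma one_le_M (x : S →ₐ[K] L) : 1 ≤ ∏ j, max 1 (v (x (D.t j))) :=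
  Finset.one_le_prod' fun _ _ => le_max_left _ _

omit [Fintype G] in
lemma Growth.mono {φ : (S →ₐ[K] L) → L} {Λ Λ' : ℝ≥0} {N N' : ℕ} (h : D.Growth v φ Λ N)
    (h1 : Λ ≤ Λ') (h2 : N ≤ N') : D.Growth v φ Λ' N' := fun x =>
  (h x).trans (mul_le_mul' h1 (pow_le_pow_right₀ (D.one_le_M x) h2))

omit [Fintype G] in
lemma growth_aeval (P : MvPolynomial (Fin d) K) :
    ∃ Λ N, D.Growth v (fun x => MvPolynomial.aeval (x ∘ D.t) P) Λ N := by
  induction P using MvPolynomial.induction_on with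
  | C a => exact ⟨v (algebraMap K L a), 0, fun x => by simp⟩
  | add P Q hP hQ =>
    obtain ⟨Λ, N, h⟩ := hP
    obtain ⟨Λ', N', h'⟩ := hQ
    refine ⟨max Λ Λ', max N N', fun x => ?_⟩
    dsimp only
    rw [map_add]
    exact Valuation.map_add_le _ (h.mono D (le_max_left _ _) (le_max_left _ _) x)
      (h'.mono D (le_max_right _ _) (le_max_right _ _) x)
  | mul_X P j hP =>
    obtain ⟨Λ, N, h⟩ := hP
    refine ⟨Λ, N + 1, fun x => ?_⟩
    dsimp only
    rw [map_mul, map_mul, MvPolynomial.aeval_X, pow_succ, ← mul_assoc]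
    refine mul_le_mul' (h x) ?_
    exact (le_max_right 1 _).trans (Finset.single_le_prod' (f := fun j => max 1 (v (x (D.t j))))
      (fun _ _ => le_max_left _ _) (Finset.mem_univ j))

/-- The characteristic polynomial of `h`. -/
noncomputable def chp (h : S) : S[X] := ∏ g, (X - C (D.α g h))

lemma chp_inv (h : S) (j : ℕ) (g : G) : D.α g ((D.chp h).coeff j) = (D.chp h).coeff j := by
  change (D.α g : S →+* S) _ = _
  rw [← coeff_map]
  congr 1
  rw [chp, Polynomial.map_prod]
  refine Fintype.prod_equiv (Equiv.mulLeft g) _ _ fun g' => ?_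
  simp

lemma chp_monic (h : S) : (D.chp h).Monic := monic_prod_of_monic _ _ fun _ _ => monic_X_sub_C _

lemma chp_eval (h : S) : (D.chp h).eval h = 0 := by
  rw [chp, eval_prod]
  refine Finset.prod_eq_zero (Finset.mem_univ 1) ?_
  simp

/-- Roots of a monic polynomial are bounded by its coefficients. -/
lemma root_bound {P : L[X]} (hP : P.Monic) {z : L} (hz : P.eval z = 0) {B : ℝ≥0} (hB : 1 ≤ B)
    (h : ∀ i, v (P.coeff i) ≤ B) : v z ≤ B := by
  by_contra! hlt
  have hz1 : 1 < v z := hB.trans_lt hlt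
  rw [eval_eq_sum_range, Finset.sum_range_succ, hP.coeff_natDegree, one_mul] at hz
  have h1 : v (∑ i ∈ Finset.range P.natDegree, P.coeff i * z ^ i) < v (z ^ P.natDegree) := by
    refine Valuation.map_sum_lt' _ (by rw [map_pow]; exact pow_pos (zero_lt_one.trans hz1) _) ?_
    intro i hi
    rw [map_mul, map_pow, map_pow]
    calc v (P.coeff i) * v z ^ i ≤ B * v z ^ i := by gcongr; exact h i
      _ < v z * v z ^ i := mul_lt_mul_of_pos_right hlt (pow_pos (zero_lt_one.trans hz1) _)
      _ = v z ^ (i + 1) := by rw [pow_succ, mul_comm]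
      _ ≤ _ := pow_le_pow_right₀ hz1.le (Finset.mem_range.1 hi)
  have h2 := Valuation.map_add_eq_of_lt_left v h1
  rw [add_comm] at hz
  rw [hz, map_zero] at h2
  rw [← h2] at h1
  exact not_lt_zero h1

/-- Elements of `S` have polynomial growth, as they are roots of their characteristic polynomials. -/
lemma growth_ev [ExpChar L p] (h : S) : ∃ Λ N, D.Growth v (fun x => x h) Λ N := by
  have hq : p ^ D.e ≠ 0 := pow_ne_zero _ (expChar_pos L p).ne'
  have hc : ∀ i, ∃ Λ N, D.Growth v (fun x => x ((D.chp h).coeff i)) Λ N := by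
    intro i
    obtain ⟨P, hP⟩ := D.inv _ fun g => D.chp_inv h i g
    obtain ⟨Λ, N, hΛ⟩ := D.growth_aeval (v := v) P
    refine ⟨max 1 Λ, N, fun x => ?_⟩
    have h1 : (1 : ℝ≥0) ≤ max 1 Λ * (∏ j, max 1 (v (x (D.t j)))) ^ N :=
      one_le_mul (le_max_left _ _) (one_le_pow_of_one_le' (D.one_le_M x) _)
    have h2 : v (x ((D.chp h).coeff i)) ^ p ^ D.e ≤
        max 1 Λ * (∏ j, max 1 (v (x (D.t j)))) ^ N := by
      rw [← map_pow, ← map_pow, hP, x_aeval]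
      exact hΛ.mono D (le_max_right _ _) le_rfl x
    by_contra! hlt
    exact absurd (hlt.trans_le (le_self_pow (h1.trans hlt.le) hq)) (not_lt.2 h2)
  choose Λ N hΛ using hc
  set n := (D.chp h).natDegree with hn
  refine ⟨1 + ∑ i ∈ Finset.range (n + 1), Λ i, ∑ i ∈ Finset.range (n + 1), N i, fun x => ?_⟩
  refine root_bound (P := (D.chp h).map (x : S →+* L)) ((D.chp_monic h).map _) ?_ ?_ ?_
  · have := D.chp_eval h
    change eval ((x : S →+* L) h) _ = 0
    rw [eval_map_apply, this, map_zero]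
  · exact one_le_mul le_self_add (one_le_pow_of_one_le' (D.one_le_M x) _)
  · intro i
    rw [coeff_map]
    by_cases hi : i ∈ Finset.range (n + 1)
    · refine (hΛ i).mono D ?_ ?_ x
      · exact (Finset.single_le_sum (f := Λ) (fun _ _ => zero_le) hi).trans le_add_self
      · exact Finset.single_le_sum (f := N) (fun _ _ => Nat.zero_le _) hi
    · rw [coeff_eq_zero_of_natDegree_lt (by simpa using hi)]
      simp

/-- The restriction of the covering to a line parallel to the `k`-th coordinate axis. -/
noncomputable def line [ExpChar L p] (v : Valuation L ℝ≥0) (k : Fin d) (c : Fin d → L) :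
    Cover v G (MvPolynomial L S) {x : S →ₐ[K] L // ∀ j, j ≠ k → x (D.t j) = c j} where
  ρ := D.ρ
  ev x := ev x.1
  act g x := ⟨x.1.comp (D.α g), fun j hj => by simpa [D.α_t] using x.2 j hj⟩
  π x := x.1 (D.t k)
  q := p ^ D.e
  q_ne := pow_ne_zero _ (expChar_pos L p).ne'
  ev_act g x b := D.ev_comp x.1 g b
  π_act g x := by simp [D.α_t]
  π_surj s := by
    obtain ⟨x, hx⟩ := D.surj (Function.update c k s)
    exact ⟨⟨x, fun j hj => by rw [hx, Function.update_of_ne hj]⟩, by simp [hx]⟩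
  const c := ⟨MvPolynomial.X c, fun g => D.ρ_X g c, fun x => ev_X _ c⟩
  inv b hb := by
    obtain ⟨P, hP⟩ := D.ev_inv b hb
    refine ⟨MvPolynomial.aeval (Function.update (fun j => C (c j)) k X) P, fun x => ?_⟩
    have e : (x.1 ∘ D.t) = fun i => aeval (x.1 (D.t k)) (Function.update (fun j => C (c j)) k X i) := by
      funext j
      by_cases hj : j = k
      · subst hj; simp
      · simp [hj, x.2 j hj]
    calc _ = MvPolynomial.eval (x.1 ∘ D.t) P := hP x.1
      _ = MvPolynomial.aeval
          (fun i => aeval (x.1 (D.t k)) (Function.update (fun j => C (c j)) k X i)) P := by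
        rw [← e]; rfl
      _ = aeval (x.1 (D.t k)) (MvPolynomial.aeval (Function.update (fun j => C (c j)) k X) P) := by
        rw [← AlgHom.comp_apply, MvPolynomial.comp_aeval]
      _ = _ := by rw [coe_aeval_eq_eval]
  bdd a R := by
    induction a using MvPolynomial.induction_on with
    | C s =>
      obtain ⟨Λ, N, h⟩ := D.growth_ev (v := v) s
      refine ⟨Λ * (∏ j, max 1 (max R (v (c j)))) ^ N, fun x hx => ?_⟩
      rw [ev_C]
      refine (h x.1).trans ?_
      gcongr with j
      by_cases hj : j = k
      · subst hj; exact hx.trans (le_max_left _ _)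
      · rw [x.2 j hj]; exact le_max_right _ _
    | add P Q hP hQ =>
      obtain ⟨B, h⟩ := hP
      obtain ⟨B', h'⟩ := hQ
      refine ⟨max B B', fun x hx => ?_⟩
      rw [map_add]
      exact Valuation.map_add_le _ ((h x hx).trans (le_max_left _ _))
        ((h' x hx).trans (le_max_right _ _))
    | mul_X P z hP =>
      obtain ⟨B, h⟩ := hP
      refine ⟨B * v z, fun x hx => ?_⟩
      rw [map_mul, map_mul, ev_X]
      exact mul_le_mul' (h x hx) le_rfl

end Galois

/-! ### Polynomials on lines and descent to the base field -/

/-- A function on an affine space which is a polynomial of bounded degree along each line parallel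
to a coordinate axis is a polynomial; its coefficients lie in every infinite subfield `F` that is
respected by the function. -/
lemma multi_poly {F L : Type*} [Field F] [Infinite F] [Field L] [Algebra F L] (N : ℕ) :
    ∀ (d : ℕ) (u : (Fin d → L) → L),
    (∀ k c, ∃ P : L[X], P.natDegree ≤ N ∧ ∀ s, u (Function.update c k s) = P.eval s) →
    (∀ c : Fin d → F, ∃ b : F, u (fun j => algebraMap F L (c j)) = algebraMap F L b) →
    ∃ P : MvPolynomial (Fin d) F, ∀ τ, u τ = MvPolynomial.aeval τ P := by
  classical
  intro d
  induction d with
  | zero =>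
    intro u _ h2
    obtain ⟨b, hb⟩ := h2 Fin.elim0
    refine ⟨MvPolynomial.C b, fun τ => ?_⟩
    rw [MvPolynomial.aeval_C, ← hb]
    congr 1
    exact Subsingleton.elim _ _
  | succ d ih =>
    intro u h1 h2
    obtain ⟨s, -, hs⟩ := Infinite.exists_superset_card_eq (∅ : Finset F) (N + 1) (by simp)
    have hp : ∀ a : F, ∃ P : MvPolynomial (Fin d) F,
        ∀ τ : Fin d → L, u (Fin.cons (algebraMap F L a) τ) = MvPolynomial.aeval τ P := by
      intro a
      refine ih _ (fun k c => ?_) (fun c => ?_)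
      · obtain ⟨P, hP, h⟩ := h1 k.succ (Fin.cons (algebraMap F L a) c)
        refine ⟨P, hP, fun y => ?_⟩
        rw [← h, Fin.cons_update]
      · obtain ⟨b, hb⟩ := h2 (Fin.cons a c)
        refine ⟨b, ?_⟩
        rw [← hb]
        congr 1
        funext j
        refine Fin.cases ?_ (fun j => ?_) j <;> simp
    choose p hp using hp
    refine ⟨∑ a ∈ s, aeval (MvPolynomial.X 0) (Lagrange.basis s id a) *
      MvPolynomial.rename Fin.succ (p a), fun τ => ?_⟩
    obtain ⟨P, hP, h⟩ := h1 0 τ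
    have hbasis : ∀ a ∈ s, Lagrange.basis s (algebraMap F L) a =
        (Lagrange.basis s id a).map (algebraMap F L) := by
      intro a _
      simp [Lagrange.basis, Polynomial.map_prod, Lagrange.basisDivisor]
    have hInt := Lagrange.eq_interpolate (s := s) (v := algebraMap F L) (f := P)
      (fun _ _ _ _ h => (algebraMap F L).injective h)
      (by
        rw [hs]
        exact (degree_le_natDegree).trans_lt (by exact_mod_cast Nat.lt_succ_of_le hP))
    have hu : u τ = P.eval (τ 0) := by rw [← h, Function.update_eq_self]
    have hPa : ∀ a : F, P.eval (algebraMap F L a) = MvPolynomial.aeval (Fin.tail τ) (p a) := by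
      intro a
      rw [← h, ← hp]
      congr 1
      conv_lhs => rw [← Fin.cons_self_tail τ]
      rw [Fin.update_cons_zero]
    rw [hu]
    conv_lhs => rw [hInt]
    rw [Lagrange.interpolate_apply, eval_finsetSum, map_sum]
    refine Finset.sum_congr rfl fun a ha => ?_
    rw [eval_mul, eval_C, hPa, hbasis a ha, map_mul, MvPolynomial.aeval_rename, mul_comm]
    congr 1
    rw [eval_map_algebraMap, ← Polynomial.aeval_algHom_apply, MvPolynomial.aeval_X]

/-- An element of a normal extension fixed by all automorphisms is purely inseparable. -/
lemma pow_mem_of_fixed {K F : Type*} [Field K] [Field F] [Algebra K F] [Normal K F] (p : ℕ)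
    [ExpChar K p] (c : F) (hc : ∀ σ : F ≃ₐ[K] F, σ c = c) :
    ∃ n, c ^ p ^ n ∈ (algebraMap K F).range := by
  classical
  rw [← minpoly.natSepDegree_eq_one_iff_pow_mem, natSepDegree_eq_of_splits _ (E := F) (Normal.splits inferInstance c),
    Finset.card_eq_one]
  refine ⟨c, ?_⟩
  have hInt : IsIntegral K c := Algebra.IsIntegral.isIntegral c
  ext y
  rw [Multiset.mem_toFinset, Finset.mem_singleton, mem_aroots]
  constructor
  · rintro ⟨-, hy⟩
    obtain ⟨σ, hσ⟩ := minpoly.exists_algEquiv_of_root (Algebra.IsAlgebraic.isAlgebraic c) hy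
    exact σ.injective (by rw [hc, hσ])
  · rintro rfl
    exact ⟨minpoly.ne_zero hInt, minpoly.aeval _ _⟩

/-- A polynomial over an algebraic closure of `K` that is fixed by conjugation has some `p`-power with
coefficients in `K`. -/
lemma descend {K F : Type*} [Field K] [Field F] [Algebra K F] [IsAlgClosed F]
    [Algebra.IsAlgebraic K F] (p : ℕ) [ExpChar K p] [ExpChar F p] {d : ℕ}
    (P : MvPolynomial (Fin d) F)
    (hP : ∀ σ : F ≃ₐ[K] F, MvPolynomial.map (σ : F →+* F) P = P) :
    ∃ n, ∃ Q : MvPolynomial (Fin d) K, P ^ p ^ n = MvPolynomial.map (algebraMap K F) Q := by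
  have : Normal K F := normal_iff.2 fun x =>
    ⟨Algebra.IsIntegral.isIntegral x, IsAlgClosed.splits _⟩
  have hc : ∀ m, ∃ n, P.coeff m ^ p ^ n ∈ (algebraMap K F).range := by
    intro m
    refine pow_mem_of_fixed p _ fun σ => ?_
    conv_rhs => rw [← hP σ]
    rw [MvPolynomial.coeff_map]; rfl
  choose n hn using hc
  set M := ∑ m ∈ P.support, n m with hM
  have hn' : ∀ m ∈ P.support, ∃ a, algebraMap K F a = P.coeff m ^ p ^ M := by
    intro m hm
    obtain ⟨k, hk⟩ := Nat.exists_eq_add_of_le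
      (Finset.single_le_sum (f := n) (fun _ _ => Nat.zero_le _) hm)
    obtain ⟨a, ha⟩ := hn m
    refine ⟨a ^ p ^ k, ?_⟩
    rw [hM, hk, pow_add, pow_mul, ← ha, map_pow]
  choose! a ha using hn'
  refine ⟨M, ∑ m ∈ P.support, MvPolynomial.monomial (p ^ M • m) (a m), ?_⟩
  conv_lhs => rw [P.as_sum]
  rw [← iterateFrobenius_def, map_sum, map_sum]
  refine Finset.sum_congr rfl fun m hm => ?_
  rw [iterateFrobenius_def, MvPolynomial.monomial_pow, MvPolynomial.map_monomial, ha m hm]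

namespace Galois

variable {K L S G : Type*} [Field K] [Field L] [Algebra K L] [CommRing S] [Algebra K S]
    [Group G] {p d : ℕ} (D : Galois K L S G p d) [Fintype G]
  {F : Type*} [Field F] [Algebra K F] [Algebra F L] [IsScalarTower K F L] [IsAlgClosed F]
  [Algebra.IsAlgebraic K F]

/-- A point over `F`, conjugated by `σ` and seen over `L`. -/
noncomputable def conj (L : Type*) [Field L] [Algebra K L] [Algebra F L] [IsScalarTower K F L]
    (σ : F ≃ₐ[K] F) (x : S →ₐ[K] F) : S →ₐ[K] L :=
  (IsScalarTower.toAlgHom K F L).comp ((σ : F →ₐ[K] F).comp x)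

omit [IsAlgClosed F] [Algebra.IsAlgebraic K F] in
lemma conj_apply (σ : F ≃ₐ[K] F) (x : S →ₐ[K] F) (s : S) :
    conj L σ x s = algebraMap F L (σ (x s)) := rfl

/-- Functions on the points that are `G`-invariant, polynomial on lines and Galois equivariant come
from invariant elements of `S`, up to powers of the characteristic exponent. -/
lemma exists_of_lines [ExpChar K p] [ExpChar L p] [ExpChar F p]
    (hF : ∀ τ : Fin d → F, ∃ x : S →ₐ[K] F, ∀ j, x (D.t j) = τ j)
    (w : (S →ₐ[K] L) → L) (hG : ∀ x g, w (x.comp (D.α g)) = w x) (N : ℕ)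
    (hline : ∀ (k : Fin d) (c : Fin d → L), ∀ u : L → L, (∀ x : S →ₐ[K] L, (∀ j, j ≠ k → x (D.t j) = c j) →
      u (x (D.t k)) = w x) → ∃ P : L[X], P.natDegree ≤ N ∧ ∀ s, u s = P.eval s)
    (hconj : ∀ x : S →ₐ[K] F, ∃ b : F, ∀ σ : F ≃ₐ[K] F, w (conj L σ x) = algebraMap F L (σ b)) :
    ∃ b : S, (∀ g, D.α g b = b) ∧ ∃ n, ∀ x : S →ₐ[K] L, x b = w x ^ p ^ n := by
  have : Infinite F := IsAlgClosed.instInfinite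
  choose X hX using D.surj
  set u : (Fin d → L) → L := fun τ => w (X τ) with hu
  have huw : ∀ x : S →ₐ[K] L, u (fun j => x (D.t j)) = w x := by
    intro x
    obtain ⟨g, hg⟩ := D.transitive (X fun j => x (D.t j)) x (by ext j; simp [hX])
    conv_rhs => rw [hg]
    rw [hG]
  have hconj_t : ∀ (σ : F ≃ₐ[K] F) (x : S →ₐ[K] F) (b : F),
      w (conj L σ x) = algebraMap F L b →
      u (fun j => algebraMap F L (σ (x (D.t j)))) = algebraMap F L b := by
    intro σ x b h
    rw [← h, ← huw]; rfl
  obtain ⟨P, hP⟩ := multi_poly (F := F) N d u (fun k c => by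
      refine hline k c (fun s => u (Function.update c k s)) fun x hx => ?_
      rw [← huw]
      congr 1
      funext j
      by_cases hj : j = k
      · subst hj; simp
      · rw [Function.update_of_ne hj, hx j hj]) (fun c => by
      obtain ⟨x, hx⟩ := hF c
      obtain ⟨b, hb⟩ := hconj x
      refine ⟨b, ?_⟩
      have := hconj_t AlgEquiv.refl x b (hb _)
      simpa [hx] using this)
  have hPF : ∀ τ : Fin d → F, u (fun j => algebraMap F L (τ j)) =
      algebraMap F L (MvPolynomial.eval τ P) := by
    intro τ
    rw [hP, MvPolynomial.aeval_def, ← MvPolynomial.eval₂_id, MvPolynomial.eval₂_comp_left]; rfl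
  have hfix : ∀ σ : F ≃ₐ[K] F, MvPolynomial.map (σ : F →+* F) P = P := by
    intro σ
    refine MvPolynomial.funext fun τ => ?_
    obtain ⟨x, hx⟩ := hF fun j => σ.symm (τ j)
    obtain ⟨b, hb⟩ := hconj x
    have h1 := hconj_t AlgEquiv.refl x b (hb _)
    have h2 := hconj_t σ x _ (hb _)
    simp only [hx, AlgEquiv.coe_refl, id_eq, AlgEquiv.apply_symm_apply] at h1 h2
    rw [hPF] at h1 h2
    have h1' := (algebraMap F L).injective h1
    have h2' := (algebraMap F L).injective h2
    rw [h2', ← h1', MvPolynomial.eval_map]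
    have e : τ = fun j => (σ : F →+* F) (σ.symm (τ j)) := by funext j; simp
    conv_lhs => rw [e]
    change MvPolynomial.eval₂ (σ : F →+* F) (⇑(σ : F →+* F) ∘ fun j => σ.symm (τ j)) P =
      (σ : F →+* F) _
    rw [← MvPolynomial.eval₂_id, MvPolynomial.eval₂_comp_left]
    rfl
  obtain ⟨n, Q, hQ⟩ := descend (K := K) p P hfix
  refine ⟨MvPolynomial.aeval D.t Q, fun g => ?_, n, fun x => ?_⟩
  · rw [← AlgHom.comp_apply, MvPolynomial.comp_aeval]
    congr 2
    funext j
    exact D.α_t g j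
  · rw [D.x_aeval, ← huw, hP, ← map_pow, hQ]
    rw [MvPolynomial.aeval_map_algebraMap]
    rfl

end Galois

/-! ### Indicators of the parts of a decomposition -/

namespace Galois

variable {K L S G : Type*} [Field K] [Field L] [Algebra K L] [CommRing S] [Algebra K S]
    [Group G] {p d : ℕ} (D : Galois K L S G p d) [Fintype G]
  {F : Type*} [Field F] [Algebra K F] [Algebra F L] [IsScalarTower K F L] [IsAlgClosed F]
  [Algebra.IsAlgebraic K F] {v : Valuation L ℝ≥0}

/-- The tropicalization of a point. -/
noncomputable def trop {n : ℕ} (v : Valuation L ℝ≥0) (f : Fin n → S) (x : S →ₐ[K] L) : Fin n → ℝ≥0 :=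
  fun i => v (x (f i))

omit [Fintype G] [IsAlgClosed F] [Algebra.IsAlgebraic K F] in
lemma trop_conj (hσ : ∀ (σ : F ≃ₐ[K] F) (z : F), v (algebraMap F L (σ z)) = v (algebraMap F L z))
    {n : ℕ} (f : Fin n → S) (σ : F ≃ₐ[K] F) (x : S →ₐ[K] F) (g : G) :
    trop v f ((conj L σ x).comp (D.α g)) =
      trop v f ((conj L AlgEquiv.refl x).comp (D.α g)) := by
  funext i
  simp only [trop, AlgHom.comp_apply, conj_apply, hσ]

omit [Fintype G] in
lemma comp_comp (x : S →ₐ[K] L) (g g' : G) :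
    (x.comp (D.α g)).comp (D.α g') = x.comp (D.α (g * g')) := by
  ext s; simp

omit [Fintype G] in
lemma M_line (x : S →ₐ[K] L) (k : Fin d) (c : Fin d → L) (hx : ∀ j, j ≠ k → x (D.t j) = c j) :
    ∏ j, max 1 (v (x (D.t j))) ≤ (∏ j, max 1 (v (c j))) * max 1 (v (x (D.t k))) := by
  classical
  rw [← Finset.mul_prod_erase _ _ (Finset.mem_univ k), mul_comm]
  gcongr
  rw [← Finset.mul_prod_erase _ _ (Finset.mem_univ k)]
  refine le_mul_of_one_le_of_le (le_max_left _ _) ?_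
  refine Finset.prod_le_prod' fun j hj => ?_
  rw [hx j (Finset.ne_of_mem_erase hj)]

section

variable [IsAlgClosed L] (hsurj : ∀ r : ℝ≥0, r ≠ 0 → ∃ y : L, v y = r)
  [ExpChar K p] [ExpChar L p] [ExpChar F p]
  (hF : ∀ τ : Fin d → F, ∃ x : S →ₐ[K] F, ∀ j, x (D.t j) = τ j)
  (hσ : ∀ (σ : F ≃ₐ[K] F) (z : F), v (algebraMap F L (σ z)) = v (algebraMap F L z))
  {n : ℕ} (f : Fin n → S) (hf : ∀ (x : S →ₐ[K] L) i, x (f i) ≠ 0) {U V : Set (Fin n → ℝ≥0)}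
  (hUo : IsOpen U) (hVo : IsOpen V) (hcov : ∀ x : S →ₐ[K] L, trop v f x ∉ U → trop v f x ∈ V)
  (hdis : ∀ x : S →ₐ[K] L, trop v f x ∈ U → trop v f x ∉ V)

include hsurj hF hσ hf hUo hVo hcov hdis

open Classical in
/-- The partial trace of `h` over the points of a fibre whose tropicalization lies in `U` is, up to
powers of the characteristic exponent, an invariant element of `S`. -/
lemma exists_trace (h : S) : ∃ b : S, (∀ g, D.α g b = b) ∧ ∃ N, ∀ x : S →ₐ[K] L,
    x b = (∑ g, if trop v f (x.comp (D.α g)) ∈ U then x (D.α g h) else 0) ^ p ^ N := by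
  choose Λ N hΛ using fun g => D.growth_ev (v := v) (D.α g h)
  set w : (S →ₐ[K] L) → L := fun x =>
    (∑ g, if trop v f (x.comp (D.α g)) ∈ U then x (D.α g h) else 0) ^ p ^ D.e with hw
  have hgrow : ∀ x, v (w x) ≤ ((∑ g, Λ g) * (∏ j, max 1 (v (x (D.t j)))) ^ (∑ g, N g)) ^ p ^ D.e := by
    intro x
    rw [hw, map_pow]
    refine pow_le_pow_left' (Valuation.map_sum_le _ fun g _ => ?_) _
    split_ifs
    · exact (hΛ g).mono D (Finset.single_le_sum (f := Λ) (fun _ _ => zero_le) (Finset.mem_univ g))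
        (Finset.single_le_sum (f := N) (fun _ _ => Nat.zero_le _) (Finset.mem_univ g)) x
    · simp
  suffices key : ∃ b : S, (∀ g, D.α g b = b) ∧ ∃ m, ∀ x : S →ₐ[K] L, x b = w x ^ p ^ m by
    obtain ⟨b, hb, m, hm⟩ := key
    refine ⟨b, hb, D.e + m, fun x => ?_⟩
    rw [hm, hw, pow_add, pow_mul]
  refine D.exists_of_lines hF w (fun x g => ?_) ((∑ g, N g) * p ^ D.e)
    (fun k c u hu => ?_) (fun x => ?_)
  · simp only [hw]
    congr 1
    refine Fintype.sum_equiv (Equiv.mulLeft g) _ _ fun g' => ?_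
    rw [D.comp_comp, Equiv.coe_mulLeft, AlgHom.comp_apply, D.α_mul]
  · obtain ⟨h1, -⟩ := (D.line v k c).exists_polynomial hsurj (fun i => MvPolynomial.C (f i))
      (fun x i => by
        change ev x.1 _ ≠ 0
        rw [ev_C]; exact hf _ _) {x | trop v f x.1 ∈ U} U V hUo hVo
      (fun x hx => by
        change (fun i => v (ev x.1 _)) ∈ U
        simp only [ev_C]; exact hx)
      (fun x hx => by
        change (fun i => v (ev x.1 _)) ∈ V
        simp only [ev_C]; exact hcov _ hx)
      (fun x => by
        change (fun i => v (ev x.1 _)) ∈ U → (fun i => v (ev x.1 _)) ∉ V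
        simp only [ev_C]; exact hdis _)
    refine h1 (MvPolynomial.C h) u
      (((∑ g, Λ g) * (∏ j, max 1 (v (c j))) ^ (∑ g, N g)) ^ p ^ D.e) _ (fun x => ?_) (fun s => ?_)
    · change u (x.1 (D.t k)) = _
      rw [hu x.1 x.2, hw]
      change _ = (_ : L) ^ p ^ D.e
      refine congrArg (· ^ p ^ D.e) (Finset.sum_congr rfl fun g _ => ?_)
      change _ = if _ then ev x.1 (D.ρ g (MvPolynomial.C h)) else 0
      rw [ρ_C, ev_C]
      rfl
    · obtain ⟨x, hx⟩ := (D.line v k c).π_surj s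
      replace hx : x.1 (D.t k) = s := hx
      subst hx
      rw [hu x.1 x.2]
      refine (hgrow x.1).trans ?_
      rw [pow_mul, ← mul_pow, mul_assoc, ← mul_pow]
      gcongr
      exact D.M_line x.1 k c x.2
  · refine ⟨(∑ g, if trop v f ((conj L AlgEquiv.refl x).comp (D.α g)) ∈ U then x (D.α g h) else 0) ^
      p ^ D.e, fun σ => ?_⟩
    simp only [hw, map_pow, map_sum, trop_conj D hσ f σ x, conj_apply]
    congr 1
    refine Finset.sum_congr rfl fun g _ => ?_
    split_ifs <;> simp

open Classical in
/-- The indicator function of the fibres whose tropicalization lies in `U` is an element of `S`. -/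
lemma exists_indicator : ∃ b : S, ∀ x : S →ₐ[K] L,
    x b = if ∀ g, trop v f (x.comp (D.α g)) ∈ U then 1 else 0 := by
  have hprod : ∀ (E : Type _) [Field E] (m : ℕ) (hm : m ≠ 0) (T : G → Prop),
      (∏ g, if T g then (1 : E) else 0) ^ m = if ∀ g, T g then 1 else 0 := by
    intro E _ m hm T
    rw [Finset.prod_ite_zero]
    simp only [Finset.mem_univ, true_imp_iff, Finset.prod_const_one]
    split_ifs
    · rw [one_pow]
    · rw [zero_pow hm]
  have hq : p ^ D.e ≠ 0 := pow_ne_zero _ (expChar_pos L p).ne'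
  set w : (S →ₐ[K] L) → L := fun x =>
    if ∀ g, trop v f (x.comp (D.α g)) ∈ U then 1 else 0 with hw
  suffices key : ∃ b : S, (∀ g, D.α g b = b) ∧ ∃ m, ∀ x : S →ₐ[K] L, x b = w x ^ p ^ m by
    obtain ⟨b, hb, m, hm⟩ := key
    refine ⟨b, fun x => ?_⟩
    rw [hm, hw]
    dsimp only
    rw [ite_pow, one_pow, zero_pow (pow_ne_zero _ (expChar_pos L p).ne')]
  refine D.exists_of_lines hF w (fun x g => ?_) 0
    (fun k c u hu => ?_) (fun x => ?_)
  · simp only [hw, D.comp_comp]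
    congr 1
    exact propext ⟨fun H g' => by simpa using H (g⁻¹ * g'), fun H g' => H _⟩
  · obtain ⟨-, h1⟩ := (D.line v k c).exists_polynomial hsurj (fun i => MvPolynomial.C (f i))
      (fun x i => by
        change ev x.1 _ ≠ 0
        rw [ev_C]; exact hf _ _) {x | trop v f x.1 ∈ U} U V hUo hVo
      (fun x hx => by
        change (fun i => v (ev x.1 _)) ∈ U
        simp only [ev_C]; exact hx)
      (fun x hx => by
        change (fun i => v (ev x.1 _)) ∈ V
        simp only [ev_C]; exact hcov _ hx)
      (fun x => by
        change (fun i => v (ev x.1 _)) ∈ U → (fun i => v (ev x.1 _)) ∉ V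
        simp only [ev_C]; exact hdis _)
    refine h1 u fun x => ?_
    change u (x.1 (D.t k)) = _ ^ p ^ D.e
    rw [hu x.1 x.2, hprod _ _ hq]
    rfl
  · refine ⟨if ∀ g, trop v f ((conj L AlgEquiv.refl x).comp (D.α g)) ∈ U then 1 else 0, fun σ => ?_⟩
    simp only [hw, trop_conj D hσ f σ x]
    split_ifs <;> simp

end

end Galois

/-! ### Indecomposability of the normal covering -/

namespace Galois

variable {K L S G : Type*} [Field K] [Field L] [Algebra K L] [CommRing S] [Algebra K S]
    [Group G] {p d : ℕ} (D : Galois K L S G p d) [Fintype G]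
  {F : Type*} [Field F] [Algebra K F] [Algebra F L] [IsScalarTower K F L] [IsAlgClosed F]
  [Algebra.IsAlgebraic K F] {v : Valuation L ℝ≥0}

include D in
/-- Elements of `S` are determined by their values at the points. -/
lemma eq_zero_of_points [IsDomain S] [Infinite L] [ExpChar L p] (y : S) (hy : ∀ x : S →ₐ[K] L, x y = 0) :
    y = 0 := by
  have hinv : ∀ g, D.α g (∏ h, D.α h y) = ∏ h, D.α h y := by
    intro g
    rw [map_prod]
    refine Fintype.prod_equiv (Equiv.mulLeft g) _ _ fun h => ?_
    rw [Equiv.coe_mulLeft, D.α_mul]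
  obtain ⟨P, hP⟩ := D.inv _ hinv
  have hq : p ^ D.e ≠ 0 := pow_ne_zero _ (expChar_pos L p).ne'
  have hx0 : ∀ x : S →ₐ[K] L, x (MvPolynomial.aeval D.t P) = 0 := by
    intro x
    rw [← hP, map_pow, map_prod, Finset.prod_eq_zero (Finset.mem_univ (1 : G)), zero_pow hq]
    rw [D.α_one]; exact hy x
  have hP0 : P = 0 := by
    apply MvPolynomial.map_injective (algebraMap K L) (algebraMap K L).injective
    rw [map_zero]
    refine MvPolynomial.funext fun τ => ?_
    obtain ⟨x, hx⟩ := D.surj τ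
    have h1 := hx0 x
    rw [D.x_aeval, show x ∘ D.t = τ from funext hx] at h1
    rw [MvPolynomial.eval_map, map_zero]
    exact h1
  rw [hP0, map_zero] at hP
  obtain ⟨g, -, hg⟩ := Finset.prod_eq_zero_iff.1 (eq_zero_of_pow_eq_zero hP)
  rw [← D.α_one y, ← inv_mul_cancel g, D.α_mul, hg, map_zero]

section

variable [IsAlgClosed L] [IsDomain S] (hsurj : ∀ r : ℝ≥0, r ≠ 0 → ∃ y : L, v y = r)
  [ExpChar K p] [ExpChar L p] [ExpChar F p] [ExpChar S p]
  (hF : ∀ τ : Fin d → F, ∃ x : S →ₐ[K] F, ∀ j, x (D.t j) = τ j)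
  (hσ : ∀ (σ : F ≃ₐ[K] F) (z : F), v (algebraMap F L (σ z)) = v (algebraMap F L z))
  {n : ℕ} (f : Fin n → S) (hf : ∀ (x : S →ₐ[K] L) i, x (f i) ≠ 0) {U V : Set (Fin n → ℝ≥0)}
  (hUo : IsOpen U) (hVo : IsOpen V) (hcov : ∀ x : S →ₐ[K] L, trop v f x ∉ U → trop v f x ∈ V)
  (hdis : ∀ x : S →ₐ[K] L, trop v f x ∈ U → trop v f x ∉ V)

include hsurj hF hσ hf hUo hVo hcov hdis

omit [IsDomain S] [ExpChar S p] in
/-- If the fibres lying over `U` are Zariski dense, then all fibres lie over `U`: their indicator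
function is an element of `S`, equal to `1`. -/
lemma forall_mem_of_dense (hdense : ∀ y : S, (∀ x : S →ₐ[K] L,
    (∀ g, trop v f (x.comp (D.α g)) ∈ U) → x y = 0) → y = 0) (x : S →ₐ[K] L) : trop v f x ∈ U := by
  classical
  obtain ⟨b, hb⟩ := D.exists_indicator hsurj hF hσ f hf hUo hVo hcov hdis
  have h1 : b - 1 = 0 := hdense _ fun x hx => by
    rw [map_sub, hb, if_pos hx, map_one, sub_self]
  have h2 := hb x
  rw [sub_eq_zero.1 h1, map_one] at h2
  have h3 : ∀ g, trop v f (x.comp (D.α g)) ∈ U := by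
    by_contra h
    rw [if_neg h] at h2
    exact one_ne_zero h2
  have h4 := h3 1
  rwa [map_one] at h4

/-- The points of `S` do not split according to a clopen decomposition of their tropicalization.
On a dense set of points the set `T` of `g` such that the translate by `g` tropicalizes into `U` is
constant; since the partial traces over `T` are invariant, the linear independence of the
automorphisms in `G` forces `T` to be stable under translation, hence empty or everything. -/
theorem all_or_none : (∀ x : S →ₐ[K] L, trop v f x ∈ U) ∨ ∀ x : S →ₐ[K] L, trop v f x ∈ V := by
  classical
  have : Infinite L := IsAlgClosed.instInfinite
  set T : (S →ₐ[K] L) → Finset G := fun x =>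
    Finset.univ.filter fun g => trop v f (x.comp (D.α g)) ∈ U with hT
  have hmemT : ∀ x g, g ∈ T x ↔ trop v f (x.comp (D.α g)) ∈ U := fun x g => by simp [hT]
  obtain ⟨T₀, hT₀⟩ : ∃ T₀ : Finset G, ∀ y : S, (∀ x, T x = T₀ → x y = 0) → y = 0 := by
    by_contra! hno
    choose y hy hy0 using hno
    refine Finset.prod_ne_zero_iff.2 (fun T₀ (_ : T₀ ∈ Finset.univ) => hy0 T₀) ?_
    refine D.eq_zero_of_points _ fun x => ?_
    rw [map_prod]
    exact Finset.prod_eq_zero (Finset.mem_univ (T x)) (hy _ x rfl)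
  have htr : ∀ (h : S) (σ : G), ∑ g ∈ T₀, D.α (σ * g) h = ∑ g ∈ T₀, D.α g h := by
    intro h σ
    obtain ⟨b, hb, N, hbN⟩ := D.exists_trace hsurj hF hσ f hf hUo hVo hcov hdis h
    have h1 : b = (∑ g ∈ T₀, D.α g h) ^ p ^ N := by
      rw [← sub_eq_zero]
      refine hT₀ _ fun x hx => ?_
      rw [map_sub, map_pow, map_sum, hbN, ← hx, ← Finset.sum_filter, sub_self]
    have h2 := hb σ
    rw [h1, map_pow, map_sum, ← iterateFrobenius_def, ← iterateFrobenius_def] at h2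
    have h3 := iterateFrobenius_inj S p N h2
    simpa only [D.α_mul] using h3
  have hstab : ∀ σ g, g ∈ T₀ → σ * g ∈ T₀ := by
    intro σ g₀ hg₀
    have hli := linearIndependent_monoidHom S S
    have hinj : Function.Injective fun g : G => ((D.α g : S →ₐ[K] S) : S →* S) := by
      intro g g' h
      apply D.faithful
      ext s
      exact DFunLike.congr_fun h s
    have hli' := hli.comp _ hinj
    rw [Fintype.linearIndependent_iff] at hli'
    have := hli' (fun g => (if σ⁻¹ * g ∈ T₀ then 1 else 0) - if g ∈ T₀ then 1 else 0) (by
      funext h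
      have e1 : ∑ g, (if σ⁻¹ * g ∈ T₀ then D.α g h else 0) = ∑ g ∈ T₀, D.α (σ * g) h := by
        rw [← Finset.sum_filter]
        refine Finset.sum_bij' (fun g _ => σ⁻¹ * g) (fun g _ => σ * g) ?_ ?_ ?_ ?_ ?_ <;>
          simp
      simp only [Finset.sum_apply, Pi.smul_apply, Function.comp_apply, smul_eq_mul, sub_mul,
        ite_mul, one_mul, zero_mul, Finset.sum_sub_distrib, Pi.zero_apply]
      change ∑ g, (if σ⁻¹ * g ∈ T₀ then D.α g h else 0) - ∑ g, (if g ∈ T₀ then D.α g h else 0) = 0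
      rw [e1, htr, ← Finset.sum_filter, Finset.filter_mem_eq_inter, Finset.univ_inter, sub_self])
      (σ * g₀)
    by_contra hcon
    simp [hg₀, hcon] at this
  rcases T₀.eq_empty_or_nonempty with rfl | ⟨g₀, hg₀⟩
  · right
    refine D.forall_mem_of_dense hsurj hF hσ f hf hVo hUo
      (fun x hx => by_contra fun h => hx (hcov x h)) (fun x hx h => hdis x h hx) fun y hy => ?_
    refine hT₀ y fun x hx => hy x fun g => hcov _ fun h => ?_
    rw [← hmemT, hx] at h
    simp at h
  · left
    refine D.forall_mem_of_dense hsurj hF hσ f hf hUo hVo hcov hdis fun y hy => ?_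
    refine hT₀ y fun x hx => hy x fun g => ?_
    rw [← hmemT, hx]
    simpa using hstab (g * g₀⁻¹) g₀ hg₀

end

end Galois

/-! ### Invariance of the valuation under conjugation -/

section Hensel

variable {K F : Type*} [Field K] [Field F] [Algebra K F] [IsAlgClosed F] [Algebra.IsAlgebraic K F]
  {vK : Valuation K ℝ≥0} [HenselianLocalRing vK.valuationSubring] {w : Valuation F ℝ≥0}

lemma exists_conj_of_mem_aroots (a b : F) (hb : b ∈ (minpoly K a).aroots F) :
    ∃ τ : F ≃ₐ[K] F, τ a = b := by
  have : Normal K F := normal_iff.2 fun x =>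
    ⟨Algebra.IsIntegral.isIntegral x, IsAlgClosed.splits _⟩
  obtain ⟨σ, hσ⟩ := minpoly.exists_algEquiv_of_root (Algebra.IsAlgebraic.isAlgebraic a)
    (mem_aroots.1 hb).2
  exact ⟨σ.symm, by rw [← hσ]; simp⟩

omit [IsAlgClosed F] in
lemma conj_mem_aroots (a : F) (τ : F ≃ₐ[K] F) : τ a ∈ (minpoly K a).aroots F := by
  refine mem_aroots.2 ⟨minpoly.ne_zero (Algebra.IsIntegral.isIntegral a), ?_⟩
  have := congrArg τ (minpoly.aeval K a)
  rw [_root_.map_zero] at this; rw [← this]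
  exact (minpoly K a).aeval_algHom_apply (τ : F →ₐ[K] F) a

include vK in
/-- Hensel's lemma: a separable element with residue class `1`, all of whose other conjugates have
residue class `0`, is rational. -/
lemma mem_range_of_residue (hw : ∀ x, w (algebraMap K F x) = vK x) (a : F)
    (hsep : IsSeparable K a) (h1 : w (a - 1) < 1)
    (hτ : ∀ τ : F ≃ₐ[K] F, τ a = a ∨ w (τ a) < 1) : a ∈ (algebraMap K F).range := by
  classical
  have hInt : IsIntegral K a := Algebra.IsIntegral.isIntegral a
  have h1' : w (1 - a) < 1 := by rwa [← Valuation.map_neg, neg_sub]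
  set T := ((minpoly K a).aroots F).toFinset with hT
  have haT : a ∈ T := Multiset.mem_toFinset.2 (by simpa using conj_mem_aroots a (AlgEquiv.refl (R := K)))
  have hroot : ∀ α ∈ T.erase a, w α < 1 := by
    intro α hα
    obtain ⟨hne, hα⟩ := Finset.mem_erase.1 hα
    obtain ⟨τ, rfl⟩ := exists_conj_of_mem_aroots (K := K) a α (Multiset.mem_toFinset.1 hα)
    exact (hτ τ).resolve_left hne
  have hwa : w a = 1 := by
    have := Valuation.map_one_add_of_lt w h1
    rwa [add_sub_cancel] at this
  let O := w.valuationSubring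
  let l : F → O := fun α => if h : w α ≤ 1 then ⟨α, h⟩ else 0
  have hl : ∀ α, w α ≤ 1 → ((l α : O) : F) = α := fun α h => by simp only [l, dif_pos h]
  have hle : ∀ x : O, w (x : F) ≤ 1 := fun x => x.2
  set g : O[X] := ∏ α ∈ T.erase a, (X - C (l α)) with hg
  have hmap : (minpoly K a).map (algebraMap K F) =
      ((X - C (l a)) * g).map (algebraMap O F) := by
    have hs := (IsAlgClosed.splits ((minpoly K a).map (algebraMap K F))).eq_prod_roots
    rw [((minpoly.monic hInt).map _).leadingCoeff, C_1, one_mul] at hs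
    have hnd : (((minpoly K a).map (algebraMap K F)).roots).Nodup :=
      nodup_roots (Separable.map hsep)
    have : T.val = ((minpoly K a).map (algebraMap K F)).roots := by
      rw [hT, Multiset.toFinset_val, aroots, Multiset.dedup_eq_self.2 hnd]
    rw [← this] at hs
    have e2 : (Multiset.map (fun a => X - C a) T.val).prod = ∏ α ∈ T, (X - C α) := rfl
    rw [e2, ← Finset.mul_prod_erase _ _ haT] at hs
    rw [hs, Polynomial.map_mul, hg, Polynomial.map_prod]
    congr 1
    · rw [Polynomial.map_sub, map_X, map_C]
      congr 2
      exact (hl a hwa.le).symm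
    · refine Finset.prod_congr rfl fun α hα => ?_
      rw [Polynomial.map_sub, map_X, map_C]
      congr 2
      exact (hl α (hroot α hα).le).symm
  have hlift : minpoly K a ∈ lifts (algebraMap vK.valuationSubring K) := by
    rw [lifts_iff_coeff_lifts]
    intro i; simp only [Set.mem_range]
    refine ⟨⟨(minpoly K a).coeff i, ?_⟩, rfl⟩
    rw [Valuation.mem_valuationSubring_iff, ← hw, ← coeff_map, hmap, coeff_map]
    exact hle _
  obtain ⟨h₀, hh₀, -, hmon⟩ := lifts_and_natDegree_eq_and_monic hlift (minpoly.monic hInt)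
  have hev : ∀ (P : vK.valuationSubring[X]) (Q : O[X]),
      (P.map (algebraMap vK.valuationSubring K)).map (algebraMap K F) = Q.map (algebraMap O F) →
      vK ((P.eval 1 : vK.valuationSubring) : K) = w ((Q.eval 1 : O) : F) := by
    intro P Q h
    have := congrArg (eval 1) h
    rw [eval_one_map, eval_one_map, eval_one_map] at this
    rw [← hw]
    exact congrArg w this
  have hg1 : w ((g.eval 1 : O) : F) = 1 := by
    have : ((g.eval 1 : O) : F) = ∏ α ∈ T.erase a, (1 - α) := by
      rw [hg, eval_prod]
      change algebraMap O F _ = _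
      rw [map_prod]
      refine Finset.prod_congr rfl fun α hα => ?_
      rw [eval_sub, eval_X, eval_C, map_sub, map_one]
      congr 1
      exact hl α (hroot α hα).le
    rw [this, map_prod]
    refine Finset.prod_eq_one fun α hα => ?_
    rw [sub_eq_add_neg]
    exact Valuation.map_one_add_of_lt w (by rw [Valuation.map_neg]; exact hroot α hα)
  have hla : ((l a : O) : F) = a := hl a hwa.le
  obtain ⟨b, hb, -⟩ := HenselianLocalRing.is_henselian h₀ hmon 1 (by
    rw [Valuation.mem_maximalIdeal_iff, hev h₀ ((X - C (l a)) * g) (by rw [hh₀, hmap])]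
    rw [eval_mul, eval_sub, eval_X, eval_C]
    change w ((1 - ((l a : O) : F)) * ((g.eval 1 : O) : F)) < 1
    rwa [map_mul, hg1, mul_one, hla]) (by
    by_contra hcon
    have hcon' : h₀.derivative.eval 1 ∈ IsLocalRing.maximalIdeal vK.valuationSubring := hcon
    rw [Valuation.mem_maximalIdeal_iff, hev h₀.derivative ((X - C (l a)) * g).derivative (by
      rw [← derivative_map, ← derivative_map, hh₀, hmap, derivative_map])] at hcon'
    rw [derivative_mul, derivative_sub, derivative_X, derivative_C, sub_zero, one_mul, eval_add,
      eval_mul, eval_sub, eval_X, eval_C] at hcon'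
    change w (((g.eval 1 : O) : F) + (1 - ((l a : O) : F)) * ((g.derivative.eval 1 : O) : F)) < 1
      at hcon'
    rw [Valuation.map_add_eq_of_lt_left, hg1] at hcon'
    · exact lt_irrefl _ hcon'
    · rw [hg1, map_mul, hla]
      exact lt_of_le_of_lt (mul_le_of_le_one_right zero_le (hle _)) h1')
  have hroot0 : (minpoly K a).IsRoot (b : K) := by
    rw [← hh₀, IsRoot.def]
    have := eval_map_apply (algebraMap vK.valuationSubring K) (p := h₀) b
    rw [hb.eq_zero, map_zero] at this
    exact this
  exact minpoly.mem_range_of_degree_eq_one K a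
    (degree_eq_one_of_irreducible_of_root (minpoly.irreducible hInt) hroot0)

include vK in
/-- If some conjugate of `y` had larger value than `y`, let `β` be the product of the conjugates of
maximal value.  Each conjugate of `β` different from `β` has smaller value.  A `p`-power `γ` of `β` is
separable, and `γ` divided by its trace has residue class `1`, whereas its other conjugates have
residue class `0`.  By `mem_range_of_residue`, `γ` is rational, but it has conjugates of smaller
value. -/
lemma not_conj_lt (hw : ∀ x, w (algebraMap K F x) = vK x) (σ : F ≃ₐ[K] F) (y : F) :
    ¬ w y < w (σ y) := by
  classical
  intro hlt
  have conj_conj : ∀ (a b : F) (τ : F ≃ₐ[K] F), b ∈ ((minpoly K a).aroots F).toFinset →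
      τ b ∈ ((minpoly K a).aroots F).toFinset := by
    intro a b τ hb
    rw [Multiset.mem_toFinset] at hb ⊢
    obtain ⟨τ', rfl⟩ := exists_conj_of_mem_aroots (K := K) a b hb
    exact conj_mem_aroots a (τ * τ')
  set T := ((minpoly K y).aroots F).toFinset with hT
  have hyT : y ∈ T := Multiset.mem_toFinset.2 (by simpa using conj_mem_aroots y (AlgEquiv.refl (R := K)))
  obtain ⟨α₀, hα₀, hmax⟩ := Finset.exists_max_image T w ⟨y, hyT⟩
  have hyr : w y < w α₀ := lt_of_lt_of_le hlt (hmax _ (conj_conj y y σ hyT))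
  have hr0 : 0 < w α₀ := lt_of_le_of_lt zero_le hyr
  set I := T.filter fun α => w α = w α₀ with hI
  have hIw : ∀ α ∈ I, w α = w α₀ := fun α h => (Finset.mem_filter.1 h).2
  set β := ∏ α ∈ I, α with hβ
  have hwβ : w β = ∏ α ∈ I, w α₀ := by
    rw [hβ, map_prod]
    exact Finset.prod_congr rfl hIw
  have hτβ : ∀ τ : F ≃ₐ[K] F, w (τ β) = ∏ α ∈ I, w (τ α) := fun τ => by
    rw [hβ, map_prod, map_prod]
  have hpos : ∀ (τ : F ≃ₐ[K] F), ∀ α ∈ I, 0 < w (τ α) := by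
    intro τ α hα
    rw [pos_iff_ne_zero, Valuation.ne_zero_iff]
    intro h
    have h0 : α = 0 := by simpa using h
    have := hIw α hα
    rw [h0, _root_.map_zero] at this
    exact hr0.ne this
  have hle : ∀ (τ : F ≃ₐ[K] F), ∀ α ∈ I, w (τ α) ≤ w α₀ := fun τ α hα =>
    hmax _ (conj_conj y α τ (Finset.mem_filter.1 hα).1)
  have hltβ : ∀ (τ : F ≃ₐ[K] F), ∀ α ∈ I, w (τ α) < w α₀ → w (τ β) < w β := by
    intro τ α hα h
    rw [hτβ, hwβ]
    exact Finset.prod_lt_prod (hpos τ) (hle τ) ⟨α, hα, h⟩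
  have hdich : ∀ τ : F ≃ₐ[K] F, τ β = β ∨ w (τ β) < w β := by
    intro τ
    by_cases h : ∃ α ∈ I, w (τ α) < w α₀
    · obtain ⟨α, hα, h⟩ := h
      exact Or.inr (hltβ τ α hα h)
    · push Not at h
      left
      have himg : I.image τ = I := by
        refine Finset.eq_of_subset_of_card_le (fun z hz => ?_)
          (Finset.card_image_of_injective _ τ.injective).ge
        obtain ⟨α, hα, rfl⟩ := Finset.mem_image.1 hz
        exact Finset.mem_filter.2 ⟨conj_conj y α τ (Finset.mem_filter.1 hα).1,
          le_antisymm (hle τ α hα) (h α hα)⟩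
      rw [hβ, map_prod]
      conv_rhs => rw [← himg, Finset.prod_image τ.injective.injOn]
  obtain ⟨τ₀, hτ₀⟩ : ∃ τ : F ≃ₐ[K] F, w (τ β) < w β := by
    obtain ⟨τ, hτ⟩ := exists_conj_of_mem_aroots (K := K) y α₀ (Multiset.mem_toFinset.1 hα₀)
    refine ⟨τ.symm, hltβ _ α₀ (Finset.mem_filter.2 ⟨hα₀, rfl⟩) ?_⟩
    rw [← hτ, τ.symm_apply_apply, hτ]
    exact hyr
  -- a `p`-power of `β` is separable
  let p := ringExpChar K
  have hq0 : ∀ k, p ^ k ≠ 0 := fun k => pow_ne_zero _ (expChar_pos K p).ne'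
  obtain ⟨k, ⟨γ', hγ'⟩⟩ := IsPurelyInseparable.pow_mem (separableClosure K F) p β
  have hγsep : IsSeparable K (β ^ p ^ k) := by
    rw [← mem_separableClosure_iff, ← hγ']
    exact γ'.2
  set γ := β ^ p ^ k with hγ
  have hγdich : ∀ τ : F ≃ₐ[K] F, τ γ = γ ∨ w (τ γ) < w γ := by
    intro τ
    rw [hγ, map_pow, map_pow, map_pow]
    exact (hdich τ).imp (fun h => by rw [h]) fun h => pow_lt_pow_left₀ h zero_le (hq0 k)
  have hγτ : w (τ₀ γ) < w γ := by
    rw [hγ, map_pow, map_pow, map_pow]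
    exact pow_lt_pow_left₀ hτ₀ zero_le (hq0 k)
  have hγ0 : 0 < w γ := lt_of_le_of_lt zero_le hγτ
  -- the trace of `γ` is close to `γ`
  set Tγ := ((minpoly K γ).aroots F).toFinset with hTγ
  have hγT : γ ∈ Tγ := Multiset.mem_toFinset.2 (by simpa using conj_mem_aroots γ (AlgEquiv.refl (R := K)))
  obtain ⟨s, hs⟩ : ∃ s : K, algebraMap K F s = ∑ α ∈ Tγ, α := by
    refine ⟨- (minpoly K γ).nextCoeff, ?_⟩
    have h := (IsAlgClosed.splits
      ((minpoly K γ).map (algebraMap K F))).nextCoeff_eq_neg_sum_roots_of_monic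
      ((minpoly.monic (Algebra.IsIntegral.isIntegral γ)).map _)
    rw [nextCoeff_map (algebraMap K F).injective] at h
    rw [map_neg, h, neg_neg]
    have hnd : (((minpoly K γ).map (algebraMap K F)).roots).Nodup :=
      nodup_roots (Separable.map hγsep)
    have : Tγ.val = ((minpoly K γ).map (algebraMap K F)).roots := by
      rw [hTγ, Multiset.toFinset_val, aroots, Multiset.dedup_eq_self.2 hnd]
    rw [← this]
    simp
  have hws : w (algebraMap K F s - γ) < w γ := by
    rw [hs, ← Finset.add_sum_erase _ _ hγT, add_sub_cancel_left]
    refine Valuation.map_sum_lt' w hγ0 fun α hα => ?_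
    obtain ⟨hne, hα⟩ := Finset.mem_erase.1 hα
    obtain ⟨τ, rfl⟩ := exists_conj_of_mem_aroots (K := K) γ α (Multiset.mem_toFinset.1 hα)
    exact (hγdich τ).resolve_left hne
  have hwsγ : w (algebraMap K F s) = w γ := by
    have := Valuation.map_add_eq_of_lt_left w hws
    rwa [add_sub_cancel] at this
  set s' := algebraMap K F s with hs'
  have hs0 : s' ≠ 0 := by
    rw [← Valuation.ne_zero_iff w, hwsγ]; exact hγ0.ne'
  have hmem := mem_range_of_residue (vK := vK) hw (γ * s'⁻¹) (by
      rw [← mem_separableClosure_iff] at hγsep ⊢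
      exact mul_mem hγsep (inv_mem ((separableClosure K F).algebraMap_mem s))) (by
      have : γ * s'⁻¹ - 1 = - ((s' - γ) * s'⁻¹) := by field_simp; ring
      rw [this, Valuation.map_neg, map_mul, map_inv₀, hwsγ, ← div_eq_mul_inv]
      exact (div_lt_one hγ0).2 hws) (fun τ => by
      rw [map_mul, map_inv₀, hs', τ.commutes, ← hs']
      refine (hγdich τ).imp (fun h => by rw [h]) fun h => ?_
      rw [map_mul, map_inv₀, hwsγ, ← div_eq_mul_inv]
      exact (div_lt_one hγ0).2 h)
  obtain ⟨c, hc⟩ := hmem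
  have hγc : γ = algebraMap K F (c * s) := by
    rw [map_mul, hc, ← hs', inv_mul_cancel_right₀ hs0]
  rw [hγc, τ₀.commutes] at hγτ
  exact lt_irrefl _ hγτ

include vK in
/-- The valuation of an algebraic extension of a henselian field is invariant under conjugation. -/
lemma conj_valuation (hw : ∀ x, w (algebraMap K F x) = vK x) (σ : F ≃ₐ[K] F) (y : F) :
    w (σ y) = w y := by
  refine le_antisymm (not_lt.1 (not_conj_lt (vK := vK) hw σ y)) (not_lt.1 fun h => ?_)
  refine not_conj_lt (vK := vK) hw σ.symm (σ y) ?_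
  rwa [σ.symm_apply_apply]

end Hensel

/-! ### The normal closure of a domain over a polynomial ring -/

/-- Points with values in an algebraically closed field extend along integral extensions. -/
lemma exists_extend {K A B Ω : Type*} [CommRing K] [CommRing A] [CommRing B] [Field Ω]
    [IsAlgClosed Ω] [Algebra K A] [Algebra K B] [Algebra A B] [IsScalarTower K A B] [Algebra K Ω]
    [Algebra.IsIntegral A B] (hinj : Function.Injective (algebraMap A B)) (φ : A →ₐ[K] Ω) :
    ∃ ψ : B →ₐ[K] Ω, ∀ a, ψ (algebraMap A B a) = φ a := by
  let P : Ideal A := RingHom.ker (φ : A →+* Ω)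
  have hP : P.IsPrime := RingHom.ker_isPrime _
  obtain ⟨Q, -, hQ, hQP⟩ := Ideal.exists_ideal_over_prime_of_isIntegral P (⊥ : Ideal B) (by
    rw [← RingHom.ker_eq_comap_bot, (RingHom.injective_iff_ker_eq_bot _).1 hinj]; exact bot_le)
  have hlo : Q.LiesOver P := ⟨hQP.symm⟩
  let : Algebra (A ⧸ P) Ω := (RingHom.kerLift (φ : A →+* Ω)).toAlgebra
  have hfl : FaithfulSMul (A ⧸ P) Ω :=
    (faithfulSMul_iff_algebraMap_injective _ _).2 (RingHom.kerLift_injective (φ : A →+* Ω))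
  have : Module.IsTorsionFree (A ⧸ P) Ω := inferInstance
  have : Module.IsTorsionFree (A ⧸ P) (B ⧸ Q) := by
    have : FaithfulSMul (A ⧸ P) (B ⧸ Q) := Ideal.Quotient.instFaithfulSMul Q P
    exact Module.isTorsionFree_iff_faithfulSMul.2 this
  let ψ : B ⧸ Q →ₐ[A ⧸ P] Ω := IsAlgClosed.lift
  have hψ : ∀ a, ψ (Ideal.Quotient.mk Q (algebraMap A B a)) = φ a := fun a =>
    ψ.commutes (Ideal.Quotient.mk P a)
  refine ⟨⟨(ψ : B ⧸ Q →+* Ω).comp (Ideal.Quotient.mk Q), fun k => ?_⟩, hψ⟩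
  rw [IsScalarTower.algebraMap_apply K A B]
  exact (hψ _).trans (φ.commutes k)

/-- A common exponent for the purely inseparable part of a finite normal extension. -/
lemma exists_exponent {E N : Type*} [Field E] [Field N] [Algebra E N] [Normal E N]
    [FiniteDimensional E N] (p : ℕ) [ExpChar E p] :
    ∃ e, ∀ c : N, (∀ σ : N ≃ₐ[E] N, σ c = c) → c ^ p ^ e ∈ (algebraMap E N).range := by
  let M : IntermediateField E N := IntermediateField.fixedField ⊤
  have hM : IsPurelyInseparable E M := by
    rw [isPurelyInseparable_iff_pow_mem E p]
    intro x
    obtain ⟨n, y, hy⟩ := pow_mem_of_fixed (K := E) p (x : N) fun σ => x.2 ⟨σ, trivial⟩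
    exact ⟨n, y, Subtype.ext hy⟩
  refine ⟨IsPurelyInseparable.exponent E M, fun c hc => ?_⟩
  obtain ⟨y, hy⟩ := IsPurelyInseparable.exponent_def' E p (⟨c, fun σ => hc σ⟩ : M)
  exact ⟨y, congrArg Subtype.val hy⟩

section

variable {K L E N : Type*} [Field K] [Field L] [Algebra K L] [IsAlgClosed L] {d : ℕ}
  [Field E] [Algebra (MvPolynomial (Fin d) K) E] [IsFractionRing (MvPolynomial (Fin d) K) E]
  [Field N] [Algebra E N] [Algebra (MvPolynomial (Fin d) K) N]
  [IsScalarTower (MvPolynomial (Fin d) K) E N] [Normal E N] [FiniteDimensional E N]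
  [Algebra K N] [IsScalarTower K (MvPolynomial (Fin d) K) N]

variable (K L E N d) in
/-- The integral closure of a polynomial ring in a finite normal extension `N` of its field of
fractions is a covering of affine space with the automorphism group of `N`. -/
lemma exists_galois (p : ℕ) [ExpChar E p] :
    ∃ D : Galois K L (integralClosure (MvPolynomial (Fin d) K) N) (N ≃ₐ[E] N) p d,
      D.t = fun j => algebraMap (MvPolynomial (Fin d) K) _ (MvPolynomial.X j) := by
  set A := MvPolynomial (Fin d) K with hA
  let S := integralClosure A N
  obtain ⟨e, he⟩ := exists_exponent (E := E) (N := N) p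
  have hinjN : Function.Injective (algebraMap A N) := by
    rw [IsScalarTower.algebraMap_eq A E N]
    exact (algebraMap E N).injective.comp (IsFractionRing.injective A E)
  have hinj : Function.Injective (algebraMap A S) := by
    intro a b h
    exact hinjN (congrArg (algebraMap S N) h)
  refine ⟨{
    α := {
      toFun := fun g => ((galRestrict A E N S g : S ≃ₐ[A] S) : S →ₐ[A] S).restrictScalars K
      map_one' := by rw [map_one]; rfl
      map_mul' := fun g h => by rw [map_mul]; rfl }
    faithful := ?_
    t := fun j => algebraMap A S (MvPolynomial.X j)
    α_t := fun g j => (galRestrict A E N S g).commutes _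
    e := e
    inv := ?_
    surj := ?_ }, rfl⟩
  · intro g h hgh
    apply (galRestrict A E N S).injective
    ext1 b
    exact DFunLike.congr_fun hgh b
  · intro b hb
    obtain ⟨y, hy⟩ := he (algebraMap S N b) fun σ => by
      rw [← algebraMap_galRestrict_apply A σ b]
      exact congrArg _ (hb σ)
    have hInt : IsIntegral A y := by
      rw [← isIntegral_algebraMap_iff (algebraMap E N).injective, hy]
      exact (b ^ p ^ e).2
    obtain ⟨P, hP⟩ := IsIntegrallyClosed.isIntegral_iff.1 hInt
    refine ⟨P, ?_⟩
    have h2 : b ^ p ^ e = algebraMap A S P := by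
      apply Subtype.ext
      change (algebraMap S N b) ^ p ^ e = algebraMap A N P
      rw [← hy, ← hP, ← IsScalarTower.algebraMap_apply]
    rw [h2]
    exact DFunLike.congr_fun (MvPolynomial.aeval_unique (IsScalarTower.toAlgHom K A S)) P
  · intro τ
    obtain ⟨ψ, hψ⟩ := exists_extend (B := S) hinj (MvPolynomial.aeval (R := K) τ)
    exact ⟨ψ, fun j => by rw [hψ, MvPolynomial.aeval_X]⟩

end

/-! ### Connectedness -/

section

variable {K L E N : Type*} [Field K] [Field L] [Algebra K L] [IsAlgClosed L] {d : ℕ}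
  [Field E] [Algebra (MvPolynomial (Fin d) K) E] [IsFractionRing (MvPolynomial (Fin d) K) E]
  [Field N] [Algebra E N] [Algebra (MvPolynomial (Fin d) K) N]
  [IsScalarTower (MvPolynomial (Fin d) K) E N] [Normal E N] [FiniteDimensional E N]
  [Algebra K N] [IsScalarTower K (MvPolynomial (Fin d) K) N]

variable (E N) in
include E in
/-- The theorem for a domain `R` that is integral over a polynomial ring and embedded in a finite
normal extension `N` of the field of rational functions. -/
lemma isConnected_of_normal (vK : Valuation K ℝ≥0) (v : Valuation L ℝ≥0)
    [HenselianLocalRing vK.valuationSubring] (hext : ∀ x : K, v (algebraMap K L x) = vK x)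
    (hsurj : ∀ r : ℝ≥0, r ≠ 0 → ∃ y : L, v y = r)
    {R : Type*} [CommRing R] [Algebra K R] [Algebra (MvPolynomial (Fin d) K) R]
    [IsScalarTower K (MvPolynomial (Fin d) K) R] [Algebra.IsIntegral (MvPolynomial (Fin d) K) R]
    [Algebra R N] [IsScalarTower (MvPolynomial (Fin d) K) R N]
    (hRN : Function.Injective (algebraMap R N)) {n : ℕ} (f : Fin n → Rˣ) :
    IsConnected {y : Fin n → ℝ | ∃ φ : R →ₐ[K] L, ∀ i, y i = ((v (φ (f i)) : ℝ≥0) : ℝ)} := by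
  classical
  set A := MvPolynomial (Fin d) K with hA
  let S := integralClosure A N
  let p := ringExpChar K
  have hinjN : Function.Injective (algebraMap A N) := by
    rw [IsScalarTower.algebraMap_eq A E N]
    exact (algebraMap E N).injective.comp (IsFractionRing.injective A E)
  have hinjKS : Function.Injective (algebraMap K S) := (algebraMap K S).injective
  have hinjKE : Function.Injective ((algebraMap A E).comp (algebraMap K A)) :=
    RingHom.injective _
  have : ExpChar E p := expChar_of_injective_ringHom hinjKE p
  have : ExpChar S p := expChar_of_injective_ringHom hinjKS p
  have : ExpChar L p := expChar_of_injective_ringHom (algebraMap K L).injective p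
  let F := algebraicClosure K L
  have : ExpChar F p := expChar_of_injective_ringHom (algebraMap K F).injective p
  have : IsAlgClosed F := IsAlgClosure.isAlgClosed K
  have hσ : ∀ (σ : F ≃ₐ[K] F) (z : F), v (algebraMap F L (σ z)) = v (algebraMap F L z) := by
    intro σ z
    refine conj_valuation (vK := vK) (w := v.comap (algebraMap F L)) (fun x => ?_) σ z
    rw [← hext]; rfl
  have hinj : Function.Injective (algebraMap A S) := fun a b h =>
    hinjN (congrArg (algebraMap S N) h)
  obtain ⟨D, hD⟩ := exists_galois K L E N d p
  have hF : ∀ τ : Fin d → F, ∃ x : S →ₐ[K] F, ∀ j, x (D.t j) = τ j := by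
    intro τ
    obtain ⟨ψ, hψ⟩ := exists_extend (B := S) hinj (MvPolynomial.aeval (R := K) τ)
    refine ⟨ψ, fun j => ?_⟩
    rw [hD]
    exact (hψ _).trans (MvPolynomial.aeval_X _ _)
  let ρ : R →ₐ[A] S := (IsScalarTower.toAlgHom A R N).codRestrict S fun r =>
    (Algebra.IsIntegral.isIntegral (R := A) r).map (IsScalarTower.toAlgHom A R N)
  let : Algebra R S := (ρ : R →+* S).toAlgebra
  have hRS : Function.Injective (algebraMap R S) := fun a b h =>
    hRN (congrArg (algebraMap S N) h)
  have : IsScalarTower A R S := IsScalarTower.of_algebraMap_eq fun a => (ρ.commutes a).symm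
  have : IsScalarTower K R S := IsScalarTower.of_algebraMap_eq fun k =>
    ((ρ.restrictScalars K).commutes k).symm
  have : Algebra.IsIntegral R S := Algebra.IsIntegral.tower_top A
  have hlift : ∀ φ : R →ₐ[K] L, ∃ ψ : S →ₐ[K] L, ∀ r, ψ (algebraMap R S r) = φ r := fun φ =>
    exists_extend hRS φ
  let f' : Fin n → S := fun i => algebraMap R S (f i)
  have hf' : ∀ (x : S →ₐ[K] L) i, x (f' i) ≠ 0 := fun x i =>
    (((f i).isUnit.map (algebraMap R S)).map x).ne_zero
  refine ⟨?_, ?_⟩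
  · obtain ⟨x, -⟩ := D.surj 0
    exact ⟨_, x.comp (IsScalarTower.toAlgHom K R S), fun i => rfl⟩
  · rw [isPreconnected_iff_subset_of_disjoint]
    intro U V hU hV hUV hdisj
    let c : (Fin n → ℝ≥0) → Fin n → ℝ := fun y i => y i
    have hc : Continuous c := by fun_prop
    have hmem : ∀ x : S →ₐ[K] L, c (Galois.trop v f' x) ∈
        {y : Fin n → ℝ | ∃ φ : R →ₐ[K] L, ∀ i, y i = ((v (φ (f i)) : ℝ≥0) : ℝ)} := fun x =>
      ⟨x.comp (IsScalarTower.toAlgHom K R S), fun i => rfl⟩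
    have hsub : ∀ W : Set (Fin n → ℝ), (∀ x : S →ₐ[K] L, Galois.trop v f' x ∈ c ⁻¹' W) →
        {y : Fin n → ℝ | ∃ φ : R →ₐ[K] L, ∀ i, y i = ((v (φ (f i)) : ℝ≥0) : ℝ)} ⊆ W := by
      rintro W hW y ⟨φ, hφ⟩
      obtain ⟨ψ, hψ⟩ := hlift φ
      have : y = c (Galois.trop v f' ψ) := by
        funext i
        rw [hφ i, ← hψ]; rfl
      rw [this]
      exact hW ψ
    refine (D.all_or_none hsurj hF hσ f' hf' (hU.preimage hc) (hV.preimage hc)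
      (fun x hx => (hUV (hmem x)).resolve_left hx) (fun x hx hx' => ?_)).imp (hsub U) (hsub V)
    exact (hdisj.subset ⟨hmem x, hx, hx'⟩ : c (Galois.trop v f' x) ∈ (∅ : Set (Fin n → ℝ)))

end

/-- The theorem for a domain `R` that is finite over a polynomial ring, with field of fractions
`Q`. -/
lemma isConnected_of_finite {K L E Q R : Type*} [Field K] [Field L] [Algebra K L] [IsAlgClosed L]
    {d : ℕ} [CommRing R] [Field E] [Field Q]
    [Algebra K R] [Algebra (MvPolynomial (Fin d) K) R]
    [IsScalarTower K (MvPolynomial (Fin d) K) R] [Module.Finite (MvPolynomial (Fin d) K) R]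
    [Algebra R Q] [IsFractionRing R Q]
    [Algebra (MvPolynomial (Fin d) K) E] [IsFractionRing (MvPolynomial (Fin d) K) E]
    [Algebra E Q] [Algebra (MvPolynomial (Fin d) K) Q]
    [IsScalarTower (MvPolynomial (Fin d) K) R Q] [IsScalarTower (MvPolynomial (Fin d) K) E Q]
    [FiniteDimensional E Q]
    (vK : Valuation K ℝ≥0) (v : Valuation L ℝ≥0)
    [HenselianLocalRing vK.valuationSubring] (hext : ∀ x : K, v (algebraMap K L x) = vK x)
    (hsurj : ∀ r : ℝ≥0, r ≠ 0 → ∃ y : L, v y = r) {n : ℕ} (f : Fin n → Rˣ) :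
    IsConnected {y : Fin n → ℝ | ∃ φ : R →ₐ[K] L, ∀ i, y i = ((v (φ (f i)) : ℝ≥0) : ℝ)} := by
  let A := MvPolynomial (Fin d) K
  let Ω := AlgebraicClosure Q
  let N := IntermediateField.normalClosure E Q Ω
  have : Normal E N := normalClosure.normal E Q Ω
  have : FiniteDimensional E N := normalClosure.is_finiteDimensional E Q Ω
  let : Algebra A N := ((algebraMap E N).comp (algebraMap A E)).toAlgebra
  let : Algebra R N := ((algebraMap Q N).comp (algebraMap R Q)).toAlgebra
  let : Algebra K N := ((algebraMap A N).comp (algebraMap K A)).toAlgebra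
  have : IsScalarTower A E N := IsScalarTower.of_algebraMap_eq fun _ => rfl
  have : IsScalarTower K A N := IsScalarTower.of_algebraMap_eq fun _ => rfl
  have : IsScalarTower A R N := IsScalarTower.of_algebraMap_eq fun a => by
    change algebraMap E N (algebraMap A E a) = algebraMap Q N (algebraMap R Q (algebraMap A R a))
    rw [← IsScalarTower.algebraMap_apply A R Q, IsScalarTower.algebraMap_apply A E Q,
      ← IsScalarTower.algebraMap_apply E Q N]
  exact isConnected_of_normal E N (d := d) vK v hext hsurj (R := R)
    ((algebraMap Q N).injective.comp (IsFractionRing.injective R Q)) f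

/-- The theorem for a finitely generated domain, by Noether normalization. -/
lemma isConnected_of_fg {K L R : Type*} [Field K] [Field L] [Algebra K L] [IsAlgClosed L]
    [CommRing R] [IsDomain R] [Algebra K R] [Algebra.FiniteType K R]
    (vK : Valuation K ℝ≥0) (v : Valuation L ℝ≥0)
    [HenselianLocalRing vK.valuationSubring] (hext : ∀ x : K, v (algebraMap K L x) = vK x)
    (hsurj : ∀ r : ℝ≥0, r ≠ 0 → ∃ y : L, v y = r) {n : ℕ} (f : Fin n → Rˣ) :
    IsConnected {y : Fin n → ℝ | ∃ φ : R →ₐ[K] L, ∀ i, y i = ((v (φ (f i)) : ℝ≥0) : ℝ)} := by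
  obtain ⟨d, g, hg, hfin⟩ := exists_finite_inj_algHom_of_fg K R
  let A := MvPolynomial (Fin d) K
  let : Algebra A R := g.toRingHom.toAlgebra
  have : Module.Finite A R := hfin
  have : IsScalarTower K A R := IsScalarTower.of_algebraMap_eq fun k => (g.commutes k).symm
  have hinj : Function.Injective (algebraMap A R) := hg
  have : FaithfulSMul A R := (faithfulSMul_iff_algebraMap_injective _ _).2 hinj
  let E := FractionRing A
  let Q := FractionRing R
  have : FaithfulSMul A Q := (faithfulSMul_iff_algebraMap_injective _ _).2 (by
    rw [IsScalarTower.algebraMap_eq A R Q]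
    exact (IsFractionRing.injective R Q).comp hinj)
  let : Algebra E Q := FractionRing.liftAlgebra A Q
  have : IsScalarTower A E Q := FractionRing.isScalarTower_liftAlgebra A Q
  have : FiniteDimensional E Q := by
    have : IsLocalization (Algebra.algebraMapSubmonoid R (nonZeroDivisors A)) Q :=
      inferInstance
    exact Module.Finite.of_isLocalization A R (nonZeroDivisors A)
  exact isConnected_of_finite (d := d) (E := E) (Q := Q) vK v hext hsurj f

end TropConn

/-- Let `(K, vK)` be a real-valued field whose valuation ring is henselian, and `L` an
algebraically closed extension with a valuation `v` extending `vK` whose value group is all of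
`ℝ>0`.  Let `R = K[Y₁,…,Y_m]/I` with `I` prime and `f₁,…,fₙ` units of `R`.  Then the
tropicalization `{(v (φ f₁), …, v (φ fₙ)) : φ ∈ Hom_{K-alg}(R, L)}` is a connected subset
of `(ℝ>0)ⁿ ⊆ ℝⁿ`. -/
theorem tropicalization_isConnected_of_henselian
    {K L : Type*} [Field K] [Field L] [IsAlgClosed L] [Algebra K L]
    (vK : Valuation K NNReal) (v : Valuation L NNReal)
    (hhens : HenselianLocalRing ↥vK.valuationSubring)
    (hext : ∀ x : K, v (algebraMap K L x) = vK x)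
    (hsurj : ∀ r : NNReal, r ≠ 0 → ∃ y : L, v y = r)
    (m n : ℕ) (I : Ideal (MvPolynomial (Fin m) K)) [I.IsPrime]
    (f : Fin n → (MvPolynomial (Fin m) K ⧸ I)ˣ) :
    IsConnected {y : Fin n → ℝ |
      ∃ φ : (MvPolynomial (Fin m) K ⧸ I) →ₐ[K] L,
        ∀ i, y i = ((v (φ (f i)) : NNReal) : ℝ)} := by
  exact TropConn.isConnected_of_fg vK v hext hsurj f
end

section
/- Let K ⊆ L be a field extension, let n, m ≥ 1, and let (f_{i,j})_{1≤i≤n, 1≤j≤m} and (T_{i,j})_{1≤i≤n, 1≤j≤m} be families of elements of L. Assume: (a) there exists an index j₀ such that the family (f_{1,j₀},…,f_{n,j₀}) is algebraically independent over K; (b) the family (T_{i,j})_{i,j} is algebraically independent over the subfield of L generated by K and all the f_{i,j}. For each i, set g_i = Σ_{j=1}^m f_{i,j}·T_{i,j}. Then the family of nm + n elements of L obtained by concatenating (T_{i,j})_{i,j} and (g₁,…,gₙ) is algebraically independent over K. -/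
/-!
Since the `T i j` are algebraically independent over the field `F` generated by `K` and the
`f i j`, the subring `F[T]` of `L` is a polynomial ring, and the question takes place there.
Degenerate `g i = ∑ j, f i j * T i j` to its part `f i j₀ * T i j₀`: rescale every `T i j` with
`j ≠ j₀` by a new variable `s`. The lowest-order terms in `s` of the rescaled family are the
`T i j` and the `f i j₀ * T i j₀`, and a family is algebraically independent as soon as its
lowest-order terms are (`algebraicIndependent_of_initial`). The family of the lowest-order terms
is obtained from the algebraically independent family of the `T i j` and the `f i j₀` by a monomial
substitution which is invertible over the fraction field
(`algebraicIndependent_monomial_twist`).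
-/

open MvPolynomial in
/-- If the lowest-order coefficients (in `B`) of the elements `X ^ w i * u i` of `B[X]` are
algebraically independent, then so are these elements: in a polynomial relation `P`, the terms of
minimal `w`-weight give a relation between the lowest-order coefficients. -/
theorem algebraicIndependent_of_initial {K B ι : Type*} [CommRing K] [CommRing B] [Algebra K B]
    (w : ι → ℕ) (u : ι → Polynomial B)
    (h : AlgebraicIndependent K fun i => (u i).coeff 0) :
    AlgebraicIndependent K fun i => (Polynomial.X : Polynomial B) ^ w i * u i := by
  classical
  rw [algebraicIndependent_iff] at h ⊢
  intro P hP
  by_contra hne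
  obtain ⟨d₀, hd₀, hmin⟩ := P.support.exists_min_image (fun d => Finsupp.weight w d)
    (support_nonempty.mpr hne)
  set k := Finsupp.weight w d₀ with hk
  have key : aeval (fun i => (u i).coeff 0) (weightedHomogeneousComponent w k P) =
      (aeval (fun i => (Polynomial.X : Polynomial B) ^ w i * u i) P).coeff k := by
    rw [weightedHomogeneousComponent_apply, map_sum, Finset.sum_filter, aeval_def, eval₂_eq,
      Polynomial.finsetSum_coeff]
    refine Finset.sum_congr rfl fun d hd => ?_
    have hprod : ∏ i ∈ d.support, ((Polynomial.X : Polynomial B) ^ w i * u i) ^ d i =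
        (∏ i ∈ d.support, u i ^ d i) * Polynomial.X ^ Finsupp.weight w d := by
      simp_rw [mul_pow, Finset.prod_mul_distrib, ← pow_mul]
      rw [Finset.prod_pow_eq_pow_sum, Finsupp.weight_apply, Finsupp.sum, mul_comm]
      simp [mul_comm]
    rw [hprod, ← mul_assoc, Polynomial.coeff_mul_X_pow']
    have hkd := hmin d hd
    by_cases hw : Finsupp.weight w d = k
    · rw [if_pos hw, if_pos hw.le, hw, Nat.sub_self, Polynomial.mul_coeff_zero, aeval_monomial,
        Polynomial.algebraMap_apply, Polynomial.coeff_C_zero, Finsupp.prod,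
        Polynomial.coeff_zero_prod]
      simp [Polynomial.coeff_zero_eq_eval_zero]
    · rw [if_neg hw, if_neg fun hle => hw (hle.antisymm hkd)]
  rw [hP, Polynomial.coeff_zero] at key
  have h0 := congrArg (coeff d₀) (h _ key)
  rw [coeff_weightedHomogeneousComponent, if_pos hk.symm, coeff_zero] at h0
  exact (mem_support_iff.mp hd₀) h0

open MvPolynomial in
/-- Multiplying some members of an algebraically independent family by other members keeps the
family algebraically independent, because the substitution can be undone in the fraction field of
the polynomial ring. -/
theorem algebraicIndependent_monomial_twist {K B ι κ : Type*} [Field K] [CommRing B] [Algebra K B]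
    (x : ι → B) (y : κ → B) (p : κ → ι) (h : AlgebraicIndependent K (Sum.elim x y)) :
    AlgebraicIndependent K (Sum.elim x fun i => y i * x (p i)) := by
  let Q := FractionRing (MvPolynomial (ι ⊕ κ) K)
  let φ : ι ⊕ κ → MvPolynomial (ι ⊕ κ) K :=
    Sum.elim (fun a => X (Sum.inl a)) fun i => X (Sum.inr i) * X (Sum.inl (p i))
  have hφ : AlgebraicIndependent K φ := by
    let ψ : MvPolynomial (ι ⊕ κ) K →ₐ[K] Q := aeval (Sum.elim
      (fun a => algebraMap (MvPolynomial (ι ⊕ κ) K) Q (X (Sum.inl a)))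
      fun i => algebraMap (MvPolynomial (ι ⊕ κ) K) Q (X (Sum.inr i)) /
        algebraMap (MvPolynomial (ι ⊕ κ) K) Q (X (Sum.inl (p i))))
    refine AlgebraicIndependent.of_comp ψ ?_
    have hinj : Function.Injective (IsScalarTower.toAlgHom K (MvPolynomial (ι ⊕ κ) K) Q) :=
      IsFractionRing.injective (MvPolynomial (ι ⊕ κ) K) Q
    convert (algebraicIndependent_X (ι ⊕ κ) K).map' hinj using 1
    funext a
    rcases a with a | i
    · simp [ψ, φ]
    · have hne : algebraMap (MvPolynomial (ι ⊕ κ) K) Q (X (Sum.inl (p i))) ≠ 0 := by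
        rw [Ne, FaithfulSMul.algebraMap_eq_zero_iff]
        exact X_ne_zero _
      simp [ψ, φ, div_mul_cancel₀ _ hne]
  convert h.aeval_of_algebraicIndependent hφ using 1
  funext a
  rcases a with a | i <;> simp [φ]

/-- Let `K ⊆ L` be fields and `(f i j)`, `(T i j)` (for `i : Fin n`, `j : Fin m`) families of
elements of `L` such that (a) for some `j₀` the family `(f i j₀)_i` is algebraically independent
over `K`, and (b) the family `(T i j)` is algebraically independent over the subfield of `L`
generated by `K` and all the `f i j`.  Set `g i = Σ_j f i j * T i j`.  Then the concatenated
family of all the `T i j` and all the `g i` is algebraically independent over `K`. -/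
theorem algebraicIndependent_append_of_sections
    {K L : Type*} [Field K] [Field L] [Algebra K L]
    (n m : ℕ) (hn : 1 ≤ n) (hm : 1 ≤ m)
    (f T : Fin n → Fin m → L)
    (ha : ∃ j₀ : Fin m, AlgebraicIndependent K fun i => f i j₀)
    (hb : AlgebraicIndependent
      (↥(IntermediateField.adjoin K (Set.range fun p : Fin n × Fin m => f p.1 p.2)))
      fun p : Fin n × Fin m => T p.1 p.2)
    (g : Fin n → L) (hg : ∀ i, g i = ∑ j, f i j * T i j) :
    AlgebraicIndependent K (Sum.elim (fun p : Fin n × Fin m => T p.1 p.2) g) := by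
  obtain ⟨j₀, hj₀⟩ := ha
  set F := IntermediateField.adjoin K (Set.range fun p : Fin n × Fin m => f p.1 p.2) with hF
  let f' : Fin n → Fin m → F := fun i j =>
    ⟨f i j, IntermediateField.subset_adjoin K _ ⟨(i, j), rfl⟩⟩
  have hf' : AlgebraicIndependent K fun i => f' i j₀ := AlgebraicIndependent.of_comp F.val hj₀
  let G : Fin n → MvPolynomial (Fin n × Fin m) F := fun i =>
    ∑ j, MvPolynomial.C (f' i j) * MvPolynomial.X (i, j)
  -- Evaluation at `T` embeds the polynomial ring over `F` into `L`, and sends `G` to `g`.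
  suffices H : AlgebraicIndependent K
      (Sum.elim (MvPolynomial.X : Fin n × Fin m → MvPolynomial (Fin n × Fin m) F) G) by
    let e : MvPolynomial (Fin n × Fin m) F →ₐ[K] L :=
      (MvPolynomial.aeval fun p : Fin n × Fin m => T p.1 p.2).restrictScalars K
    have he : Function.Injective e := hb
    convert H.map' he using 1
    funext a
    rcases a with p | i
    · simp [e]
    · simp [e, G, hg, f', IntermediateField.algebraMap_apply]
  -- The degeneration `σ` multiplies the variables `(i, j)` with `j ≠ j₀` by the new variable.
  let w : Fin n × Fin m → ℕ := fun p => if p.2 = j₀ then 0 else 1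
  let σ : MvPolynomial (Fin n × Fin m) F →ₐ[K] Polynomial (MvPolynomial (Fin n × Fin m) F) :=
    (MvPolynomial.aeval (R := F) fun p : Fin n × Fin m =>
      (Polynomial.X : Polynomial (MvPolynomial (Fin n × Fin m) F)) ^ w p *
        Polynomial.C (MvPolynomial.X p)).restrictScalars K
  refine AlgebraicIndependent.of_comp (A' := Polynomial (MvPolynomial (Fin n × Fin m) F)) σ ?_
  have hx : AlgebraicIndependent K
      (Sum.elim (MvPolynomial.X : Fin n × Fin m → MvPolynomial (Fin n × Fin m) F)
      fun i => MvPolynomial.C (f' i j₀)) :=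
    hf'.sumElim_comp (MvPolynomial.algebraicIndependent_X (Fin n × Fin m) F)
  have htwist := algebraicIndependent_monomial_twist _ _ (fun i => (i, j₀)) hx
  let u : (Fin n × Fin m) ⊕ Fin n → Polynomial (MvPolynomial (Fin n × Fin m) F) :=
    Sum.elim (fun p => Polynomial.C (MvPolynomial.X p)) fun i => σ (G i)
  have hσG : ∀ i, σ (G i) = ∑ j, Polynomial.C (MvPolynomial.C (f' i j)) *
      (Polynomial.X ^ w (i, j) * Polynomial.C (MvPolynomial.X (i, j))) := by
    intro i
    simp [σ, G, MvPolynomial.algebraMap_eq, Polynomial.algebraMap_apply]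
  have hu : (fun a => (u a).coeff 0) =
      Sum.elim (MvPolynomial.X : Fin n × Fin m → MvPolynomial (Fin n × Fin m) F)
      fun i => MvPolynomial.C (f' i j₀) * MvPolynomial.X (i, j₀) := by
    funext a
    rcases a with p | i
    · simp [u]
    · simp only [u, Sum.elim_inr, hσG, Polynomial.finsetSum_coeff]
      rw [Finset.sum_eq_single j₀]
      · simp [w]
      · intro j _ hj
        simp [w, hj]
      · simp
  have := algebraicIndependent_of_initial (Sum.elim w fun _ => 0) u (hu ▸ htwist)
  convert this using 1
  funext a
  rcases a with p | i
  · simp [σ, u]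
  · simp [u]
end
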